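/- Let 0 < θ_1 < θ_2 < π and let f : ℝ → ℝ be the even, 2π-periodic function equal to +1 on [0, θ_1), −1 on (θ_1, θ_2), and +1 on (θ_2, π], with Fourier coefficients f_n = (1/2π)∫_0^{2π} f(θ)e^{−inθ}dθ. Then as N → ∞, det (f_{j−k−1})_{j,k=0}^{N−1} = (−1)^N · N^{−1} · 2^{1/3} e^{12ζ′(−1)} · ( √(sin θ_2 / sin θ_1) · 2cos(N θ_1) + √(sin θ_1 / sin θ_2) · 2cos(N θ_2) ) + o(N^{−1}). (This is the correlator ⟨σ^x_0 σ^x_N⟩ for a translation-invariant chain whose dispersion has exactly two Fermi points θ_1, θ_2 in (0,π).) -/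

import Mathlib

/-!
The correlator `⟨σ^x_0 σ^x_N⟩` for a translation-invariant chain whose dispersion has
exactly two Fermi points `θ_1, θ_2` in `(0,π)`:
`det(f_{j−k−1}) = (−1)^N N^{−1} 2^{1/3} e^{12ζ′(−1)}
  (√(sinθ_2/sinθ_1)·2cos(Nθ_1) + √(sinθ_1/sinθ_2)·2cos(Nθ_2)) + o(N^{−1})`.
-/

noncomputable section

/-- The `n`-th Fourier coefficient `f_n = (1/2π) ∫_0^{2π} f(θ) e^{−inθ} dθ`. -/
def fourierCoef (f : ℝ → ℝ) (n : ℤ) : ℂ :=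
  (1 / (2 * Real.pi) : ℂ) *
    ∫ t in (0 : ℝ)..(2 * Real.pi), (f t : ℂ) * Complex.exp (-Complex.I * (n : ℂ) * (t : ℂ))

noncomputable section
namespace Fermi
open Matrix

/-- Toeplitz matrix of size `N+1`. -/
def toep (a : ℤ → ℂ) (N : ℕ) : Matrix (Fin N) (Fin N) ℂ :=
  Matrix.of fun j k => a ((j : ℤ) - (k : ℤ))

/-- bilinear pairing through the inverse matrix. -/
def bil {m : ℕ} (A : Matrix (Fin m) (Fin m) ℂ) (p q : Fin m → ℂ) : ℂ := p ⬝ᵥ (A⁻¹ *ᵥ q)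

def vv (m : ℕ) (z : ℂ) : Fin m → ℂ := fun j => (z⁻¹) ^ (j : ℕ)
def ww (m : ℕ) (z : ℂ) : Fin m → ℂ := fun j => z ^ (j : ℕ)
def ee {m : ℕ} (i : Fin m) : Fin m → ℂ := Pi.single i 1
def nn {m : ℕ} (p : Fin m → ℂ) : Fin m → ℂ := fun j => (j : ℂ) * p j

variable {m : ℕ}

lemma bil_add_left (A : Matrix (Fin m) (Fin m) ℂ) (p p' q) :
    bil A (p + p') q = bil A p q + bil A p' q := by simp [bil, add_dotProduct]
lemma bil_sub_left (A : Matrix (Fin m) (Fin m) ℂ) (p p' q) :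
    bil A (p - p') q = bil A p q - bil A p' q := by simp [bil, sub_dotProduct]
lemma bil_smul_left (A : Matrix (Fin m) (Fin m) ℂ) (c : ℂ) (p q) :
    bil A (c • p) q = c * bil A p q := by simp [bil]
lemma bil_sub_right (A : Matrix (Fin m) (Fin m) ℂ) (p q q') :
    bil A p (q - q') = bil A p q - bil A p q' := by simp [bil, mulVec_sub, dotProduct_sub]
lemma bil_smul_right (A : Matrix (Fin m) (Fin m) ℂ) (c : ℂ) (p q) :
    bil A p (c • q) = c * bil A p q := by simp [bil, mulVec_smul]
lemma bil_zero_left (A : Matrix (Fin m) (Fin m) ℂ) (q) : bil A 0 q = 0 := by simp [bil]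
lemma bil_zero_right (A : Matrix (Fin m) (Fin m) ℂ) (q) : bil A q 0 = 0 := by simp [bil]

lemma bil_ee (A : Matrix (Fin m) (Fin m) ℂ) (i j) : bil A (ee i) (ee j) = A⁻¹ i j := by
  simp [bil, ee]

/-- `p ᵥ* X` -/
lemma key_comm (A X : Matrix (Fin m) (Fin m) ℂ) (hA : A.det ≠ 0) (p q : Fin m → ℂ) :
    bil A (p ᵥ* X) q - bil A p (X *ᵥ q) = p ⬝ᵥ ((A⁻¹ * (A * X - X * A) * A⁻¹) *ᵥ q) := by
  have hu : IsUnit A.det := isUnit_iff_ne_zero.mpr hA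
  have e : A⁻¹ * (A * X - X * A) * A⁻¹ = X * A⁻¹ - A⁻¹ * X := by
    rw [mul_sub, sub_mul, ← mul_assoc, ← mul_assoc, nonsing_inv_mul A hu, one_mul, mul_assoc,
      mul_assoc, mul_nonsing_inv A hu, mul_one]
  rw [e, sub_mulVec, dotProduct_sub, bil, bil, ← mulVec_mulVec, ← mulVec_mulVec,
    dotProduct_mulVec p X]

lemma bil_vecMulVec (A : Matrix (Fin m) (Fin m) ℂ) (x y p q : Fin m → ℂ) :
    p ⬝ᵥ ((A⁻¹ * vecMulVec x y * A⁻¹) *ᵥ q) = bil A p x * bil A y q := by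
  rw [← mulVec_mulVec, ← mulVec_mulVec, vecMulVec_mulVec, mulVec_smul, dotProduct_smul]
  simp [bil]

lemma bil_rev (a : ℤ → ℂ) (p q : Fin m → ℂ) :
    bil (toep a m) (p ∘ Fin.rev) (q ∘ Fin.rev) = bil (toep a m) q p := by
  have h : (toep a m).submatrix Fin.revPerm Fin.revPerm = (toep a m)ᵀ := by
    ext i j
    simp only [toep, submatrix_apply, of_apply, transpose_apply, Fin.revPerm_apply]
    congr 1
    have := i.2; have := j.2
    rw [Fin.val_rev, Fin.val_rev]; omega
  have h2 : (toep a m)⁻¹ᵀ = (toep a m)⁻¹.submatrix Fin.revPerm Fin.revPerm := by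
    rw [transpose_nonsing_inv, ← h, inv_submatrix_equiv]
  unfold bil
  have h3 : (toep a m)⁻¹ = ((toep a m)⁻¹.submatrix Fin.revPerm Fin.revPerm)ᵀ := by
    rw [← h2, transpose_transpose]
  rw [dotProduct_mulVec q, dotProduct_comm _ p]
  have h4 : q ᵥ* (toep a m)⁻¹ = ((toep a m)⁻¹.submatrix Fin.revPerm Fin.revPerm) *ᵥ q := by
    conv_lhs => rw [h3]
    rw [vecMul_transpose]
  rw [h4, submatrix_mulVec_equiv]
  simp only [dotProduct]
  rw [← Equiv.sum_comp Fin.revPerm]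
  simp [Function.comp_def, Fin.revPerm]

lemma ee_last_rev (N : ℕ) : (ee (Fin.last N)) = (ee (0 : Fin (N+1))) ∘ Fin.rev := by
  ext j
  simp only [ee, Function.comp, Pi.single_apply]
  congr 1
  rw [eq_iff_iff, ← Fin.rev_zero, Fin.rev_eq_iff.symm.eq]

lemma vv_rev (N : ℕ) (z : ℂ) (hz : z ≠ 0) :
    vv (N+1) z = (z ^ N)⁻¹ • (ww (N+1) z ∘ Fin.rev) := by
  ext j
  simp only [vv, ww, Function.comp, Pi.smul_apply, smul_eq_mul, Fin.val_rev]
  have : z ^ N = z ^ (N + 1 - ((j:ℕ)+1)) * z ^ (j:ℕ) := by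
    rw [← pow_add]; congr 1; have := j.2; omega
  rw [this, inv_pow]
  field_simp

lemma ww_rev (N : ℕ) (z : ℂ) (hz : z ≠ 0) :
    ww (N+1) z = (z ^ N) • (vv (N+1) z ∘ Fin.rev) := by
  rw [vv_rev N z hz]
  ext j
  simp [hz]

lemma bil_last_vv (a : ℤ → ℂ) (N : ℕ) (z : ℂ) (hz : z ≠ 0) :
    bil (toep a (N+1)) (ee (Fin.last N)) (vv (N+1) z)
      = (z ^ N)⁻¹ * bil (toep a (N+1)) (ww (N+1) z) (ee 0) := by
  rw [ee_last_rev, vv_rev N z hz, bil_smul_right, bil_rev]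

lemma bil_ww_last (a : ℤ → ℂ) (N : ℕ) (z : ℂ) (hz : z ≠ 0) :
    bil (toep a (N+1)) (ww (N+1) z) (ee (Fin.last N))
      = (z ^ N) * bil (toep a (N+1)) (ee 0) (vv (N+1) z) := by
  rw [ee_last_rev, ww_rev N z hz, bil_smul_left, bil_rev]

lemma bil_last_last (a : ℤ → ℂ) (N : ℕ) :
    bil (toep a (N+1)) (ee (Fin.last N)) (ee (Fin.last N))
      = bil (toep a (N+1)) (ee 0) (ee 0) := by
  rw [ee_last_rev, bil_rev]

/-- the shift matrix -/
def shf (m : ℕ) : Matrix (Fin m) (Fin m) ℂ := Matrix.of fun j k => if (j:ℕ) = k + 1 then 1 else 0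

lemma vecMul_shf (N : ℕ) (p : Fin (N+1) → ℂ) (k : Fin (N+1)) :
    (p ᵥ* shf (N+1)) k = if h : (k:ℕ) + 1 < N + 1 then p ⟨k+1, h⟩ else 0 := by
  simp only [vecMul, dotProduct, shf, of_apply, mul_ite, mul_one, mul_zero]
  split_ifs with h
  · rw [Finset.sum_eq_single ⟨k+1, h⟩]
    · simp
    · intro b _ hb; rw [if_neg]; intro h'; exact hb (Fin.ext h')
    · simp
  · apply Finset.sum_eq_zero; intro b _; rw [if_neg]; have := b.2; omega

lemma shf_mulVec (N : ℕ) (p : Fin (N+1) → ℂ) (j : Fin (N+1)) :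
    (shf (N+1) *ᵥ p) j = if h : 0 < (j:ℕ) then p ⟨j-1, by omega⟩ else 0 := by
  simp only [mulVec, dotProduct, shf, of_apply, ite_mul, one_mul, zero_mul]
  split_ifs with h
  · rw [Finset.sum_eq_single ⟨j-1, by omega⟩]
    · rw [if_pos]; simp; omega
    · intro b _ hb; rw [if_neg]; intro h'; apply hb; apply Fin.ext; simp; omega
    · simp
  · apply Finset.sum_eq_zero; intro b _; rw [if_neg]; omega

lemma ww_shf (N : ℕ) (z : ℂ) :
    ww (N+1) z ᵥ* shf (N+1) = z • ww (N+1) z - z ^ (N+1) • ee (Fin.last N) := by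
  ext k
  rw [vecMul_shf]
  simp only [ww, ee, Pi.sub_apply, Pi.smul_apply, smul_eq_mul, Pi.single_apply]
  split_ifs with h h2 h2
  · exfalso; rw [h2] at h; simp at h
  · ring
  · rw [h2]; simp; ring
  · exfalso; apply h2; apply Fin.ext; simp; have := k.2; omega

lemma shf_vv (N : ℕ) (z : ℂ) (hz : z ≠ 0) :
    shf (N+1) *ᵥ vv (N+1) z = z • vv (N+1) z - z • ee 0 := by
  ext j
  rw [shf_mulVec]
  simp only [vv, ee, Pi.sub_apply, Pi.smul_apply, smul_eq_mul, Pi.single_apply]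
  split_ifs with h h2 h2
  · exfalso; rw [h2] at h; simp at h
  · obtain ⟨j, hj⟩ := j
    cases j with
    | zero => simp at h
    | succ j => simp [pow_succ]; field_simp
  · rw [h2]; simp
  · exfalso; apply h2; apply Fin.ext; simp at h; simp [h]

lemma ee_shf (N : ℕ) : ee (0 : Fin (N+1)) ᵥ* shf (N+1) = 0 := by
  ext k
  rw [vecMul_shf]
  split_ifs with h
  · simp only [ee, Pi.single_apply, Fin.ext_iff]; rw [if_neg]; rfl; simp
  · rfl

lemma shf_ee (N : ℕ) : shf (N+1) *ᵥ ee (Fin.last N) = 0 := by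
  ext k
  rw [shf_mulVec]
  split_ifs with h
  · have := k.2
    simp only [ee, Pi.single_apply, Fin.ext_iff]; rw [if_neg]; rfl; simp; omega
  · rfl

lemma toep_shf (a : ℤ → ℂ) (N : ℕ) : toep a (N+1) * shf (N+1) - shf (N+1) * toep a (N+1) =
    vecMulVec (ee 0) (fun k : Fin (N+1) => a (-(k:ℤ) - 1)) -
      vecMulVec (fun j : Fin (N+1) => a ((j:ℤ) - 1 - N)) (ee (Fin.last N)) := by
  ext j k
  have h1 : (toep a (N+1) * shf (N+1)) j k = (toep a (N+1) j ᵥ* shf (N+1)) k := rfl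
  have h2 : (shf (N+1) * toep a (N+1)) j k = (shf (N+1) *ᵥ (fun l => toep a (N+1) l k)) j := rfl
  rw [Matrix.sub_apply, h1, h2, vecMul_shf, shf_mulVec, Matrix.sub_apply, vecMulVec_apply, vecMulVec_apply]
  simp only [toep, of_apply, ee, Pi.single_apply, Fin.ext_iff, Fin.val_last, Fin.val_zero]
  have := j.2; have := k.2
  split_ifs with h3 h4 h5 h6 h5 h6 <;> (try omega) <;> simp
  · rw [sub_eq_zero]; congr 1; omega
  · congr 1; omega
  · congr 1; omega
  · rw [show (j:ℕ) = 0 by omega, show (k:ℕ) = N by omega]; rw [eq_comm, sub_eq_zero]; congr 1; push_cast; ring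

/-- Christoffel–Darboux type identity. -/
lemma cd (a : ℤ → ℂ) (N : ℕ) (hA : (toep a (N+1)).det ≠ 0)
    (hb : bil (toep a (N+1)) (ee 0) (ee 0) ≠ 0) (z ζ : ℂ) (hz : z ≠ 0) (hζ : ζ ≠ 0) :
    (z - ζ) * bil (toep a (N+1)) (ww (N+1) z) (vv (N+1) ζ) * bil (toep a (N+1)) (ee 0) (ee 0) =
      ζ * ((z ^ (N+1) / ζ ^ (N+1)) * bil (toep a (N+1)) (ee 0) (vv (N+1) z)
          * bil (toep a (N+1)) (ww (N+1) ζ) (ee 0)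
        - bil (toep a (N+1)) (ww (N+1) z) (ee 0) * bil (toep a (N+1)) (ee 0) (vv (N+1) ζ)) := by
  set r : Fin (N+1) → ℂ := fun k => a (-(k:ℤ) - 1)
  set s : Fin (N+1) → ℂ := fun j => a ((j:ℤ) - 1 - N)
  have key : ∀ p q, bil (toep a (N+1)) (p ᵥ* shf (N+1)) q - bil (toep a (N+1)) p (shf (N+1) *ᵥ q)
      = bil (toep a (N+1)) p (ee 0) * bil (toep a (N+1)) r q
        - bil (toep a (N+1)) p s * bil (toep a (N+1)) (ee (Fin.last N)) q := by
    intro p q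
    rw [key_comm _ _ hA, toep_shf, mul_sub, sub_mul, sub_mulVec, dotProduct_sub, bil_vecMulVec,
      bil_vecMulVec]
  have k1 := key (ww (N+1) z) (vv (N+1) ζ)
  have k2 := key (ee 0) (vv (N+1) ζ)
  have k3 := key (ww (N+1) z) (ee (Fin.last N))
  have k4 := key (ee 0) (ee (Fin.last N))
  rw [ww_shf, shf_vv _ _ hζ, bil_sub_left, bil_sub_right, bil_smul_left, bil_smul_left,
    bil_smul_right, bil_smul_right, bil_last_vv _ _ _ hζ] at k1
  rw [ee_shf, bil_zero_left, shf_vv _ _ hζ, bil_sub_right, bil_smul_right, bil_smul_right,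
    bil_last_vv _ _ _ hζ] at k2
  rw [ww_shf, shf_ee, bil_zero_right, bil_sub_left, bil_smul_left, bil_smul_left,
    bil_ww_last _ _ _ hz, bil_last_last] at k3
  rw [ee_shf, shf_ee, bil_zero_left, bil_zero_right, bil_last_last] at k4
  generalize bil (toep a (N+1)) (ww (N+1) z) (vv (N+1) ζ) = K at *
  generalize bil (toep a (N+1)) (ee 0) (ee 0) = b at *
  generalize bil (toep a (N+1)) (ww (N+1) z) (ee 0) = Fz at *
  generalize bil (toep a (N+1)) (ww (N+1) ζ) (ee 0) = Fζ at *
  generalize bil (toep a (N+1)) (ee 0) (vv (N+1) z) = Gz at *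
  generalize bil (toep a (N+1)) (ee 0) (vv (N+1) ζ) = Gζ at *
  generalize bil (toep a (N+1)) r (vv (N+1) ζ) = rv at *
  generalize bil (toep a (N+1)) (ww (N+1) z) s = ws at *
  generalize bil (toep a (N+1)) (ee 0) s = α at *
  generalize bil (toep a (N+1)) r (ee (Fin.last N)) = β at *
  have k5 : β = α := by
    apply mul_left_cancel₀ hb; linear_combination -k4
  subst k5
  have hp : ζ ^ N ≠ 0 := pow_ne_zero _ hζ
  have e : z ^ (N+1) / ζ ^ (N+1) = z ^ (N+1) * (ζ^N)⁻¹ / ζ := by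
    rw [pow_succ ζ]; field_simp
  rw [e]
  generalize (ζ^N)⁻¹ = x at *
  field_simp
  rw [pow_succ] at *
  linear_combination b * k1 - Fz * k2 - x * Fζ * k3

/-- commutator identity -/
lemma comm_id {ι : Type*} [Fintype ι] (a : ℤ → ℂ) (z lam : ι → ℂ) (hz : ∀ k, z k ≠ 0)
    (ha : ∀ n : ℤ, ((n:ℂ) - 2) * a n = Complex.I * ∑ k, lam k * (z k)^(-n))
    (hA : (toep a m).det ≠ 0) (p q : Fin m → ℂ) :
    bil (toep a m) p (nn q) - bil (toep a m) (nn p) q = 2 * bil (toep a m) p q +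
      Complex.I * ∑ k, lam k * bil (toep a m) p (vv m (z k)) * bil (toep a m) (ww m (z k)) q := by
  have h := key_comm (toep a m) (diagonal fun j : Fin m => ((j:ℕ):ℂ)) hA p q
  have e : toep a m * (diagonal fun j : Fin m => ((j:ℕ):ℂ)) - (diagonal fun j : Fin m => ((j:ℕ):ℂ)) * toep a m
      = -((2:ℂ) • toep a m + ∑ k, (Complex.I * lam k) • vecMulVec (vv m (z k)) (ww m (z k))) := by
    ext j k
    have := ha ((j:ℤ) - k)
    simp only [Matrix.sub_apply, mul_diagonal, diagonal_mul, Matrix.neg_apply, Matrix.add_apply, Matrix.smul_apply, Matrix.sum_apply,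
      vecMulVec_apply, toep, of_apply, vv, ww, smul_eq_mul]
    push_cast at this
    rw [Finset.mul_sum] at this
    have e2 : ∀ i, Complex.I * (lam i * z i ^ (-((j:ℤ) - k))) =
        Complex.I * lam i * ((z i)⁻¹ ^ (j:ℕ) * z i ^ (k:ℕ)) := by
      intro i
      rw [neg_sub, zpow_sub₀ (hz i), zpow_natCast, zpow_natCast, inv_pow]
      field_simp
    simp_rw [e2] at this
    rw [← this]; ring
  have e3 : p ᵥ* (diagonal fun j : Fin m => ((j:ℕ):ℂ)) = nn p := by
    ext j; simp [nn, vecMul_diagonal, mul_comm]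
  have e4 : (diagonal fun j : Fin m => ((j:ℕ):ℂ)) *ᵥ q = nn q := by
    ext j; simp [nn, mulVec_diagonal]
  rw [e3, e4, e] at h
  have hu : IsUnit (toep a m).det := isUnit_iff_ne_zero.mpr hA
  rw [mul_neg, neg_mul, neg_mulVec, dotProduct_neg, mul_add, add_mul, add_mulVec, dotProduct_add,
    mul_smul_comm, smul_mul_assoc, nonsing_inv_mul _ hu, one_mul, smul_mulVec, dotProduct_smul,
    Finset.mul_sum, Finset.sum_mul, sum_mulVec, dotProduct_sum] at h
  simp_rw [mul_smul_comm, smul_mul_assoc, smul_mulVec, dotProduct_smul, bil_vecMulVec] at h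
  rw [Finset.mul_sum]
  simp only [smul_eq_mul] at h
  have h5 : p ⬝ᵥ (toep a m)⁻¹ *ᵥ q = bil (toep a m) p q := rfl
  rw [h5] at h
  have h6 : ∀ k, Complex.I * (lam k * bil (toep a m) p (vv m (z k)) * bil (toep a m) (ww m (z k)) q)
    = Complex.I * lam k * (bil (toep a m) p (vv m (z k)) * bil (toep a m) (ww m (z k)) q) := by
    intro k; ring
  simp_rw [h6]
  linear_combination -h

end Fermi
end

noncomputable section
namespace Fermi
open Matrix

variable {m : ℕ}

lemma hasDerivAt_det (A : ℝ → Matrix (Fin m) (Fin m) ℂ) (A' : Matrix (Fin m) (Fin m) ℂ) (s : ℝ)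
    (h : ∀ i j, HasDerivAt (fun t => A t i j) (A' i j) s) :
    HasDerivAt (fun t => (A t).det) (trace (adjugate (A s) * A')) s := by
  let f : ContinuousMultilinearMap ℂ (fun _ : Fin m => Fin m → ℂ) ℂ :=
    { (detRowAlternating (R := ℂ) (n := Fin m)).toMultilinearMap with
      cont := by
        have : Continuous fun M : Matrix (Fin m) (Fin m) ℂ => M.det := continuous_id.matrix_det
        exact this }
  let A0 : ℝ → Fin m → Fin m → ℂ := fun t i j => A t i j
  let A1 : Fin m → Fin m → ℂ := fun i j => A' i j
  have h1 : HasDerivAt A0 A1 s := by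
    rw [hasDerivAt_pi]; intro i; rw [hasDerivAt_pi]; intro j; exact h i j
  have h2 := ((f.hasStrictFDerivAt (A0 s)).hasFDerivAt.restrictScalars ℝ).comp_hasDerivAt s h1
  have e : ((ContinuousLinearMap.restrictScalars ℝ (f.linearDeriv (A0 s))) A1)
      = trace (adjugate (A s) * A') := by
    simp only [ContinuousLinearMap.coe_restrictScalars', ContinuousMultilinearMap.linearDeriv_apply]
    have : ∀ i, f (Function.update (A0 s) i (A1 i)) = ∑ j, A' i j * adjugate (A s) j i := by
      intro i
      have h3 : f (Function.update (A0 s) i (A1 i)) = ((A s).updateRow i (A1 i)).det := rfl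
      rw [h3, ← cramer_transpose_apply, cramer_eq_adjugate_mulVec, ← adjugate_transpose]
      simp [mulVec, dotProduct, mul_comm, A1]
    simp_rw [this]
    rw [Finset.sum_comm]
    simp only [trace, diag, mul_apply]
    refine Finset.sum_congr rfl fun i _ => Finset.sum_congr rfl fun j _ => mul_comm _ _
  rw [e] at h2
  exact h2

lemma hasDerivAt_inv_entry (A : ℝ → Matrix (Fin m) (Fin m) ℂ) (A' : Matrix (Fin m) (Fin m) ℂ)
    (s : ℝ) (h : ∀ i j, HasDerivAt (fun t => A t i j) (A' i j) s) (hd : (A s).det ≠ 0) (i j) :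
    HasDerivAt (fun t => (A t)⁻¹ i j) (-((A s)⁻¹ * A' * (A s)⁻¹) i j) s := by
  have hdet := hasDerivAt_det A A' s h
  have hev : ∀ᶠ t in nhds s, (A t).det ≠ 0 := hdet.continuousAt.eventually_ne hd
  have hX : ∀ i j, ∃ x, HasDerivAt (fun t => (A t)⁻¹ i j) x s := by
    intro i j
    have h1 : HasDerivAt (fun t => ((A t).updateRow j (Pi.single i 1)).det) _ s :=
      hasDerivAt_det (fun t => (A t).updateRow j (Pi.single i 1)) (A'.updateRow j 0) s (by
        intro k l
        by_cases hk : k = j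
        · subst hk; simp only [updateRow_self]; exact hasDerivAt_const _ _
        · simp only [ne_eq, hk, not_false_eq_true, updateRow_ne]; exact h k l)
    have h2 := (hdet.inv hd).mul h1
    refine ⟨_, h2.congr_of_eventuallyEq ?_⟩
    filter_upwards [hev] with t ht
    simp [inv_def, adjugate_apply]
  choose X hX using hX
  have hmul : (Matrix.of X) * A s + (A s)⁻¹ * A' = 0 := by
    ext i k
    have h1 : HasDerivAt (fun t => ∑ l, (A t)⁻¹ i l * A t l k)
        (∑ l, (X i l * A s l k + (A s)⁻¹ i l * A' l k)) s :=
      HasDerivAt.fun_sum fun l _ => (hX i l).mul (h l k)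
    have h2 : HasDerivAt (fun t => ∑ l, (A t)⁻¹ i l * A t l k) 0 s := by
      refine (hasDerivAt_const s ((1 : Matrix (Fin m) (Fin m) ℂ) i k)).congr_of_eventuallyEq ?_
      filter_upwards [hev] with t ht
      rw [← nonsing_inv_mul (A t) (isUnit_iff_ne_zero.mpr ht), mul_apply]
    have h3 := h1.unique h2
    rw [Finset.sum_add_distrib] at h3
    simpa [mul_apply] using h3
  have hu : IsUnit (A s).det := isUnit_iff_ne_zero.mpr hd
  have e : Matrix.of X = -((A s)⁻¹ * A' * (A s)⁻¹) := by
    have := congrArg (· * (A s)⁻¹) hmul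
    simp only [add_mul, zero_mul, mul_assoc, mul_nonsing_inv _ hu, mul_one] at this
    rw [mul_assoc]
    exact eq_neg_of_add_eq_zero_left this
  have := hX i j
  have e2 : X i j = (-((A s)⁻¹ * A' * (A s)⁻¹)) i j := by rw [← e]; rfl
  rwa [e2] at this

lemma bil_eq_sum (A : Matrix (Fin m) (Fin m) ℂ) (p q : Fin m → ℂ) :
    bil A p q = ∑ i, ∑ j, p i * A⁻¹ i j * q j := by
  simp [bil, dotProduct, mulVec, Finset.mul_sum, mul_assoc]

lemma hasDerivAt_bil {ι : Type*} [Fintype ι] (A : ℝ → Matrix (Fin m) (Fin m) ℂ) (x y : ι → Fin m → ℂ)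
    (c : ι → ℂ) (s : ℝ)
    (h : ∀ i j, HasDerivAt (fun t => A t i j) (∑ k, c k * (x k i * y k j)) s) (hd : (A s).det ≠ 0)
    (p q : ℝ → Fin m → ℂ) (p' q' : Fin m → ℂ) (hp : ∀ i, HasDerivAt (fun t => p t i) (p' i) s)
    (hq : ∀ i, HasDerivAt (fun t => q t i) (q' i) s) :
    HasDerivAt (fun t => bil (A t) (p t) (q t))
      (bil (A s) p' (q s) + bil (A s) (p s) q'
        - ∑ k, c k * (bil (A s) (p s) (x k) * bil (A s) (y k) (q s))) s := by
  have hA' : ∀ i j, HasDerivAt (fun t => A t i j) ((∑ k, c k • vecMulVec (x k) (y k)) i j) s := by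
    intro i j
    have := h i j
    simpa [Matrix.sum_apply, vecMulVec_apply] using this
  simp_rw [bil_eq_sum]
  have h1 : HasDerivAt (fun t => ∑ i, ∑ j, p t i * (A t)⁻¹ i j * q t j)
    (∑ i, ∑ j, ((p' i * (A s)⁻¹ i j + p s i * (-((A s)⁻¹ * (∑ k, c k • vecMulVec (x k) (y k))
      * (A s)⁻¹) i j)) * q s j + p s i * (A s)⁻¹ i j * q' j)) s :=
    HasDerivAt.fun_sum fun i _ => HasDerivAt.fun_sum fun j _ =>
      ((hp i).mul (hasDerivAt_inv_entry A _ s hA' hd i j)).mul (hq j)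
  refine h1.congr_deriv ?_
  simp_rw [← bil_eq_sum, ← bil_vecMulVec]
  have e : ∀ k, c k * (p s ⬝ᵥ ((A s)⁻¹ * vecMulVec (x k) (y k) * (A s)⁻¹) *ᵥ q s) =
     p s ⬝ᵥ ((A s)⁻¹ * (c k • vecMulVec (x k) (y k)) * (A s)⁻¹) *ᵥ q s := by
    intro k; simp [smul_mulVec]
  simp_rw [e]
  rw [← dotProduct_sum, ← sum_mulVec, ← Finset.sum_mul, ← Finset.mul_sum]
  generalize (A s)⁻¹ * (∑ k, c k • vecMulVec (x k) (y k)) * (A s)⁻¹ = Y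
  simp only [bil_eq_sum, dotProduct, mulVec, Finset.mul_sum]
  rw [← Finset.sum_add_distrib, ← Finset.sum_sub_distrib]
  refine Finset.sum_congr rfl fun i _ => ?_
  rw [← Finset.sum_add_distrib, ← Finset.sum_sub_distrib]
  refine Finset.sum_congr rfl fun j _ => ?_
  ring

lemma hasDerivAt_det' {ι : Type*} [Fintype ι] (A : ℝ → Matrix (Fin m) (Fin m) ℂ) (x y : ι → Fin m → ℂ)
    (c : ι → ℂ) (s : ℝ)
    (h : ∀ i j, HasDerivAt (fun t => A t i j) (∑ k, c k * (x k i * y k j)) s) (hd : (A s).det ≠ 0) :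
    HasDerivAt (fun t => (A t).det) ((∑ k, c k * bil (A s) (y k) (x k)) * (A s).det) s := by
  have hA' : ∀ i j, HasDerivAt (fun t => A t i j) ((∑ k, c k • vecMulVec (x k) (y k)) i j) s := by
    intro i j
    have := h i j
    simpa [Matrix.sum_apply, vecMulVec_apply] using this
  refine (hasDerivAt_det A _ s hA').congr_deriv ?_
  have e : adjugate (A s) = (A s).det • (A s)⁻¹ := by
    rw [inv_def]; simp [smul_smul, hd]
  rw [e, Finset.mul_sum, trace_sum, Finset.sum_mul]
  refine Finset.sum_congr rfl fun k _ => ?_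
  simp only [smul_mul_assoc, mul_smul_comm, trace_smul, mul_vecMulVec, trace_vecMulVec, bil]
  rw [dotProduct_comm]
  simp; ring

end Fermi
end

noncomputable section
namespace Fermi
open Matrix

def zz (θ : Fin 4 → ℝ) (k : Fin 4) : ℂ := Complex.exp (Complex.I * (θ k : ℂ))
def sg (k : Fin 4) : ℂ := (-1) ^ (k : ℕ)
def lam (θ : Fin 4 → ℝ) (k : Fin 4) : ℂ := sg k * (zz θ k) ^ 2 / (Real.pi : ℂ)
/-- Fourier coefficients of the four-jump symbol -/
def cof (θ : Fin 4 → ℝ) (n : ℤ) : ℂ :=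
  if n = 0 then 1 + ∑ k, sg k * (θ k : ℂ) / (Real.pi : ℂ)
  else ∑ k, (Complex.I / ((Real.pi : ℂ) * (n : ℂ))) * (sg k * (zz θ k) ^ (-n))
def sy (θ : Fin 4 → ℝ) (n : ℤ) : ℂ := cof θ (n - 2)
def AA (θ : Fin 4 → ℝ) (N : ℕ) : Matrix (Fin N) (Fin N) ℂ := toep (sy θ) N
def FF (N : ℕ) (θ : Fin 4 → ℝ) (k : Fin 4) : ℂ := bil (AA θ (N+1)) (ww (N+1) (zz θ k)) (ee 0)
def GG (N : ℕ) (θ : Fin 4 → ℝ) (k : Fin 4) : ℂ := bil (AA θ (N+1)) (ee 0) (vv (N+1) (zz θ k))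
def KK (N : ℕ) (θ : Fin 4 → ℝ) (k i : Fin 4) : ℂ :=
  bil (AA θ (N+1)) (ww (N+1) (zz θ k)) (vv (N+1) (zz θ i))
def bb (N : ℕ) (θ : Fin 4 → ℝ) : ℂ := bil (AA θ (N+1)) (ee 0) (ee 0)
def gg (N : ℕ) (θ : Fin 4 → ℝ) (k : Fin 4) : ℂ := GG N θ k / bb N θ
def EE (N : ℕ) (θ : Fin 4 → ℝ) (k : Fin 4) : ℂ := lam θ k * FF N θ k ^ 2 / ((N : ℂ) + 1)
def JJ (N : ℕ) (θ : Fin 4 → ℝ) (k : Fin 4) : ℂ := ((N : ℂ) + 1) * lam θ k * gg N θ k ^ 2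
def hh (N : ℕ) (θ : Fin 4 → ℝ) (k : Fin 4) : ℂ := lam θ k * FF N θ k * gg N θ k
def qq (N : ℕ) (θ : Fin 4 → ℝ) (k : Fin 4) : ℂ :=
  lam θ k * KK N θ k k - Complex.I * ((N : ℂ) + 1) / 2
def dd (N : ℕ) (θ : Fin 4 → ℝ) : ℂ :=
  ((N : ℂ) + 1) * (AA θ (N+1)).det * Complex.exp (-Complex.I * ((N : ℂ) + 1) * (∑ k, (θ k : ℂ)) / 2)
def om (N : ℕ) (θ : Fin 4 → ℝ) (k i : Fin 4) : ℂ := zz θ k ^ (N+1) / zz θ i ^ (N+1)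

lemma zz_ne (θ k) : zz θ k ≠ 0 := Complex.exp_ne_zero _
lemma pi_ne : (Real.pi : ℂ) ≠ 0 := by exact_mod_cast Real.pi_ne_zero
lemma sg_ne (k) : sg k ≠ 0 := pow_ne_zero _ (by norm_num)
lemma lam_ne (θ k) : lam θ k ≠ 0 :=
  div_ne_zero (mul_ne_zero (sg_ne k) (pow_ne_zero _ (zz_ne θ k))) pi_ne
lemma nat_ne (N : ℕ) : ((N : ℂ) + 1) ≠ 0 := by exact_mod_cast Nat.succ_ne_zero N

lemma sg_sum : ∑ k, sg k = 0 := by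
  simp [Fin.sum_univ_four, sg]; norm_num

lemma sy_comm (θ : Fin 4 → ℝ) (n : ℤ) :
    ((n:ℂ) - 2) * sy θ n = Complex.I * ∑ k, lam θ k * (zz θ k)^(-n) := by
  have e : ∀ k, lam θ k * (zz θ k)^(-n) = sg k * (zz θ k) ^ (-(n-2)) / Real.pi := by
    intro k
    rw [lam, show -(n-2) = 2 + -n by ring, zpow_add₀ (zz_ne θ k)]
    norm_cast; ring
  simp_rw [e]
  unfold sy cof
  split_ifs with h
  · have : n = 2 := by omega
    subst this
    simp
    rw [← Finset.sum_div, sg_sum]; simp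
  · have : ((n:ℂ) - 2) ≠ 0 := by
      have : ((n - 2 : ℤ) : ℂ) ≠ 0 := by exact_mod_cast h
      simpa using this
    rw [Finset.mul_sum, Finset.mul_sum]
    refine Finset.sum_congr rfl fun k _ => ?_
    push_cast
    have := pi_ne
    field_simp

variable (N : ℕ) (θ : Fin 4 → ℝ)

lemma comm_AA (hA : (AA θ (N+1)).det ≠ 0) (p q : Fin (N+1) → ℂ) :
    bil (AA θ (N+1)) p (nn q) - bil (AA θ (N+1)) (nn p) q = 2 * bil (AA θ (N+1)) p q +
      Complex.I * ∑ k, lam θ k * bil (AA θ (N+1)) p (vv (N+1) (zz θ k))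
        * bil (AA θ (N+1)) (ww (N+1) (zz θ k)) q :=
  comm_id (sy θ) (zz θ) (lam θ) (zz_ne θ) (sy_comm θ) hA p q

lemma nn_ee : nn (ee (0 : Fin (N+1))) = 0 := by
  ext j
  simp only [nn, ee, Pi.single_apply, Pi.zero_apply]
  split_ifs with h
  · simp [h]
  · simp

lemma sum_lamGF (hA : (AA θ (N+1)).det ≠ 0) :
    ∑ k, lam θ k * GG N θ k * FF N θ k = 2 * Complex.I * bb N θ := by
  have := comm_AA N θ hA (ee 0) (ee 0)
  rw [nn_ee, bil_zero_left, bil_zero_right] at this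
  change 0 - 0 = 2 * bb N θ + Complex.I * ∑ k, lam θ k * GG N θ k * FF N θ k at this
  linear_combination (Complex.I) * this + (∑ k, lam θ k * GG N θ k * FF N θ k) * Complex.I_sq

lemma nn_last : nn (ee (Fin.last N)) = (N : ℂ) • ee (Fin.last N) := by
  ext j
  simp only [nn, ee, Pi.single_apply, Pi.smul_apply, smul_eq_mul]
  split_ifs with h
  · simp [h]
  · simp

lemma corner (hA : (AA θ (N+1)).det ≠ 0) :
    ((N:ℂ) + 2) * (AA θ (N+1))⁻¹ (Fin.last N) 0 =
      - Complex.I * ∑ k, lam θ k * (zz θ k ^ N)⁻¹ * FF N θ k ^ 2 := by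
  have := comm_AA N θ hA (ee (Fin.last N)) (ee 0)
  rw [nn_ee, nn_last, bil_zero_right, bil_smul_left, ← bil_ee] at *
  have e : ∀ k, bil (AA θ (N+1)) (ee (Fin.last N)) (vv (N+1) (zz θ k)) = (zz θ k ^ N)⁻¹ * FF N θ k :=
    fun k => bil_last_vv _ _ _ (zz_ne θ k)
  simp_rw [e] at this
  have e2 : ∀ k, lam θ k * (zz θ k ^ N)⁻¹ * FF N θ k ^ 2 = lam θ k * ((zz θ k ^ N)⁻¹ * FF N θ k) *
      bil (AA θ (N+1)) (ww (N+1) (zz θ k)) (ee 0) := by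
    intro k; unfold FF; ring
  simp_rw [e2]
  linear_combination -this

lemma cdK (hA : (AA θ (N+1)).det ≠ 0) (hb : bb N θ ≠ 0) (k i : Fin 4) (hki : zz θ k ≠ zz θ i) :
    KK N θ k i = zz θ i / (zz θ k - zz θ i) *
      (om N θ k i * gg N θ k * FF N θ i - FF N θ k * gg N θ i) := by
  have h := cd (sy θ) N hA hb (zz θ k) (zz θ i) (zz_ne θ k) (zz_ne θ i)
  change (zz θ k - zz θ i) * KK N θ k i * bb N θ = zz θ i * (om N θ k i * GG N θ k * FF N θ i -
    FF N θ k * GG N θ i) at h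
  have h1 : zz θ k - zz θ i ≠ 0 := sub_ne_zero.mpr hki
  unfold gg
  field_simp
  linear_combination h

end Fermi
end

noncomputable section
namespace Fermi
open Matrix

section path
variable (N : ℕ) (θ : ℝ → Fin 4 → ℝ) (δ : Fin 4 → ℝ) (s : ℝ)
  (hθ : ∀ k, HasDerivAt (fun t => θ t k) (δ k) s)
include hθ

lemma d_theta (k) : HasDerivAt (fun t => ((θ t k : ℝ) : ℂ)) (δ k : ℂ) s := (hθ k).ofReal_comp

lemma d_zz (k) : HasDerivAt (fun t => zz (θ t) k) (Complex.I * δ k * zz (θ s) k) s := by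
  unfold zz
  have := ((d_theta θ δ s hθ k).const_mul Complex.I).cexp
  exact this.congr_deriv (by ring)

lemma d_zz_zpow (k) (n : ℤ) :
    HasDerivAt (fun t => zz (θ t) k ^ n) (Complex.I * n * δ k * zz (θ s) k ^ n) s := by
  have e : ∀ t, zz (θ t) k ^ n = Complex.exp (Complex.I * n * (θ t k : ℂ)) := by
    intro t; rw [zz, ← Complex.exp_int_mul]; congr 1; ring
  simp_rw [e]
  have := ((d_theta θ δ s hθ k).const_mul (Complex.I * n)).cexp
  exact this.congr_deriv (by ring)

lemma d_zz_pow (k) (n : ℕ) :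
    HasDerivAt (fun t => zz (θ t) k ^ n) (Complex.I * n * δ k * zz (θ s) k ^ n) s := by
  have := d_zz_zpow θ δ s hθ k n
  simpa using this

lemma d_lam (k) : HasDerivAt (fun t => lam (θ t) k) (2 * Complex.I * δ k * lam (θ s) k) s := by
  unfold lam
  have := ((d_zz_pow θ δ s hθ k 2).const_mul (sg k)).div_const (Real.pi : ℂ)
  exact this.congr_deriv (by push_cast; ring)

lemma d_sy (n : ℤ) : HasDerivAt (fun t => sy (θ t) n)
    (∑ k, (δ k : ℂ) * lam (θ s) k * zz (θ s) k ^ (-n)) s := by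
  have e : ∀ k, lam (θ s) k * (zz (θ s) k)^(-n) = sg k * (zz (θ s) k) ^ (-(n-2)) / Real.pi := by
    intro k
    rw [lam, show -(n-2) = 2 + -n by ring, zpow_add₀ (zz_ne (θ s) k)]
    norm_cast; ring
  simp_rw [mul_assoc, e]
  unfold sy cof
  split_ifs with h
  · have h1 : HasDerivAt (fun t => 1 + ∑ k, sg k * (θ t k : ℂ) / (Real.pi : ℂ))
        (∑ k, sg k * (δ k : ℂ) / (Real.pi : ℂ)) s :=
      (HasDerivAt.fun_sum fun k _ => ((d_theta θ δ s hθ k).const_mul (sg k)).div_const _).const_add 1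
    refine h1.congr_deriv (Finset.sum_congr rfl fun k _ => ?_)
    rw [h]; simp; ring
  · refine (HasDerivAt.fun_sum fun k _ => ((d_zz_zpow θ δ s hθ k (-(n-2))).const_mul
      (sg k)).const_mul _).congr_deriv (Finset.sum_congr rfl fun k _ => ?_)
    have h3 : ((n - 2 : ℤ) : ℂ) ≠ 0 := by exact_mod_cast h
    have := pi_ne
    rw [Int.cast_neg]
    field_simp
    linear_combination (-(sg k * δ k * zz (θ s) k ^ (-(n - 2)))) * Complex.I_sq

lemma d_AA (i j : Fin N) : HasDerivAt (fun t => AA (θ t) N i j)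
    (∑ k, ((δ k : ℂ) * lam (θ s) k) * (vv N (zz (θ s) k) i * ww N (zz (θ s) k) j)) s := by
  refine (d_sy θ δ s hθ ((i:ℤ) - j)).congr_deriv (Finset.sum_congr rfl fun k _ => ?_)
  rw [neg_sub, zpow_sub₀ (zz_ne _ k), zpow_natCast, zpow_natCast, vv, ww, inv_pow]
  have := zz_ne (θ s) k
  field_simp

lemma d_ww (k) (i : Fin N) : HasDerivAt (fun t => ww N (zz (θ t) k) i)
    (((Complex.I * δ k) • nn (ww N (zz (θ s) k))) i) s := by
  refine (d_zz_pow θ δ s hθ k i).congr_deriv ?_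
  simp [nn, ww]; ring

lemma d_vv (k) (i : Fin N) : HasDerivAt (fun t => vv N (zz (θ t) k) i)
    (((-Complex.I * δ k) • nn (vv N (zz (θ s) k))) i) s := by
  have := (d_zz_zpow θ δ s hθ k (-(i:ℤ)))
  have e : ∀ t, zz (θ t) k ^ (-(i:ℤ)) = vv N (zz (θ t) k) i := by
    intro t; simp [vv]
  simp_rw [e] at this
  refine this.congr_deriv ?_
  simp [nn]; ring

variable (hA : (AA (θ s) (N+1)).det ≠ 0)
include hA

lemma d_FF (k) : HasDerivAt (fun t => FF N (θ t) k) (-2 * Complex.I * δ k * FF N (θ s) k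
    + ∑ i, ((δ k : ℂ) - δ i) * lam (θ s) i * KK N (θ s) k i * FF N (θ s) i) s := by
  have h := hasDerivAt_bil (fun t => AA (θ t) (N+1)) (fun k => vv (N+1) (zz (θ s) k))
    (fun k => ww (N+1) (zz (θ s) k)) (fun k => (δ k : ℂ) * lam (θ s) k) s
    (fun i j => d_AA (N+1) θ δ s hθ i j) hA (fun t => ww (N+1) (zz (θ t) k)) (fun _ => ee 0)
    _ 0 (fun i => d_ww (N+1) θ δ s hθ k i) (fun i => hasDerivAt_const _ _)
  have c := comm_AA N (θ s) hA (ww (N+1) (zz (θ s) k)) (ee 0)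
  rw [nn_ee, bil_zero_right] at c
  refine h.congr_deriv ?_
  rw [bil_smul_left, bil_zero_right]
  have e1 : ∑ i, ((δ k : ℂ) - δ i) * lam (θ s) i * KK N (θ s) k i * FF N (θ s) i =
      δ k * (∑ i, lam (θ s) i * KK N (θ s) k i * FF N (θ s) i) -
      ∑ i, (δ i : ℂ) * lam (θ s) i * (KK N (θ s) k i * FF N (θ s) i) := by
    rw [Finset.mul_sum, ← Finset.sum_sub_distrib]
    exact Finset.sum_congr rfl fun i _ => by ring
  rw [e1]
  unfold FF KK at *
  linear_combination (-Complex.I * δ k) * c - (δ k) * (∑ i, lam (θ s) i * bil (AA (θ s) (N+1)) (ww (N+1) (zz (θ s) k)) (vv (N+1) (zz (θ s) i)) * bil (AA (θ s) (N+1)) (ww (N+1) (zz (θ s) i)) (ee 0)) * Complex.I_sq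

lemma d_GG (k) : HasDerivAt (fun t => GG N (θ t) k) (-2 * Complex.I * δ k * GG N (θ s) k
    + ∑ i, ((δ k : ℂ) - δ i) * lam (θ s) i * GG N (θ s) i * KK N (θ s) i k) s := by
  have h := hasDerivAt_bil (fun t => AA (θ t) (N+1)) (fun k => vv (N+1) (zz (θ s) k))
    (fun k => ww (N+1) (zz (θ s) k)) (fun k => (δ k : ℂ) * lam (θ s) k) s
    (fun i j => d_AA (N+1) θ δ s hθ i j) hA (fun _ => ee 0) (fun t => vv (N+1) (zz (θ t) k))
    0 _ (fun i => hasDerivAt_const _ _) (fun i => d_vv (N+1) θ δ s hθ k i)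
  have c := comm_AA N (θ s) hA (ee 0) (vv (N+1) (zz (θ s) k))
  rw [nn_ee, bil_zero_left] at c
  refine h.congr_deriv ?_
  rw [bil_smul_right, bil_zero_left]
  have e1 : ∑ i, ((δ k : ℂ) - δ i) * lam (θ s) i * GG N (θ s) i * KK N (θ s) i k =
      δ k * (∑ i, lam (θ s) i * GG N (θ s) i * KK N (θ s) i k) -
      ∑ i, (δ i : ℂ) * lam (θ s) i * (GG N (θ s) i * KK N (θ s) i k) := by
    rw [Finset.mul_sum, ← Finset.sum_sub_distrib]
    exact Finset.sum_congr rfl fun i _ => by ring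
  rw [e1]
  unfold GG KK at *
  linear_combination (-Complex.I * δ k) * c - (δ k) * (∑ i, lam (θ s) i * bil (AA (θ s) (N+1)) (ee 0) (vv (N+1) (zz (θ s) i)) * bil (AA (θ s) (N+1)) (ww (N+1) (zz (θ s) i)) (vv (N+1) (zz (θ s) k))) * Complex.I_sq

lemma d_KK (k) : HasDerivAt (fun t => KK N (θ t) k k) (-2 * Complex.I * δ k * KK N (θ s) k k
    + ∑ i, ((δ k : ℂ) - δ i) * lam (θ s) i * KK N (θ s) k i * KK N (θ s) i k) s := by
  have h := hasDerivAt_bil (fun t => AA (θ t) (N+1)) (fun k => vv (N+1) (zz (θ s) k))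
    (fun k => ww (N+1) (zz (θ s) k)) (fun k => (δ k : ℂ) * lam (θ s) k) s
    (fun i j => d_AA (N+1) θ δ s hθ i j) hA (fun t => ww (N+1) (zz (θ t) k))
    (fun t => vv (N+1) (zz (θ t) k))
    _ _ (fun i => d_ww (N+1) θ δ s hθ k i) (fun i => d_vv (N+1) θ δ s hθ k i)
  have c := comm_AA N (θ s) hA (ww (N+1) (zz (θ s) k)) (vv (N+1) (zz (θ s) k))
  refine h.congr_deriv ?_
  rw [bil_smul_right, bil_smul_left]
  have e1 : ∑ i, ((δ k : ℂ) - δ i) * lam (θ s) i * KK N (θ s) k i * KK N (θ s) i k =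
      δ k * (∑ i, lam (θ s) i * KK N (θ s) k i * KK N (θ s) i k) -
      ∑ i, (δ i : ℂ) * lam (θ s) i * (KK N (θ s) k i * KK N (θ s) i k) := by
    rw [Finset.mul_sum, ← Finset.sum_sub_distrib]
    exact Finset.sum_congr rfl fun i _ => by ring
  rw [e1]
  unfold KK at *
  linear_combination (-Complex.I * δ k) * c - (δ k) * (∑ i, lam (θ s) i * bil (AA (θ s) (N+1)) (ww (N+1) (zz (θ s) k)) (vv (N+1) (zz (θ s) i)) * bil (AA (θ s) (N+1)) (ww (N+1) (zz (θ s) i)) (vv (N+1) (zz (θ s) k))) * Complex.I_sq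

lemma d_bb : HasDerivAt (fun t => bb N (θ t))
    (-∑ i, (δ i : ℂ) * lam (θ s) i * (GG N (θ s) i * FF N (θ s) i)) s := by
  have h := hasDerivAt_bil (fun t => AA (θ t) (N+1)) (fun k => vv (N+1) (zz (θ s) k))
    (fun k => ww (N+1) (zz (θ s) k)) (fun k => (δ k : ℂ) * lam (θ s) k) s
    (fun i j => d_AA (N+1) θ δ s hθ i j) hA (fun _ => ee 0) (fun _ => ee 0)
    0 0 (fun i => hasDerivAt_const _ _) (fun i => hasDerivAt_const _ _)
  refine h.congr_deriv ?_
  rw [bil_zero_left, bil_zero_right]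
  unfold GG FF
  ring

lemma d_dd : HasDerivAt (fun t => dd N (θ t))
    ((∑ i, (δ i : ℂ) * qq N (θ s) i) * dd N (θ s)) s := by
  have h := hasDerivAt_det' (fun t => AA (θ t) (N+1)) (fun k => vv (N+1) (zz (θ s) k))
    (fun k => ww (N+1) (zz (θ s) k)) (fun k => (δ k : ℂ) * lam (θ s) k) s
    (fun i j => d_AA (N+1) θ δ s hθ i j) hA
  have h2 : HasDerivAt (fun t => ∑ k, ((θ t k : ℝ) : ℂ)) (∑ k, (δ k : ℂ)) s :=
    HasDerivAt.fun_sum fun k _ => d_theta θ δ s hθ k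
  have h3 := ((h.const_mul ((N : ℂ) + 1)).mul
    ((h2.const_mul (-Complex.I * ((N : ℂ) + 1))).div_const 2).cexp)
  refine h3.congr_deriv ?_
  have e : ∑ i, (δ i : ℂ) * qq N (θ s) i = ∑ k, (δ k : ℂ) * lam (θ s) k * KK N (θ s) k k
     - (∑ k, (δ k : ℂ)) * (Complex.I * ((N : ℂ) + 1) / 2) := by
    rw [Finset.sum_mul, ← Finset.sum_sub_distrib]
    exact Finset.sum_congr rfl fun i _ => by unfold qq; ring
  rw [e]
  unfold dd KK
  ring

variable (hb : bb N (θ s) ≠ 0)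
include hb

lemma d_bb' : HasDerivAt (fun t => bb N (θ t))
    (-(∑ i, (δ i : ℂ) * hh N (θ s) i) * bb N (θ s)) s := by
  refine (d_bb N θ δ s hθ hA).congr_deriv ?_
  rw [neg_mul, Finset.sum_mul]
  congr 1
  refine Finset.sum_congr rfl fun i _ => ?_
  unfold hh gg
  field_simp

lemma d_gg (k) : HasDerivAt (fun t => gg N (θ t) k) (-2 * Complex.I * δ k * gg N (θ s) k
    + ∑ i, ((δ k : ℂ) - δ i) * lam (θ s) i * gg N (θ s) i * KK N (θ s) i k
    + (∑ i, (δ i : ℂ) * hh N (θ s) i) * gg N (θ s) k) s := by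
  refine ((d_GG N θ δ s hθ hA k).div (d_bb' N θ δ s hθ hA hb) hb).congr_deriv ?_
  have e : ∑ i, ((δ k : ℂ) - δ i) * lam (θ s) i * gg N (θ s) i * KK N (θ s) i k =
    (∑ i, ((δ k : ℂ) - δ i) * lam (θ s) i * GG N (θ s) i * KK N (θ s) i k) / bb N (θ s) := by
    rw [Finset.sum_div]
    exact Finset.sum_congr rfl fun i _ => by unfold gg; ring
  rw [e]
  unfold gg
  field_simp
  ring

variable (hz : ∀ k i, k ≠ i → zz (θ s) k ≠ zz (θ s) i)
include hz

lemma d_EE (k) : HasDerivAt (fun t => EE N (θ t) k) (-2 * Complex.I * δ k * EE N (θ s) k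
    + ∑ i, ((δ i : ℂ) - δ k) * (2 * (zz (θ s) i / (zz (θ s) k - zz (θ s) i)) *
      (hh N (θ s) i * EE N (θ s) k - om N (θ s) k i * hh N (θ s) k * EE N (θ s) i))) s := by
  have h := (((d_lam θ δ s hθ k).mul ((d_FF N θ δ s hθ hA k).pow 2)).div_const ((N:ℂ)+1))
  refine h.congr_deriv ?_
  have hN := nat_ne N
  have e : ∀ i, ((δ i : ℂ) - δ k) * (2 * (zz (θ s) i / (zz (θ s) k - zz (θ s) i)) *
      (hh N (θ s) i * EE N (θ s) k - om N (θ s) k i * hh N (θ s) k * EE N (θ s) i)) =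
      2 * lam (θ s) k * FF N (θ s) k / ((N:ℂ) + 1) *
        (((δ k : ℂ) - δ i) * lam (θ s) i * KK N (θ s) k i * FF N (θ s) i) := by
    intro i
    by_cases hki : k = i
    · subst hki; simp
    · rw [cdK N _ hA hb k i (hz k i hki)]
      unfold hh EE
      field_simp
      ring
  simp_rw [e, ← Finset.mul_sum]
  unfold EE
  simp
  field_simp
  ring

lemma d_JJ (k) : HasDerivAt (fun t => JJ N (θ t) k) (-2 * Complex.I * δ k * JJ N (θ s) k
    + 2 * (∑ i, (δ i : ℂ) * hh N (θ s) i) * JJ N (θ s) k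
    + ∑ i, ((δ k : ℂ) - δ i) * (2 * (zz (θ s) k / (zz (θ s) i - zz (θ s) k)) *
      (om N (θ s) i k * hh N (θ s) k * JJ N (θ s) i - hh N (θ s) i * JJ N (θ s) k))) s := by
  have h := (((d_lam θ δ s hθ k).mul ((d_gg N θ δ s hθ hA hb k).pow 2)).const_mul ((N:ℂ)+1))
  have h' : HasDerivAt (fun t => JJ N (θ t) k) _ s := h.congr_of_eventuallyEq
    (Filter.Eventually.of_forall fun t => by simp [JJ]; ring)
  refine h'.congr_deriv ?_
  have e : ∀ i, ((δ k : ℂ) - δ i) * (2 * (zz (θ s) k / (zz (θ s) i - zz (θ s) k)) *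
      (om N (θ s) i k * hh N (θ s) k * JJ N (θ s) i - hh N (θ s) i * JJ N (θ s) k)) =
      2 * lam (θ s) k * gg N (θ s) k * ((N:ℂ) + 1) *
        (((δ k : ℂ) - δ i) * lam (θ s) i * gg N (θ s) i * KK N (θ s) i k) := by
    intro i
    by_cases hki : i = k
    · subst hki; simp
    · rw [cdK N _ hA hb i k (hz i k hki)]
      unfold hh JJ
      ring
  simp_rw [e, ← Finset.mul_sum]
  unfold JJ
  simp
  ring

lemma d_hh (k) : HasDerivAt (fun t => hh N (θ t) k)
    (∑ i, ((δ i : ℂ) - δ k) * ((zz (θ s) i * om N (θ s) k i * JJ N (θ s) k * EE N (θ s) i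
      - zz (θ s) k * om N (θ s) i k * JJ N (θ s) i * EE N (θ s) k) / (zz (θ s) i - zz (θ s) k))) s := by
  have h := (((d_lam θ δ s hθ k).mul (d_FF N θ δ s hθ hA k)).mul (d_gg N θ δ s hθ hA hb k))
  refine h.congr_deriv ?_
  have hN := nat_ne N
  have hsum : ∑ i, hh N (θ s) i = 2 * Complex.I := by
    have := sum_lamGF N (θ s) hA
    have e : ∑ i, hh N (θ s) i = (∑ k, lam (θ s) k * GG N (θ s) k * FF N (θ s) k) / bb N (θ s) := by
      rw [Finset.sum_div]
      exact Finset.sum_congr rfl fun i _ => by unfold hh gg; ring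
    rw [e, this]; field_simp
  have e : ∀ i, ((δ i : ℂ) - δ k) * ((zz (θ s) i * om N (θ s) k i * JJ N (θ s) k * EE N (θ s) i
      - zz (θ s) k * om N (θ s) i k * JJ N (θ s) i * EE N (θ s) k) / (zz (θ s) i - zz (θ s) k)) =
      lam (θ s) k * gg N (θ s) k *
        (((δ k : ℂ) - δ i) * lam (θ s) i * KK N (θ s) k i * FF N (θ s) i) +
      lam (θ s) k * FF N (θ s) k *
        (((δ k : ℂ) - δ i) * lam (θ s) i * gg N (θ s) i * KK N (θ s) i k)
      + (δ i * hh N (θ s) i - δ k * hh N (θ s) i) * hh N (θ s) k := by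
    intro i
    by_cases hki : i = k
    · subst hki; simp
    · rw [cdK N _ hA hb i k (hz i k hki), cdK N _ hA hb k i (hz k i (Ne.symm hki))]
      have h1 : zz (θ s) i - zz (θ s) k ≠ 0 := sub_ne_zero.mpr (hz i k hki)
      have h2 : zz (θ s) k - zz (θ s) i = -(zz (θ s) i - zz (θ s) k) := by ring
      rw [h2]
      have h3 : zz (θ s) i / (-(zz (θ s) i - zz (θ s) k)) = -(zz (θ s) i / (zz (θ s) i - zz (θ s) k)) := by
        rw [div_neg]
      rw [h3]
      unfold hh EE JJ
      field_simp
      ring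
  simp_rw [e, Finset.sum_add_distrib, ← Finset.mul_sum, ← Finset.sum_mul, Finset.sum_sub_distrib,
    ← Finset.mul_sum, hsum]
  unfold hh
  simp
  ring

lemma d_qq (k) : HasDerivAt (fun t => qq N (θ t) k)
    (∑ i, ((δ i : ℂ) - δ k) * (zz (θ s) i * zz (θ s) k / (zz (θ s) k - zz (θ s) i) ^ 2 *
      (2 * hh N (θ s) i * hh N (θ s) k - om N (θ s) k i * JJ N (θ s) k * EE N (θ s) i
      - om N (θ s) i k * JJ N (θ s) i * EE N (θ s) k))) s := by
  have h := ((d_lam θ δ s hθ k).mul (d_KK N θ δ s hθ hA k)).sub_const (Complex.I * ((N : ℂ) + 1) / 2)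
  refine h.congr_deriv ?_
  have hN := nat_ne N
  have e : ∀ i, ((δ i : ℂ) - δ k) * (zz (θ s) i * zz (θ s) k / (zz (θ s) k - zz (θ s) i) ^ 2 *
      (2 * hh N (θ s) i * hh N (θ s) k - om N (θ s) k i * JJ N (θ s) k * EE N (θ s) i
      - om N (θ s) i k * JJ N (θ s) i * EE N (θ s) k)) =
      lam (θ s) k *
        (((δ k : ℂ) - δ i) * lam (θ s) i * KK N (θ s) k i * KK N (θ s) i k) := by
    intro i
    by_cases hki : i = k
    · subst hki; simp
    · have ho : om N (θ s) k i * om N (θ s) i k = 1 := by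
        unfold om
        have := zz_ne (θ s) i
        have := zz_ne (θ s) k
        field_simp
      rw [cdK N _ hA hb i k (hz i k hki), cdK N _ hA hb k i (hz k i (Ne.symm hki))]
      have h1 : zz (θ s) i - zz (θ s) k ≠ 0 := sub_ne_zero.mpr (hz i k hki)
      have h2 : zz (θ s) k - zz (θ s) i = -(zz (θ s) i - zz (θ s) k) := by ring
      rw [h2]
      have h3 : zz (θ s) i / (-(zz (θ s) i - zz (θ s) k)) = -(zz (θ s) i / (zz (θ s) i - zz (θ s) k)) := by
        rw [div_neg]
      rw [h3, neg_sq]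
      unfold hh EE JJ
      field_simp
      generalize om N (θ s) k i = x at *
      generalize om N (θ s) i k = y at *
      linear_combination (-((δ i : ℂ) - δ k) * zz (θ s) i * zz (θ s) k * lam (θ s) i * lam (θ s) k * FF N (θ s) i *
        gg N (θ s) k * gg N (θ s) i * FF N (θ s) k) * ho
  simp_rw [e, ← Finset.mul_sum]
  simp
  ring

lemma d_om (k i) : HasDerivAt (fun t => om N (θ t) k i)
    (Complex.I * (N+1) * (δ k - δ i) * om N (θ s) k i) s := by
  have := (d_zz_pow θ δ s hθ k (N+1)).div (d_zz_pow θ δ s hθ i (N+1)) (pow_ne_zero _ (zz_ne _ _))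
  refine this.congr_deriv ?_
  unfold om
  have h1 := zz_ne (θ s) i
  push_cast
  field_simp

end path
end Fermi
end

noncomputable section
namespace Fermi
open Set Filter Topology

section avg
variable {V : Type*} [NormedAddCommGroup V] [NormedSpace ℝ V] [NormedSpace ℂ V]
  [IsScalarTower ℝ ℂ V] [FiniteDimensional ℝ V] {I : Type*} [Fintype I]

/-- uniform constants on a tube around the averaged solution -/
lemma tube_bound (A : ℝ × V → V) (hA : ContDiff ℝ 1 A) (P : I → ℝ × V → V)
    (hP : ∀ m, ContDiff ℝ 1 (P m)) (ub : ℝ → V) (hub : Continuous ub) :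
    ∃ K : ℝ, 1 ≤ K ∧ ∀ s ∈ Icc (0:ℝ) 1, ∀ v, ‖v - ub s‖ ≤ 1 → ‖A (s, v)‖ ≤ K ∧
      ‖fderiv ℝ A (s, v)‖ ≤ K ∧ ∀ m, ‖P m (s, v)‖ ≤ K ∧ ‖fderiv ℝ (P m) (s, v)‖ ≤ K := by
  let Φ : ℝ × V → ℝ := fun x => ‖A x‖ + ‖fderiv ℝ A x‖ + ∑ m, (‖P m x‖ + ‖fderiv ℝ (P m) x‖)
  have hΦ : Continuous Φ := by
    refine ((hA.continuous.norm).add (hA.continuous_fderiv one_ne_zero).norm).add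
      (continuous_finset_sum _ fun m _ => ?_)
    exact (hP m).continuous.norm.add ((hP m).continuous_fderiv one_ne_zero).norm
  let em : ℝ × V → ℝ × V := fun x => (x.1, ub x.1 + x.2)
  have hem : Continuous em := by fun_prop
  have hc : IsCompact (em '' (Icc (0:ℝ) 1 ×ˢ Metric.closedBall (0:V) 1)) := by
    have : ProperSpace V := FiniteDimensional.proper ℝ V
    exact (isCompact_Icc.prod (isCompact_closedBall _ _)).image hem
  obtain ⟨K, hK⟩ := (hc.bddAbove_image hΦ.continuousOn)
  refine ⟨max K 1, le_max_right _ _, fun s hs v hv => ?_⟩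
  have h1 : Φ (s, v) ≤ K := by
    apply hK
    refine ⟨(s, v), ⟨(s, v - ub s), ⟨hs, by simpa using hv⟩, by simp [em]⟩, rfl⟩
  have hnn : ∀ m, 0 ≤ ‖P m (s,v)‖ + ‖fderiv ℝ (P m) (s,v)‖ := fun m => by positivity
  have hs0 : 0 ≤ ∑ m, (‖P m (s,v)‖ + ‖fderiv ℝ (P m) (s,v)‖) := Finset.sum_nonneg fun m _ => hnn m
  have h1' : ‖A (s,v)‖ + ‖fderiv ℝ A (s,v)‖ + ∑ m, (‖P m (s,v)‖ + ‖fderiv ℝ (P m) (s,v)‖) ≤ K := h1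
  have n1 := norm_nonneg (A (s,v))
  have n2 := norm_nonneg (fderiv ℝ A (s,v))
  refine ⟨le_max_of_le_left (by linarith), le_max_of_le_left (by linarith), fun m => ?_⟩
  have h2 := Finset.single_le_sum (fun m _ => hnn m) (Finset.mem_univ m)
  have n3 := norm_nonneg (P m (s,v))
  have n4 := norm_nonneg (fderiv ℝ (P m) (s,v))
  exact ⟨le_max_of_le_left (by linarith), le_max_of_le_left (by linarith)⟩

/-- a priori estimate as long as the solution stays in the tube -/
lemma apriori (A : ℝ × V → V) (hA : ContDiff ℝ 1 A) (P : I → ℝ × V → V)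
    (hP : ∀ m, ContDiff ℝ 1 (P m)) (ub : ℝ → V) (hub : ∀ s, HasDerivAt ub (A (s, ub s)) s)
    (K : ℝ) (hK1 : 1 ≤ K) (hK : ∀ s ∈ Icc (0:ℝ) 1, ∀ v, ‖v - ub s‖ ≤ 1 → ‖A (s, v)‖ ≤ K ∧
      ‖fderiv ℝ A (s, v)‖ ≤ K ∧ ∀ m, ‖P m (s, v)‖ ≤ K ∧ ‖fderiv ℝ (P m) (s, v)‖ ≤ K)
    (C η : ℝ) (hC : 0 ≤ C) (hη : 0 ≤ η) (Ω Ω' : I → ℝ → ℂ)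
    (hΩ : ∀ m s, HasDerivAt (Ω m) (Ω' m s) s) (hΩb : ∀ m s, ‖Ω m s‖ ≤ η)
    (hΩ'b : ∀ m, ∀ s ∈ Icc (0:ℝ) 1, ‖Ω' m s‖ ≤ C) (u : ℝ → V) (τ : ℝ) (hτ : τ ≤ 1) (hτ0 : 0 ≤ τ)
    (hu : ∀ s ∈ Icc 0 τ, HasDerivAt u (A (s, u s) + ∑ m, Ω' m s • P m (s, u s)) s)
    (htube : ∀ s ∈ Icc 0 τ, ‖u s - ub s‖ ≤ 1) :
    ‖u τ - ub τ‖ ≤ (‖u 0 - ub 0‖ + η * (Fintype.card I * K) +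
      η * (Fintype.card I * K * (K + (1 + (K + Fintype.card I * (C * K)))))) * Real.exp K
      + η * (Fintype.card I * K) := by
  set c : ℝ := (Fintype.card I : ℝ) with hc
  have hc0 : 0 ≤ c := by positivity
  have hsub : ∀ s ∈ Icc 0 τ, s ∈ Icc (0:ℝ) 1 := fun s hs => ⟨hs.1, hs.2.trans hτ⟩
  let corr : ℝ → V := fun s => ∑ m, Ω m s • P m (s, u s)
  have hcorr : ∀ s ∈ Icc 0 τ, ‖corr s‖ ≤ η * (c * K) := by
    intro s hs
    have hb := hK s (hsub s hs) (u s) (htube s hs)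
    calc ‖corr s‖ ≤ ∑ m : I, ‖Ω m s • P m (s, u s)‖ := norm_sum_le _ _
      _ ≤ ∑ m : I, η * K := Finset.sum_le_sum fun m _ => by
          rw [norm_smul]
          exact mul_le_mul (hΩb m s) (hb.2.2 m).1 (norm_nonneg _) hη
      _ = η * (c * K) := by simp [hc]; ring
  let u' : ℝ → V := fun s => A (s, u s) + ∑ m, Ω' m s • P m (s, u s)
  have hu' : ∀ s ∈ Icc 0 τ, ‖u' s‖ ≤ K + c * (C * K) := by
    intro s hs
    have hb := hK s (hsub s hs) (u s) (htube s hs)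
    refine (norm_add_le _ _).trans (add_le_add hb.1 ?_)
    calc ‖∑ m, Ω' m s • P m (s, u s)‖ ≤ ∑ m : I, ‖Ω' m s • P m (s, u s)‖ := norm_sum_le _ _
      _ ≤ ∑ m : I, C * K := Finset.sum_le_sum fun m _ => by
          rw [norm_smul]
          exact mul_le_mul (hΩ'b m s (hsub s hs)) (hb.2.2 m).1 (norm_nonneg _) hC
      _ = c * (C * K) := by simp [hc]
  let w : ℝ → V := fun s => u s - ub s - corr s
  let w' : ℝ → V := fun s => (A (s, u s) - A (s, ub s)) -
    ∑ m, Ω m s • (fderiv ℝ (P m) (s, u s)) ((1:ℝ), u' s)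
  have hw : ∀ s ∈ Icc 0 τ, HasDerivAt w (w' s) s := by
    intro s hs
    have h1 : HasDerivAt (fun t => (t, u t)) ((1:ℝ), u' s) s := (hasDerivAt_id s).prodMk (hu s hs)
    have h2 : ∀ m, HasDerivAt (fun t => P m (t, u t))
        ((fderiv ℝ (P m) (s, u s)) ((1:ℝ), u' s)) s := by
      intro m
      exact (((hP m).differentiable one_ne_zero (s, u s)).hasFDerivAt).comp_hasDerivAt s h1
    have h3 : HasDerivAt corr (∑ m, (Ω m s • (fderiv ℝ (P m) (s, u s)) ((1:ℝ), u' s) +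
        Ω' m s • P m (s, u s))) s :=
      HasDerivAt.fun_sum fun m _ => (hΩ m s).smul (h2 m)
    refine (((hu s hs).sub (hub s)).sub h3).congr_deriv ?_
    simp only [w', Finset.sum_add_distrib]
    abel
  have hdiff : ∀ s ∈ Icc 0 τ, ‖u s - ub s‖ ≤ ‖w s‖ + η * (c * K) := by
    intro s hs
    have : u s - ub s = w s + corr s := by simp [w]
    rw [this]
    exact (norm_add_le _ _).trans (add_le_add le_rfl (hcorr s hs))
  have hLip : ∀ s ∈ Icc 0 τ, ‖A (s, u s) - A (s, ub s)‖ ≤ K * ‖u s - ub s‖ := by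
    intro s hs
    have hd : ∀ v ∈ Metric.closedBall (ub s) 1, HasFDerivWithinAt (fun v => A (s, v))
        ((fderiv ℝ A (s, v)).comp (ContinuousLinearMap.inr ℝ ℝ V)) (Metric.closedBall (ub s) 1) v := by
      intro v _
      have h1 : HasFDerivAt (fun v : V => (s, v)) (ContinuousLinearMap.inr ℝ ℝ V) v :=
        hasFDerivAt_prodMk_right s v
      exact ((hA.differentiable one_ne_zero (s, v)).hasFDerivAt.comp v h1).hasFDerivWithinAt
    have hbd : ∀ v ∈ Metric.closedBall (ub s) 1,
        ‖(fderiv ℝ A (s, v)).comp (ContinuousLinearMap.inr ℝ ℝ V)‖ ≤ K := by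
      intro v hv
      have h1 := (hK s (hsub s hs) v (by simpa [dist_eq_norm] using hv)).2.1
      refine ContinuousLinearMap.opNorm_le_bound _ (by linarith) fun x => ?_
      simp only [ContinuousLinearMap.comp_apply, ContinuousLinearMap.inr_apply]
      refine (ContinuousLinearMap.le_opNorm _ _).trans ?_
      refine mul_le_mul h1 ?_ (norm_nonneg _) (by linarith)
      simp [Prod.norm_def]
    exact (convex_closedBall (ub s) 1).norm_image_sub_le_of_norm_hasFDerivWithin_le hd hbd
      (Metric.mem_closedBall_self zero_le_one)
      (by simpa [dist_eq_norm] using htube s hs)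
  have hbound : ∀ s ∈ Icc 0 τ, ‖w' s‖ ≤ K * ‖w s‖ + η * (c * K * (K + (1 + (K + c * (C * K))))) := by
    intro s hs
    have hb := hK s (hsub s hs) (u s) (htube s hs)
    have h1 : ‖∑ m, Ω m s • (fderiv ℝ (P m) (s, u s)) ((1:ℝ), u' s)‖ ≤
        c * (η * (K * (1 + (K + c * (C * K))))) := by
      calc _ ≤ ∑ m : I, ‖Ω m s • (fderiv ℝ (P m) (s, u s)) ((1:ℝ), u' s)‖ := norm_sum_le _ _
        _ ≤ ∑ m : I, η * (K * (1 + (K + c * (C * K)))) := Finset.sum_le_sum fun m _ => by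
          rw [norm_smul]
          refine mul_le_mul (hΩb m s) ?_ (norm_nonneg _) hη
          refine (ContinuousLinearMap.le_opNorm _ _).trans ?_
          refine mul_le_mul (hb.2.2 m).2 ?_ (norm_nonneg _) (by linarith)
          rw [Prod.norm_def]
          have := hu' s hs
          have h0 := norm_nonneg (u' s)
          simp only [norm_one]
          exact max_le (by linarith) (by linarith)
        _ = _ := by simp [hc]
    have h2 := hLip s hs
    have h3 := hdiff s hs
    have h4 : K * ‖u s - ub s‖ ≤ K * (‖w s‖ + η * (c * K)) :=
      mul_le_mul_of_nonneg_left h3 (by linarith)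
    calc ‖w' s‖ ≤ ‖A (s, u s) - A (s, ub s)‖ + _ := norm_sub_le _ _
      _ ≤ K * (‖w s‖ + η * (c * K)) + c * (η * (K * (1 + (K + c * (C * K))))) :=
          add_le_add (h2.trans h4) h1
      _ = _ := by ring
  set ε := η * (c * K * (K + (1 + (K + c * (C * K))))) with hε
  have hε0 : 0 ≤ ε := by positivity
  have h0mem : (0:ℝ) ∈ Icc 0 τ := ⟨le_rfl, hτ0⟩
  have hw0 : ‖w 0‖ ≤ ‖u 0 - ub 0‖ + η * (c * K) :=
    (norm_sub_le _ _).trans (add_le_add le_rfl (hcorr 0 h0mem))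
  have hg := norm_le_gronwallBound_of_norm_deriv_right_le (f := w) (f' := w') (a := 0) (b := τ)
    (fun s hs => (hw s hs).continuousAt.continuousWithinAt)
    (fun s hs => (hw s (Ico_subset_Icc_self hs)).hasDerivWithinAt) hw0
    (fun s hs => hbound s (Ico_subset_Icc_self hs)) τ ⟨hτ0, le_rfl⟩
  have hgb : gronwallBound (‖u 0 - ub 0‖ + η * (c * K)) K ε (τ - 0) ≤
      (‖u 0 - ub 0‖ + η * (c * K) + ε) * Real.exp K := by
    rw [gronwallBound_of_K_ne_0 (by linarith), sub_zero]
    have he : Real.exp (K * τ) ≤ Real.exp K := Real.exp_le_exp.mpr (by nlinarith)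
    have hd0 : 0 ≤ ‖u 0 - ub 0‖ + η * (c * K) := by positivity
    have h1 : ε / K ≤ ε := div_le_self hε0 hK1
    have h2 : ε / K * (Real.exp (K * τ) - 1) ≤ ε * Real.exp K := by
      have : 0 ≤ Real.exp (K * τ) - 1 := by
        have := Real.one_le_exp (show 0 ≤ K * τ by positivity)
        linarith
      refine mul_le_mul h1 (by linarith) this hε0
    have h3 := mul_le_mul_of_nonneg_left he hd0
    linarith
  have := hdiff τ ⟨hτ0, le_rfl⟩
  linarith

/-- the averaging principle -/
theorem averaging (A : ℝ × V → V) (hA : ContDiff ℝ 1 A) (P : I → ℝ × V → V)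
    (hP : ∀ m, ContDiff ℝ 1 (P m)) (ub : ℝ → V) (hub : ∀ s, HasDerivAt ub (A (s, ub s)) s)
    (C : ℝ) (hC : 0 ≤ C) (η : ℕ → ℝ) (hη : ∀ n, 0 ≤ η n) (hηl : Tendsto η atTop (𝓝 0))
    (Ω Ω' : ℕ → I → ℝ → ℂ)
    (hΩ : ∀ n m s, HasDerivAt (Ω n m) (Ω' n m s) s) (hΩb : ∀ n m s, ‖Ω n m s‖ ≤ η n)
    (hΩ'b : ∀ n m, ∀ s ∈ Icc (0:ℝ) 1, ‖Ω' n m s‖ ≤ C) (u : ℕ → ℝ → V)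
    (g : ℕ → ℝ → ℂ) (hg : ∀ n, Continuous (g n))
    (hu : ∀ n s, g n s ≠ 0 → HasDerivAt (u n) (A (s, u n s) + ∑ m, Ω' n m s • P m (s, u n s)) s)
    (ρ : ℝ) (hρ : 0 < ρ) (hρ1 : ρ ≤ 1)
    (hlow : ∀ n, ∃ c > 0, ∀ s ∈ Icc (0:ℝ) 1, g n s ≠ 0 → ‖u n s - ub s‖ ≤ ρ → c ≤ ‖g n s‖)
    (h0 : Tendsto (fun n => u n 0) atTop (𝓝 (ub 0))) (hg0 : ∀ᶠ n in atTop, g n 0 ≠ 0) :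
    Tendsto (fun n => u n 1) atTop (𝓝 (ub 1)) ∧ ∀ᶠ n in atTop, g n 1 ≠ 0 := by
  have hubc : Continuous ub := continuous_iff_continuousAt.mpr fun s => (hub s).continuousAt
  obtain ⟨K, hK1, hK⟩ := tube_bound A hA P hP ub hubc
  set c0 : ℝ := (Fintype.card I : ℝ)
  set r : ℕ → ℝ := fun n => (‖u n 0 - ub 0‖ + η n * (c0 * K) +
      η n * (c0 * K * (K + (1 + (K + c0 * (C * K)))))) * Real.exp K + η n * (c0 * K) with hr
  have hrl : Tendsto r atTop (𝓝 0) := by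
    have h1 : Tendsto (fun n => ‖u n 0 - ub 0‖) atTop (𝓝 0) := by
      have := (h0.sub_const (ub 0)).norm
      simpa using this
    have := (((h1.add (hηl.mul_const (c0 * K))).add (hηl.mul_const
      (c0 * K * (K + (1 + (K + c0 * (C * K))))))).mul_const (Real.exp K)).add (hηl.mul_const (c0 * K))
    simpa using this
  have key : ∀ᶠ n in atTop, g n 1 ≠ 0 ∧ ‖u n 1 - ub 1‖ ≤ r n := by
    have e1 : ∀ᶠ n in atTop, r n < ρ := hrl.eventually_lt_const hρ
    have e2 : ∀ᶠ n in atTop, ‖u n 0 - ub 0‖ < ρ := by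
      have : Tendsto (fun n => ‖u n 0 - ub 0‖) atTop (𝓝 0) := by
        have := (h0.sub_const (ub 0)).norm
        simpa using this
      exact this.eventually_lt_const hρ
    filter_upwards [e1, e2, hg0] with n hn1 hn2 hn3
    obtain ⟨c, hc, hlow⟩ := hlow n
    let Q : ℝ → Prop := fun s => c ≤ ‖g n s‖ ∧ ‖u n s - ub s‖ ≤ ρ
    have Qne : ∀ s, Q s → g n s ≠ 0 := by
      intro s hs h
      have := hs.1
      rw [h, norm_zero] at this
      linarith
    let S : Set ℝ := {τ | ∀ s ∈ Icc 0 τ, Q s}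
    have hQ0 : Q 0 := ⟨hlow 0 ⟨le_rfl, zero_le_one⟩ hn3 hn2.le, hn2.le⟩
    have hap : ∀ τ ∈ Icc (0:ℝ) 1, τ ∈ S → ‖u n τ - ub τ‖ ≤ r n := by
      intro τ hτ hS
      exact apriori A hA P hP ub hub K hK1 hK C (η n) hC (hη n) (Ω n) (Ω' n) (hΩ n) (hΩb n) (hΩ'b n)
        (u n) τ hτ.2 hτ.1 (fun s hs => hu n s (Qne s (hS s hs))) (fun s hs => (hS s hs).2.trans hρ1)
    have hSub : Icc (0:ℝ) 1 ⊆ S := by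
      apply IsClosed.Icc_subset_of_forall_exists_gt
      · refine isClosed_of_closure_subset fun τ hτ => ?_
        have hτI : τ ∈ Icc (0:ℝ) 1 :=
          closure_minimal inter_subset_right isClosed_Icc hτ
        refine ⟨?_, hτI⟩
        have hlt : ∀ s, 0 ≤ s → s < τ → Q s := by
          intro s hs0 hs
          obtain ⟨τ', hτ'1, hτ'2⟩ := mem_closure_iff.mp hτ (Ioi s) isOpen_Ioi hs
          exact hτ'2.1 s ⟨hs0, le_of_lt hτ'1⟩
        intro s hs
        rcases eq_or_lt_of_le hs.2 with h | h
        · rcases eq_or_lt_of_le hs.1 with h' | h'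
          · rw [← h']; exact hQ0
          · have hev : ∀ᶠ t in 𝓝[<] s, Q t := by
              filter_upwards [Ioo_mem_nhdsLT h'] with t ht
              exact hlt t ht.1.le (ht.2.trans_le hs.2)
            have hgc : c ≤ ‖g n s‖ := by
              have hcont : Tendsto (fun t => ‖g n t‖) (𝓝[<] s) (𝓝 ‖g n s‖) :=
                ((hg n).norm.tendsto s).mono_left nhdsWithin_le_nhds
              exact ge_of_tendsto hcont (hev.mono fun t ht => ht.1)
            refine ⟨hgc, ?_⟩
            have hgne : g n s ≠ 0 := by
              intro h; rw [h, norm_zero] at hgc; linarith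
            have hcont : Tendsto (fun t => ‖u n t - ub t‖) (𝓝[<] s) (𝓝 ‖u n s - ub s‖) :=
              (((hu n s hgne).continuousAt.sub hubc.continuousAt).norm.tendsto).mono_left
                nhdsWithin_le_nhds
            exact le_of_tendsto hcont (hev.mono fun t ht => ht.2)
        · exact hlt s hs.1 h
      · intro s hs
        have : s = 0 := le_antisymm hs.2 hs.1
        rw [this]; exact hQ0
      · rintro x ⟨hxS, hx⟩ y hy
        have hxQ : Q x := hxS x ⟨hx.1, le_rfl⟩
        have hgne := Qne x hxQ
        have h1 : ‖u n x - ub x‖ < ρ := (hap x ⟨hx.1, hx.2.le⟩ hxS).trans_lt hn1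
        have ev1 : ∀ᶠ t in 𝓝 x, g n t ≠ 0 := (hg n).continuousAt.eventually_ne hgne
        have ev2 : ∀ᶠ t in 𝓝 x, ‖u n t - ub t‖ < ρ :=
          (((hu n x hgne).continuousAt.sub hubc.continuousAt).norm).eventually_lt_const h1
        obtain ⟨ε, hε, hball⟩ := Metric.eventually_nhds_iff.mp (ev1.and ev2)
        have hy' : x < y := hy
        refine ⟨min (min y 1) (x + ε / 2), ?_, ?_, ?_⟩
        · intro s hs
          by_cases hsx : s ≤ x
          · exact hxS s ⟨hs.1, hsx⟩
          · push Not at hsx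
            have hs1 : s ≤ 1 := hs.2.trans ((min_le_left _ _).trans (min_le_right _ _))
            have hs2 : s ≤ x + ε / 2 := hs.2.trans (min_le_right _ _)
            have hb := hball (show dist s x < ε by
              rw [Real.dist_eq, abs_of_pos (by linarith)]; linarith)
            exact ⟨hlow s ⟨hs.1, hs1⟩ hb.1 hb.2.le, hb.2.le⟩
        · exact lt_min (lt_min hy' hx.2) (by linarith)
        · exact (min_le_left _ _).trans (min_le_left _ _)
    have h1S := hSub (show (1:ℝ) ∈ Icc (0:ℝ) 1 from ⟨zero_le_one, le_rfl⟩)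
    exact ⟨Qne 1 (h1S 1 ⟨zero_le_one, le_rfl⟩), hap 1 ⟨zero_le_one, le_rfl⟩ h1S⟩
  refine ⟨?_, key.mono fun n h => h.1⟩
  rw [tendsto_iff_norm_sub_tendsto_zero]
  exact squeeze_zero' (Eventually.of_forall fun n => norm_nonneg _) (key.mono fun n h => h.2) hrl

end avg
end Fermi
end

noncomputable section
namespace Fermi
open Matrix Filter Topology Set

abbrev VV := (Fin 4 → ℂ) × (Fin 4 → ℂ) × (Fin 4 → ℂ) × (Fin 4 → ℂ) × ℂ × ℂ

def WW (θ : Fin 4 → ℝ) (k i : Fin 4) : ℂ := zz θ i / (zz θ k - zz θ i)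
def RR (θ : Fin 4 → ℝ) (k i : Fin 4) : ℂ := zz θ i * zz θ k / (zz θ k - zz θ i) ^ 2

def Afun (θ δ : ℝ → Fin 4 → ℝ) (p : ℝ × VV) : VV :=
  (fun k => -2 * Complex.I * δ p.1 k * p.2.1 k
      + ∑ i, ((δ p.1 i : ℂ) - δ p.1 k) * (2 * WW (θ p.1) k i * (p.2.2.2.1 i * p.2.1 k)),
   fun k => -2 * Complex.I * δ p.1 k * p.2.2.1 k + 2 * (∑ i, (δ p.1 i : ℂ) * p.2.2.2.1 i) * p.2.2.1 k
      + ∑ i, ((δ p.1 k : ℂ) - δ p.1 i) * (2 * WW (θ p.1) i k * (-(p.2.2.2.1 i * p.2.2.1 k))),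
   0,
   fun k => ∑ i, ((δ p.1 i : ℂ) - δ p.1 k) * (RR (θ p.1) k i * (2 * p.2.2.2.1 i * p.2.2.2.1 k)),
   (∑ i, (δ p.1 i : ℂ) * p.2.2.2.2.1 i) * p.2.2.2.2.2.1,
   -(∑ i, (δ p.1 i : ℂ) * p.2.2.2.1 i) * p.2.2.2.2.2.2)

def Pfun (θ : ℝ → Fin 4 → ℝ) (a : Fin 4 × Fin 4) (p : ℝ × VV) : VV :=
  (fun m => if m = a.1 then -(2 * WW (θ p.1) a.1 a.2 * (p.2.2.2.1 a.1 * p.2.1 a.2)) else 0,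
   fun m => if m = a.2 then 2 * WW (θ p.1) a.1 a.2 * (p.2.2.2.1 a.2 * p.2.2.1 a.1) else 0,
   fun m => (if m = a.1 then -(WW (θ p.1) a.1 a.2 * (p.2.2.1 a.1 * p.2.1 a.2)) else 0)
     + (if m = a.2 then (WW (θ p.1) a.1 a.2 * (p.2.2.1 a.1 * p.2.1 a.2)) else 0),
   fun m => (if m = a.1 then -(RR (θ p.1) a.1 a.2 * (p.2.2.1 a.1 * p.2.1 a.2)) else 0)
     + (if m = a.2 then (RR (θ p.1) a.1 a.2 * (p.2.2.1 a.1 * p.2.1 a.2)) else 0),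
   0, 0)

def uu (N : ℕ) (θ : Fin 4 → ℝ) : VV := (EE N θ, JJ N θ, hh N θ, qq N θ, dd N θ, bb N θ)

section
variable (θ δ : ℝ → Fin 4 → ℝ) (hθ : ∀ s k, HasDerivAt (fun t => θ t k) (δ s k) s)
  (hδ : ∀ k, ContDiff ℝ 1 (fun s => δ s k)) 
  (hz : ∀ s k i, k ≠ i → zz (θ s) k ≠ zz (θ s) i)

include hθ in
lemma d_om0 (N : ℕ) (k i) (s : ℝ) : HasDerivAt (fun t => Complex.I / ((N:ℂ)+1) * om N (θ t) k i)
    ((((δ s i : ℝ) : ℂ) - δ s k) * om N (θ s) k i) s := by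
  have := ((d_zz_pow θ (δ s) s (hθ s) k (N+1)).div (d_zz_pow θ (δ s) s (hθ s) i (N+1))
    (pow_ne_zero _ (zz_ne _ _))).const_mul (Complex.I / ((N:ℂ)+1))
  refine this.congr_deriv ?_
  unfold om
  have h1 := zz_ne (θ s) i
  have := nat_ne N
  push_cast
  field_simp
  linear_combination (zz (θ s) k) ^ (N+1) * (δ s k - δ s i) * Complex.I_sq

lemma norm_zz (θ k) : ‖zz θ k‖ = 1 := by
  rw [zz, mul_comm]; exact Complex.norm_exp_ofReal_mul_I _

lemma norm_om (N θ k i) : ‖om N θ k i‖ = 1 := by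
  simp [om, norm_zz]

lemma sum_A1 (f : Fin 4 → Fin 4 → ℂ) (m : Fin 4) :
    ∑ a : Fin 4 × Fin 4, (if m = a.1 then f a.1 a.2 else 0) = ∑ i, f m i := by
  rw [Fintype.sum_prod_type]
  rw [Finset.sum_eq_single m] <;> simp +contextual [eq_comm]
lemma sum_A2 (f : Fin 4 → Fin 4 → ℂ) (m : Fin 4) :
    ∑ a : Fin 4 × Fin 4, (if m = a.2 then f a.1 a.2 else 0) = ∑ i, f i m := by
  rw [Fintype.sum_prod_type_right]
  rw [Finset.sum_eq_single m] <;> simp +contextual [eq_comm]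

include hθ hz in
lemma d_uu (N : ℕ) (s : ℝ) (hA : (AA (θ s) (N+1)).det ≠ 0) (hb : bb N (θ s) ≠ 0) :
    HasDerivAt (fun t => uu N (θ t)) (Afun θ δ (s, uu N (θ s)) +
      ∑ a : Fin 4 × Fin 4, ((((δ s a.2 : ℝ) : ℂ) - δ s a.1) * om N (θ s) a.1 a.2) •
        Pfun θ a (s, uu N (θ s))) s := by
  have h1 : HasDerivAt (fun t => EE N (θ t)) _ s :=
    hasDerivAt_pi.mpr fun k => d_EE N θ (δ s) s (hθ s) hA hb (hz s) k
  have h2 : HasDerivAt (fun t => JJ N (θ t)) _ s :=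
    hasDerivAt_pi.mpr fun k => d_JJ N θ (δ s) s (hθ s) hA hb (hz s) k
  have h3 : HasDerivAt (fun t => hh N (θ t)) _ s :=
    hasDerivAt_pi.mpr fun k => d_hh N θ (δ s) s (hθ s) hA hb (hz s) k
  have h4 : HasDerivAt (fun t => qq N (θ t)) _ s :=
    hasDerivAt_pi.mpr fun k => d_qq N θ (δ s) s (hθ s) hA hb (hz s) k
  have h5 := d_dd N θ (δ s) s (hθ s) hA 
  have h6 := d_bb' N θ (δ s) s (hθ s) hA hb
  refine (h1.prodMk (h2.prodMk (h3.prodMk (h4.prodMk (h5.prodMk h6))))).congr_deriv ?_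
  refine Prod.ext ?_ (Prod.ext ?_ (Prod.ext ?_ (Prod.ext ?_ (Prod.ext ?_ ?_))))
  · ext m
    simp only [Afun, Pfun, uu, Prod.fst_add, Prod.snd_add, Prod.fst_sum, Prod.snd_sum, Prod.smul_fst,
      Prod.smul_snd, Pi.add_apply, Finset.sum_apply, Pi.smul_apply, smul_eq_mul, mul_ite, mul_zero]
    rw [sum_A1 (fun k i => ((((δ s i : ℝ) : ℂ) - δ s k) * om N (θ s) k i) *
      -(2 * WW (θ s) k i * (hh N (θ s) k * EE N (θ s) i)))]
    rw [add_assoc, ← Finset.sum_add_distrib]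
    congr 1
    refine Finset.sum_congr rfl fun i _ => ?_
    unfold WW; ring
  · ext m
    simp only [Afun, Pfun, uu, Prod.fst_add, Prod.snd_add, Prod.fst_sum, Prod.snd_sum, Prod.smul_fst,
      Prod.smul_snd, Pi.add_apply, Finset.sum_apply, Pi.smul_apply, smul_eq_mul, mul_ite, mul_zero]
    rw [sum_A2 (fun k i => ((((δ s i : ℝ) : ℂ) - δ s k) * om N (θ s) k i) *
      (2 * WW (θ s) k i * (hh N (θ s) i * JJ N (θ s) k)))]
    rw [add_assoc, add_assoc, add_assoc, ← Finset.sum_add_distrib]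
    congr 2
    refine Finset.sum_congr rfl fun i _ => ?_
    unfold WW; ring
  · ext m
    simp only [Afun, Pfun, uu, Prod.fst_add, Prod.snd_add, Prod.fst_sum, Prod.snd_sum, Prod.smul_fst,
      Prod.smul_snd, Pi.add_apply, Finset.sum_apply, Pi.smul_apply, smul_eq_mul, mul_ite, mul_zero,
      mul_add, Finset.sum_add_distrib, Pi.zero_apply, zero_add]
    rw [sum_A1 (fun k i => ((((δ s i : ℝ) : ℂ) - δ s k) * om N (θ s) k i) *
      -(WW (θ s) k i * (JJ N (θ s) k * EE N (θ s) i))),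
      sum_A2 (fun k i => ((((δ s i : ℝ) : ℂ) - δ s k) * om N (θ s) k i) *
      (WW (θ s) k i * (JJ N (θ s) k * EE N (θ s) i)))]
    rw [← Finset.sum_add_distrib]
    refine Finset.sum_congr rfl fun i _ => ?_
    unfold WW
    rw [← neg_sub (zz (θ s) m) (zz (θ s) i), div_neg, div_neg]; ring
  · ext m
    simp only [Afun, Pfun, uu, Prod.fst_add, Prod.snd_add, Prod.fst_sum, Prod.snd_sum, Prod.smul_fst,
      Prod.smul_snd, Pi.add_apply, Finset.sum_apply, Pi.smul_apply, smul_eq_mul, mul_ite, mul_zero,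
      mul_add, Finset.sum_add_distrib, Pi.zero_apply]
    rw [sum_A1 (fun k i => ((((δ s i : ℝ) : ℂ) - δ s k) * om N (θ s) k i) *
      -(RR (θ s) k i * (JJ N (θ s) k * EE N (θ s) i))),
      sum_A2 (fun k i => ((((δ s i : ℝ) : ℂ) - δ s k) * om N (θ s) k i) *
      (RR (θ s) k i * (JJ N (θ s) k * EE N (θ s) i)))]
    rw [← Finset.sum_add_distrib, ← Finset.sum_add_distrib]
    refine Finset.sum_congr rfl fun i _ => ?_
    unfold RR
    rw [show (zz (θ s) i - zz (θ s) m) ^ 2 = (zz (θ s) m - zz (θ s) i) ^ 2 by ring]; ring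
  · simp [Afun, Pfun, uu, Prod.fst_sum, Prod.snd_sum]
  · simp [Afun, Pfun, uu, Prod.fst_sum, Prod.snd_sum]

lemma contDiff_theta (hθ : ∀ s k, HasDerivAt (fun t => θ t k) (δ s k) s)
    (hδ : ∀ k, ContDiff ℝ 1 (fun s => δ s k)) (k) : ContDiff ℝ 1 (fun s => θ s k) := by
  rw [contDiff_one_iff_deriv]
  refine ⟨fun s => (hθ s k).differentiableAt, ?_⟩
  have : deriv (fun s => θ s k) = fun s => δ s k := by ext s; exact (hθ s k).deriv
  rw [this]; exact (hδ k).continuous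

lemma cd_ofReal {E : Type*} [NormedAddCommGroup E] [NormedSpace ℝ E] {f : E → ℝ}
    (h : ContDiff ℝ 1 f) : ContDiff ℝ 1 (fun x => (f x : ℂ)) :=
  Complex.ofRealCLM.contDiff.comp h

include hθ hδ in
lemma contDiff_zz (k) : ContDiff ℝ 1 (fun s => zz (θ s) k) := by
  unfold zz
  exact (contDiff_const.mul (cd_ofReal (contDiff_theta θ δ hθ hδ k))).cexp

include hθ hδ hz in
lemma contDiff_WW (k i) : ContDiff ℝ 1 (fun s => WW (θ s) k i) := by
  unfold WW
  by_cases h : k = i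
  · subst h; simp only [sub_self, div_zero]; exact contDiff_const
  · simp only [div_eq_mul_inv]
    exact (contDiff_zz θ δ hθ hδ i).mul (ContDiff.inv
      ((contDiff_zz θ δ hθ hδ k).sub (contDiff_zz θ δ hθ hδ i)) fun s => sub_ne_zero.mpr (hz s k i h))

include hθ hδ hz in
lemma contDiff_RR (k i) : ContDiff ℝ 1 (fun s => RR (θ s) k i) := by
  unfold RR
  by_cases h : k = i
  · subst h; simp only [sub_self, div_zero, ne_eq, OfNat.ofNat_ne_zero, not_false_eq_true, zero_pow]; exact contDiff_const
  · simp only [div_eq_mul_inv]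
    exact ((contDiff_zz θ δ hθ hδ i).mul (contDiff_zz θ δ hθ hδ k)).mul (ContDiff.inv
      (((contDiff_zz θ δ hθ hδ k).sub (contDiff_zz θ δ hθ hδ i)).pow 2)
        fun s => pow_ne_zero _ (sub_ne_zero.mpr (hz s k i h)))

include hθ hδ hz in
lemma contDiff_Afun : ContDiff ℝ 1 (Afun θ δ) := by
  have hW : ∀ k i, ContDiff ℝ 1 (fun p : ℝ × VV => WW (θ p.1) k i) := fun k i =>
    (contDiff_WW θ δ hθ hδ hz k i).comp contDiff_fst
  have hR : ∀ k i, ContDiff ℝ 1 (fun p : ℝ × VV => RR (θ p.1) k i) := fun k i =>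
    (contDiff_RR θ δ hθ hδ hz k i).comp contDiff_fst
  have hD : ∀ k, ContDiff ℝ 1 (fun p : ℝ × VV => ((δ p.1 k : ℝ) : ℂ)) := fun k =>
    (cd_ofReal (hδ k)).comp contDiff_fst
  unfold Afun
  refine ContDiff.prodMk ?_ (ContDiff.prodMk ?_ (ContDiff.prodMk ?_ (ContDiff.prodMk ?_
    (ContDiff.prodMk ?_ ?_))))
  · rw [contDiff_pi]; intro k; fun_prop
  · rw [contDiff_pi]; intro k; fun_prop
  · fun_prop
  · rw [contDiff_pi]; intro k; fun_prop
  · fun_prop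
  · fun_prop

include hθ hδ hz in
lemma contDiff_Pfun (a) : ContDiff ℝ 1 (Pfun θ a) := by
  have hW : ∀ k i, ContDiff ℝ 1 (fun p : ℝ × VV => WW (θ p.1) k i) := fun k i =>
    (contDiff_WW θ δ hθ hδ hz k i).comp contDiff_fst
  have hR : ∀ k i, ContDiff ℝ 1 (fun p : ℝ × VV => RR (θ p.1) k i) := fun k i =>
    (contDiff_RR θ δ hθ hδ hz k i).comp contDiff_fst
  unfold Pfun
  refine ContDiff.prodMk ?_ (ContDiff.prodMk ?_ (ContDiff.prodMk ?_ (ContDiff.prodMk ?_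
    (ContDiff.prodMk ?_ ?_))))
  · rw [contDiff_pi]; intro k; split_ifs <;> fun_prop
  · rw [contDiff_pi]; intro k; split_ifs <;> fun_prop
  · rw [contDiff_pi]; intro k; split_ifs <;> fun_prop
  · rw [contDiff_pi]; intro k; split_ifs <;> fun_prop
  · fun_prop
  · fun_prop

lemma bb_eq (N : ℕ) (θ : Fin 4 → ℝ) (hA : (AA θ (N+1)).det ≠ 0) :
    (AA θ N).det = bb N θ * (AA θ (N+1)).det := by
  rw [bb, bil_ee, Matrix.inv_def, Matrix.smul_apply, Matrix.adjugate_fin_succ_eq_det_submatrix]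
  simp only [Ring.inverse_eq_inv', smul_eq_mul]
  have : (AA θ (N+1)).submatrix (Fin.succAbove 0) (Fin.succAbove 0) = AA θ N := by
    ext i j
    simp [AA, toep]
  rw [this]
  field_simp
  simp

lemma cont_det (N : ℕ) (hθ : ∀ s k, HasDerivAt (fun t => θ t k) (δ s k) s) :
    Continuous (fun s => (AA (θ s) N).det) := by
  refine Continuous.matrix_det (continuous_matrix fun i j => ?_)
  exact continuous_iff_continuousAt.mpr fun s => (d_AA N θ (δ s) s (hθ s) i j).continuousAt

include hθ hδ hz in
theorem path_limit (ub : ℝ → VV) (hub : ∀ s, HasDerivAt ub (Afun θ δ (s, ub s)) s)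
    (hd : ∀ s, (ub s).2.2.2.2.1 ≠ 0) (hb : ∀ s, (ub s).2.2.2.2.2 ≠ 0)
    (h0 : Tendsto (fun N => uu N (θ 0)) atTop (𝓝 (ub 0)))
    (hg0 : ∀ N, (AA (θ 0) N).det ≠ 0) :
    Tendsto (fun N => uu N (θ 1)) atTop (𝓝 (ub 1)) ∧ ∀ᶠ N in atTop, (AA (θ 1) (N+1)).det ≠ 0 := by
  have hubc : Continuous ub := continuous_iff_continuousAt.mpr fun s => (hub s).continuousAt
  obtain ⟨C, hC⟩ : ∃ C, ∀ s ∈ Icc (0:ℝ) 1, ∑ k, |δ s k| ≤ C := by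
    have : Continuous fun s => ∑ k, |δ s k| :=
      continuous_finsetSum _ fun k _ => (hδ k).continuous.abs
    obtain ⟨C, hC⟩ := (isCompact_Icc (a := (0:ℝ)) (b := 1)).bddAbove_image this.continuousOn
    exact ⟨C, fun s hs => hC (mem_image_of_mem _ hs)⟩
  have hC0 : 0 ≤ C := le_trans (by positivity) (hC 0 (by simp))
  obtain ⟨m, hm0, hm⟩ : ∃ m > 0, ∀ s ∈ Icc (0:ℝ) 1, m ≤ ‖(ub s).2.2.2.2.1‖ ∧ m ≤ ‖(ub s).2.2.2.2.2‖ := by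
    have c1 : Continuous fun s => min ‖(ub s).2.2.2.2.1‖ ‖(ub s).2.2.2.2.2‖ := by fun_prop
    obtain ⟨x, hx, hmin⟩ := (isCompact_Icc (a := (0:ℝ)) (b := 1)).exists_isMinOn ⟨0, by simp⟩ c1.continuousOn
    refine ⟨_, lt_min (norm_pos_iff.mpr (hd x)) (norm_pos_iff.mpr (hb x)), fun s hs => ?_⟩
    exact le_min_iff.mp (hmin hs)
  have key := averaging (Afun θ δ) (contDiff_Afun θ δ hθ hδ hz) (Pfun θ)
    (contDiff_Pfun θ δ hθ hδ hz) ub hub (2 * C) (by positivity) (fun n : ℕ => 1 / ((n:ℝ)+1))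
    (fun n => by positivity) tendsto_one_div_add_atTop_nhds_zero_nat
    (fun n a s => Complex.I / ((n:ℂ)+1) * om n (θ s) a.1 a.2)
    (fun n a s => ((((δ s a.2 : ℝ) : ℂ) - δ s a.1) * om n (θ s) a.1 a.2))
    (fun n a s => d_om0 θ δ hθ n a.1 a.2 s)
    (fun n a s => by
      rw [norm_mul, norm_om, norm_div, Complex.norm_I]
      have : ‖((n:ℂ)+1)‖ = (n:ℝ)+1 := by
        have := Complex.norm_natCast (n+1)
        push_cast at this; exact this
      rw [this]; simp)
    (fun n a s hs => by
      rw [norm_mul, norm_om, mul_one, ← Complex.ofReal_sub, Complex.norm_real, Real.norm_eq_abs]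
      have e : ∀ k, |δ s k| ≤ C := fun k => le_trans
        (Finset.single_le_sum (f := fun k => |δ s k|) (fun _ _ => abs_nonneg _) (Finset.mem_univ k)) (hC s hs)
      linarith [abs_sub (δ s a.2) (δ s a.1), e a.1, e a.2])
    (fun n s => uu n (θ s))
    (fun n s => (AA (θ s) (n+1)).det * (AA (θ s) n).det)
    (fun n => (cont_det θ δ (n+1) hθ).mul (cont_det θ δ n hθ))
    (fun n s hg => by
      have h1 := left_ne_zero_of_mul hg
      have h2 := right_ne_zero_of_mul hg
      rw [bb_eq n (θ s) h1] at h2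
      exact d_uu θ δ hθ hz n s h1 (left_ne_zero_of_mul h2))
    (min 1 (m/2)) (by positivity) (min_le_left _ _)
    (fun n => by
      refine ⟨(m/2/((n:ℝ)+1))^2 * (m/2), by positivity, fun s hs hg hu => ?_⟩
      have h1 := left_ne_zero_of_mul hg
      obtain ⟨m1, m2⟩ := hm s hs
      have hu2 := hu.trans (min_le_right _ _)
      have e1 : ‖dd n (θ s) - (ub s).2.2.2.2.1‖ ≤ m/2 := by
        refine le_trans ?_ hu2
        refine le_trans ?_ (norm_snd_le _); refine le_trans ?_ (norm_snd_le _)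
        refine le_trans ?_ (norm_snd_le _); refine le_trans ?_ (norm_snd_le _)
        exact norm_fst_le (E := ℂ) (F := ℂ) ((uu n (θ s) - ub s).2.2.2.2)
      have e2 : ‖bb n (θ s) - (ub s).2.2.2.2.2‖ ≤ m/2 := by
        refine le_trans ?_ hu2
        refine le_trans ?_ (norm_snd_le _); refine le_trans ?_ (norm_snd_le _)
        refine le_trans ?_ (norm_snd_le _); refine le_trans ?_ (norm_snd_le _)
        exact norm_snd_le (E := ℂ) (F := ℂ) ((uu n (θ s) - ub s).2.2.2.2)
      have f1 : m/2 ≤ ‖dd n (θ s)‖ := by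
        have := norm_sub_norm_le ((ub s).2.2.2.2.1) (dd n (θ s))
        rw [norm_sub_rev] at this
        linarith
      have f2 : m/2 ≤ ‖bb n (θ s)‖ := by
        have := norm_sub_norm_le ((ub s).2.2.2.2.2) (bb n (θ s))
        rw [norm_sub_rev] at this
        linarith
      have f3 : ‖dd n (θ s)‖ = ((n:ℝ)+1) * ‖(AA (θ s) (n+1)).det‖ := by
        have : ‖((n:ℂ)+1)‖ = (n:ℝ)+1 := by
          have := Complex.norm_natCast (n+1)
          push_cast at this; exact this
        rw [dd, norm_mul, norm_mul, this]
        have : -Complex.I * ((n : ℂ) + 1) * (∑ k, (θ s k : ℂ)) / 2 =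
          ((-((n:ℝ)+1) * (∑ k, θ s k) / 2 : ℝ) : ℂ) * Complex.I := by push_cast; ring
        rw [this, Complex.norm_exp_ofReal_mul_I, mul_one]
      have f4 : m/2/((n:ℝ)+1) ≤ ‖(AA (θ s) (n+1)).det‖ := by
        rw [div_le_iff₀ (by positivity)]; linarith
      rw [bb_eq n (θ s) h1, norm_mul, norm_mul]
      calc (m/2/((n:ℝ)+1))^2 * (m/2) ≤ ‖(AA (θ s) (n+1)).det‖^2 * ‖bb n (θ s)‖ := by gcongr
        _ = _ := by ring)
    h0 (Eventually.of_forall fun n => mul_ne_zero (hg0 _) (hg0 _))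
  exact ⟨key.1, key.2.mono fun n hn => left_ne_zero_of_mul hn⟩
end
end Fermi
end

noncomputable section
namespace Fermi
open Matrix Filter Topology Set

def YY (θ : Fin 4 → ℝ) (k j : Fin 4) : ℂ := (zz θ k + zz θ j) / (zz θ k - zz θ j)
def Eb (θ : Fin 4 → ℝ) (k : Fin 4) : ℂ :=
  -(sg k) * zz θ k * ∏ j, (if j = k then 1 else (zz θ k - zz θ j)⁻¹)
def qb (θ : Fin 4 → ℝ) (k : Fin 4) : ℂ := ∑ j, Complex.I / 4 * YY θ k j
def SS (θ : Fin 4 → ℝ) (p : Fin 4 × Fin 4) : ℝ := 2 * Real.sin ((θ p.2 - θ p.1) / 2)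
def pairs : Finset (Fin 4 × Fin 4) := Finset.univ.filter (fun p => p.1 < p.2)
def db (θ : Fin 4 → ℝ) : ℂ := ∏ p ∈ pairs, ((Real.sqrt (SS θ p) : ℝ) : ℂ)
def bbar (θ : Fin 4 → ℝ) : ℂ := Complex.exp (-Complex.I * (∑ k, (θ k : ℂ)) / 2)
def uba (c4 : ℂ) (θ : Fin 4 → ℝ) : VV :=
  (Eb θ, fun k => (-4 * Eb θ k)⁻¹, fun _ => Complex.I / 2, qb θ, c4 * db θ, bbar θ)

lemma zz_half (θ : Fin 4 → ℝ) (i j : Fin 4) :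
    zz θ j = Complex.exp (Complex.I * ((θ i + θ j : ℝ) : ℂ) / 2) *
      (Complex.cos (((θ j - θ i) / 2 : ℝ) : ℂ) + Complex.sin (((θ j - θ i) / 2 : ℝ) : ℂ) * Complex.I) ∧
    zz θ i = Complex.exp (Complex.I * ((θ i + θ j : ℝ) : ℂ) / 2) *
      (Complex.cos (((θ j - θ i) / 2 : ℝ) : ℂ) - Complex.sin (((θ j - θ i) / 2 : ℝ) : ℂ) * Complex.I) := by
  constructor
  · rw [← Complex.exp_mul_I, ← Complex.exp_add, zz]; congr 1; push_cast; ring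
  · have := Complex.exp_mul_I (-(((θ j - θ i) / 2 : ℝ) : ℂ))
    rw [Complex.cos_neg, Complex.sin_neg, neg_mul (Complex.sin _) Complex.I, ← sub_eq_add_neg] at this
    rw [← this, ← Complex.exp_add, zz]; congr 1; push_cast; ring

lemma zz_sub (θ : Fin 4 → ℝ) (i j : Fin 4) : zz θ j - zz θ i =
    Complex.I * (SS θ (i,j) : ℂ) * Complex.exp (Complex.I * ((θ i + θ j : ℝ) : ℂ) / 2) := by
  obtain ⟨h1, h2⟩ := zz_half θ i j
  rw [h1, h2, SS]; push_cast; ring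

def ordered (θ : Fin 4 → ℝ) : Prop :=
  θ 0 < θ 1 ∧ θ 1 < θ 2 ∧ θ 2 < θ 3 ∧ θ 3 < θ 0 + 2 * Real.pi

lemma SS_pos (θ : Fin 4 → ℝ) (h : ordered θ) (i j : Fin 4) (hij : i < j) : 0 < SS θ (i, j) := by
  obtain ⟨h1, h2, h3, h4⟩ := h
  have : θ i < θ j ∧ θ j < θ i + 2 * Real.pi := by
    fin_cases i <;> fin_cases j <;> simp at hij <;> simp <;> constructor <;> linarith
  rw [SS]
  have := Real.sin_pos_of_pos_of_lt_pi (x := (θ j - θ i)/2) (by linarith) (by linarith)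
  simpa using this

lemma ordered_ne (θ : Fin 4 → ℝ) (h : ordered θ) (k i : Fin 4) (hki : k ≠ i) : zz θ k ≠ zz θ i := by
  wlog hlt : k < i generalizing k i
  · exact (this i k hki.symm (lt_of_le_of_ne (not_lt.mp hlt) hki.symm)).symm
  have h1 := zz_sub θ k i
  have h2 := (SS_pos θ h k i hlt).ne'
  have : zz θ i - zz θ k ≠ 0 := by
    rw [h1]
    exact mul_ne_zero (mul_ne_zero Complex.I_ne_zero (by exact_mod_cast h2)) (Complex.exp_ne_zero _)
  exact (sub_ne_zero.mp this).symm

lemma hasLog_prod {ι : Type*} [DecidableEq ι] (S : Finset ι) (f : ι → ℝ → ℂ) (a : ι → ℂ) (s : ℝ)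
    (h : ∀ j ∈ S, HasDerivAt (f j) (a j * f j s) s) :
    HasDerivAt (fun t => ∏ j ∈ S, f j t) ((∑ j ∈ S, a j) * ∏ j ∈ S, f j s) s := by
  induction S using Finset.induction_on with
  | empty => simpa using hasDerivAt_const s (1:ℂ)
  | insert x S hx ih =>
    simp only [Finset.prod_insert hx, Finset.sum_insert hx]
    refine ((h x (Finset.mem_insert_self _ _)).mul
      (ih fun j hj => h j (Finset.mem_insert_of_mem hj))).congr_deriv ?_
    ring

lemma hasLog_inv (f : ℝ → ℂ) (a : ℂ) (s : ℝ) (h : HasDerivAt f (a * f s) s) (hf : f s ≠ 0) :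
    HasDerivAt (fun t => (f t)⁻¹) (-a * (f s)⁻¹) s := by
  refine (h.inv hf).congr_deriv ?_
  field_simp

section
variable (θ δ : ℝ → Fin 4 → ℝ) (hθ : ∀ s k, HasDerivAt (fun t => θ t k) (δ s k) s)
  (ho : ∀ s, ordered (θ s)) (s : ℝ)

include hθ ho in
lemma d_Eb (k) : HasDerivAt (fun t => Eb (θ t) k) ((-2 * Complex.I * δ s k +
    Complex.I * ∑ i, ((δ s i : ℂ) - δ s k) * WW (θ s) k i) * Eb (θ s) k) s := by
  have hp := hasLog_prod Finset.univ
    (fun j t => (if j = k then 1 else (zz (θ t) k - zz (θ t) j)⁻¹ : ℂ))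
    (fun j => Complex.I * ((δ s j : ℂ) - δ s k) * WW (θ s) k j - Complex.I * δ s k *
      (if j = k then 0 else 1)) s (fun j _ => by
      by_cases hj : j = k
      · subst hj; simpa using hasDerivAt_const s (1:ℂ)
      · simp only [hj, if_false]
        have hne : zz (θ s) k - zz (θ s) j ≠ 0 :=
          sub_ne_zero.mpr (ordered_ne _ (ho s) k j (Ne.symm hj))
        have := hasLog_inv (fun t => zz (θ t) k - zz (θ t) j)
          (-(Complex.I * ((δ s j : ℂ) - δ s k) * WW (θ s) k j - Complex.I * δ s k)) s
          (((d_zz θ (δ s) s (hθ s) k).sub (d_zz θ (δ s) s (hθ s) j)).congr_deriv (by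
            unfold WW; field_simp; ring)) hne
        simpa using this)
  have := ((d_zz θ (δ s) s (hθ s) k).const_mul (-(sg k))).mul hp
  refine this.congr_deriv ?_
  have e : ∑ j, (Complex.I * ((δ s j : ℂ) - δ s k) * WW (θ s) k j - Complex.I * δ s k *
      (if j = k then 0 else 1)) = Complex.I * ∑ i, ((δ s i : ℂ) - δ s k) * WW (θ s) k i
      - 3 * Complex.I * δ s k := by
    rw [Finset.sum_sub_distrib, Finset.mul_sum, ← Finset.mul_sum]
    have : (∑ i : Fin 4, if i = k then (0:ℂ) else 1) = 3 := by
      fin_cases k <;> simp [Fin.sum_univ_four] <;> norm_num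
    rw [this]
    congr 1
    · exact Finset.sum_congr rfl fun i _ => by ring
    · ring
  rw [e]
  unfold Eb
  ring

lemma Eb_ne (h : ordered (θ s)) (k) : Eb (θ s) k ≠ 0 := by
  refine mul_ne_zero (mul_ne_zero (neg_ne_zero.mpr (sg_ne k)) (zz_ne _ _))
    (Finset.prod_ne_zero_iff.mpr fun j _ => ?_)
  split_ifs with hj
  · exact one_ne_zero
  · exact inv_ne_zero (sub_ne_zero.mpr (ordered_ne _ h k j (Ne.symm hj)))

lemma WW_swap (h : ordered (θ s)) (k i) (hki : k ≠ i): WW (θ s) i k = -1 - WW (θ s) k i := by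
  have h1 : zz (θ s) k - zz (θ s) i ≠ 0 := sub_ne_zero.mpr (ordered_ne _ h k i hki)
  have h2 : zz (θ s) i - zz (θ s) k ≠ 0 := sub_ne_zero.mpr (ordered_ne _ h i k hki.symm)
  unfold WW; field_simp; ring

include hθ ho in
lemma d_qb (k) : HasDerivAt (fun t => qb (θ t) k)
    (∑ i, ((δ s i : ℂ) - δ s k) * (RR (θ s) k i * (2 * (Complex.I/2) * (Complex.I/2)))) s := by
  unfold qb
  refine HasDerivAt.fun_sum fun j _ => ?_
  by_cases hj : k = j
  · subst hj
    simp only [YY, sub_self, div_zero, mul_zero, zero_mul]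
    exact hasDerivAt_const _ _
  · have hne : zz (θ s) k - zz (θ s) j ≠ 0 := sub_ne_zero.mpr (ordered_ne _ (ho s) k j hj)
    unfold YY RR
    have := (((d_zz θ (δ s) s (hθ s) k).add (d_zz θ (δ s) s (hθ s) j)).div
      ((d_zz θ (δ s) s (hθ s) k).sub (d_zz θ (δ s) s (hθ s) j)) hne).const_mul (Complex.I/4)
    refine this.congr_deriv ?_
    simp only [Pi.add_apply, Pi.sub_apply]
    field_simp
    ring

lemma YY_eq (θ : Fin 4 → ℝ) (h : ordered θ) (i j : Fin 4) (hij : i < j) :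
    Complex.I / 4 * YY θ j i = ((2 * Real.cos ((θ j - θ i)/2) / (4 * SS θ (i,j)) : ℝ) : ℂ) := by
  have hs := (SS_pos θ h i j hij).ne'
  have hs' : (SS θ (i,j) : ℂ) ≠ 0 := by exact_mod_cast hs
  have e1 := zz_sub θ i j
  have e2 : zz θ j + zz θ i = 2 * Complex.cos (((θ j - θ i) / 2 : ℝ) : ℂ) * Complex.exp (Complex.I * ((θ i + θ j : ℝ) : ℂ) / 2) := by
    obtain ⟨h1, h2⟩ := zz_half θ i j
    rw [h1, h2]; ring
  have h3 := Complex.exp_ne_zero (Complex.I * ((θ i + θ j : ℝ) : ℂ) / 2)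
  unfold YY
  rw [e1, e2]
  have := Complex.I_ne_zero
  push_cast at *
  field_simp

lemma YY_anti (θ : Fin 4 → ℝ) (i j : Fin 4) : YY θ i j = - YY θ j i := by
  unfold YY
  rw [← neg_sub (zz θ j) (zz θ i), div_neg, add_comm]

include hθ ho in
lemma d_db : HasDerivAt (fun t => db (θ t)) ((∑ i, (δ s i : ℂ) * qb (θ s) i) * db (θ s)) s := by
  have hp := hasLog_prod pairs (fun p t => ((Real.sqrt (SS (θ t) p) : ℝ) : ℂ))
    (fun p => ((δ s p.2 : ℂ) - δ s p.1) * (Complex.I/4 * YY (θ s) p.2 p.1)) s (fun p hp => by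
      obtain ⟨i, j⟩ := p
      have hij : i < j := by simpa [pairs] using hp
      have hs := SS_pos _ (ho s) i j hij
      have h1 : HasDerivAt (fun t => SS (θ t) (i, j)) (Real.cos ((θ s j - θ s i)/2) * (δ s j - δ s i)) s := by
        have := ((((hθ s j).sub (hθ s i)).div_const 2).sin).const_mul 2
        refine this.congr_deriv ?_
        simp; ring
      have h2 := (h1.sqrt hs.ne').ofReal_comp
      refine h2.congr_deriv ?_
      dsimp only
      rw [YY_eq _ (ho s) i j hij, ← Complex.ofReal_sub, ← Complex.ofReal_mul, ← Complex.ofReal_mul]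
      congr 1
      have h3 := Real.sq_sqrt hs.le
      have h4 := (Real.sqrt_pos.mpr hs).ne'
      have h5 := hs.ne'
      field_simp
      rw [h3]; ring)
  refine hp.congr_deriv ?_
  unfold db
  congr 1
  unfold qb pairs
  rw [Finset.sum_filter, Fintype.sum_prod_type]
  simp only [Fin.sum_univ_four]
  have hd : ∀ i, YY (θ s) i i = 0 := fun i => by simp [YY]
  rw [YY_anti _ 0 1, YY_anti _ 0 2, YY_anti _ 0 3, YY_anti _ 1 2, YY_anti _ 1 3, YY_anti _ 2 3]
  simp [hd]
  ring

include hθ ho in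
lemma d_uba (c4 : ℂ) : HasDerivAt (fun t => uba c4 (θ t)) (Afun θ δ (s, uba c4 (θ s))) s := by
  have h1 : HasDerivAt (fun t => Eb (θ t)) _ s := hasDerivAt_pi.mpr fun k => d_Eb θ δ hθ ho s k
  have h2 : HasDerivAt (fun t => (fun k => (-4 * Eb (θ t) k)⁻¹)) _ s :=
    hasDerivAt_pi.mpr fun k => hasLog_inv (fun t => -4 * Eb (θ t) k) (-2 * Complex.I * δ s k +
    Complex.I * ∑ i, ((δ s i : ℂ) - δ s k) * WW (θ s) k i) s
    (((d_Eb θ δ hθ ho s k).const_mul (-4)).congr_deriv (by ring))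
    (mul_ne_zero (by norm_num) (Eb_ne θ s (ho s) k))
  have h3 : HasDerivAt (fun t : ℝ => (fun _ : Fin 4 => Complex.I/2)) 0 s := hasDerivAt_const _ _
  have h4 : HasDerivAt (fun t => qb (θ t)) _ s := hasDerivAt_pi.mpr fun k => d_qb θ δ hθ ho s k
  have h5 := (d_db θ δ hθ ho s).const_mul c4
  have h6 : HasDerivAt (fun t => bbar (θ t)) _ s :=
    (((HasDerivAt.fun_sum fun k (_ : k ∈ Finset.univ) => d_theta θ (δ s) s (hθ s) k).const_mul
      (-Complex.I)).div_const 2).cexp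
  refine (h1.prodMk (h2.prodMk (h3.prodMk (h4.prodMk (h5.prodMk h6))))).congr_deriv ?_
  refine Prod.ext ?_ (Prod.ext ?_ (Prod.ext ?_ (Prod.ext ?_ (Prod.ext ?_ ?_))))
  · ext k
    simp only [Afun, uba]
    rw [add_mul, mul_assoc Complex.I, Finset.sum_mul, Finset.mul_sum]
    congr 1
    exact Finset.sum_congr rfl fun i _ => by ring
  · ext k
    simp only [Afun, uba]
    have e : ∀ i, ((δ s k : ℂ) - δ s i) * (2 * WW (θ s) i k * (-(Complex.I/2 * (-4 * Eb (θ s) k)⁻¹)))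
       = -Complex.I * ((δ s i : ℂ)-δ s k) * (-4 * Eb (θ s) k)⁻¹ 
         - Complex.I * (((δ s i : ℂ)-δ s k) * WW (θ s) k i) * (-4 * Eb (θ s) k)⁻¹ := by
      intro i
      by_cases h : k = i
      · subst h; simp
      · rw [WW_swap θ s (ho s) k i h]; ring
    simp_rw [e]
    simp only [Fin.sum_univ_four]
    ring
  · rfl
  · rfl
  · simp only [Afun, uba]; ring
  · simp only [Afun, uba, bbar]
    rw [← Finset.sum_mul]; ring
end
end Fermi
end

noncomputable section
namespace Fermi
open Polynomial

lemma wallis_AB (m : ℕ) : ((m:ℂ) + 1/2) * (∏ i ∈ Finset.range m, (-(1/2:ℂ) - i))^2 /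
    (∏ i ∈ Finset.range m, (-((i:ℂ)+1)))^2 = 1/2 / (Real.Wallis.W m : ℂ) := by
  induction m with
  | zero => simp [Real.Wallis.W]
  | succ m ih =>
    have hB : ∏ i ∈ Finset.range m, (-((i:ℂ)+1)) ≠ 0 :=
      Finset.prod_ne_zero_iff.mpr fun i _ => neg_ne_zero.mpr (by exact_mod_cast Nat.succ_ne_zero i)
    have hW : (Real.Wallis.W m : ℂ) ≠ 0 := by exact_mod_cast (Real.Wallis.W_pos m).ne'
    have h1 : (m:ℂ) + 1 ≠ 0 := by exact_mod_cast Nat.succ_ne_zero m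
    have h2 : 2 * (m:ℂ) + 1 ≠ 0 := by exact_mod_cast Nat.succ_ne_zero (2*m)
    have h3 : 2 * (m:ℂ) + 3 ≠ 0 := by exact_mod_cast Nat.succ_ne_zero (2*m+2)
    rw [Finset.prod_range_succ, Finset.prod_range_succ, Real.Wallis.W_succ]
    push_cast
    rw [div_eq_div_iff (pow_ne_zero 2 hB) hW] at ih
    rw [show (2 * (m:ℂ) + 2) = 2 * (m + 1) by ring]
    field_simp
    field_simp at ih
    linear_combination (2*(m:ℂ)+3) * (2*m+1) * ih

lemma cauchy_sol (m : ℕ) : ∃ X : ℕ → ℂ,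
    (∀ a ≤ m, ∑ b ∈ Finset.range (m+1), X b / ((Real.pi:ℂ) * ((b:ℂ) - a + 1/2)) = if a = 0 then 1 else 0)
    ∧ X 0 = (Real.pi/2 : ℂ) / (Real.Wallis.W m : ℂ)
    ∧ (∑ b ∈ Finset.range (m+1), X b)^2 = Real.pi * (m + 1/2) * X 0 := by
  have hpi : (Real.pi:ℂ) ≠ 0 := by exact_mod_cast Real.pi_ne_zero
  set v : ℕ → ℂ := fun b => (b:ℂ) with hv
  set s := Finset.range (m+1)
  set p : ℂ[X] := Lagrange.nodal (Finset.range m) (fun i : ℕ => (i:ℂ) + 1/2) with hp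
  have hvs : Set.InjOn v s := fun a _ b _ h => by simpa [hv] using h
  have hdeg : p.degree < s.card := by
    rw [hp, Lagrange.degree_nodal]; simp [s]; norm_cast; omega
  have half : ∀ a b : ℕ, (a:ℂ) - 1/2 ≠ b := by
    intro a b h
    have h2 : (2*a : ℂ) - 1 = 2 * b := by linear_combination 2 * h
    have h3 : (2*a : ℤ) - 1 = 2*b := by exact_mod_cast h2
    omega
  have hev : ∀ a : ℕ, eval ((a:ℂ) - 1/2) p = eval ((a:ℂ)-1/2) (Lagrange.nodal s v) *
      ∑ i ∈ s, Lagrange.nodalWeight s v i * (((a:ℂ)-1/2) - v i)⁻¹ * eval (v i) p := by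
    intro a
    rw [← Lagrange.eval_interpolate_not_at_node (fun i => eval (v i) p) (fun i _ => half a i)]
    rw [Lagrange.interpolate_poly_eq_self hvs hdeg]
  have hnod : ∀ a : ℕ, eval ((a:ℂ)-1/2) (Lagrange.nodal s v) ≠ 0 := by
    intro a
    rw [Lagrange.eval_nodal]
    exact Finset.prod_ne_zero_iff.mpr fun i _ => sub_ne_zero.mpr (half a i)
  set A := ∏ i ∈ Finset.range m, (-(1/2:ℂ) - i) with hA
  set B := ∏ i ∈ Finset.range m, (-((i:ℂ)+1)) with hB
  have hB0 : B ≠ 0 :=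
      Finset.prod_ne_zero_iff.mpr fun i _ => neg_ne_zero.mpr (by exact_mod_cast Nat.succ_ne_zero i)
  have hA0 : A ≠ 0 :=
      Finset.prod_ne_zero_iff.mpr fun i _ => by
        have := half 0 i
        rw [sub_ne_zero]; simpa using this
  have n0 : eval (((0:ℕ):ℂ)-1/2) (Lagrange.nodal s v) = A * (-(1/2) - m) := by
    rw [Lagrange.eval_nodal, Finset.prod_range_succ, hA]
    simp [hv]
  have p0 : eval (((0:ℕ):ℂ)-1/2) p = B := by
    rw [hp, Lagrange.eval_nodal, hB]
    exact Finset.prod_congr rfl fun i _ => by push_cast; ring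
  have p1 : eval (0:ℂ) p = A := by
    rw [hp, Lagrange.eval_nodal, hA]
    exact Finset.prod_congr rfl fun i _ => by push_cast; ring
  have w0 : Lagrange.nodalWeight s v 0 = B⁻¹ := by
    rw [Lagrange.nodalWeight, hB, ← Finset.prod_inv_distrib]
    have : s.erase 0 = (Finset.range m).map ⟨Nat.succ, Nat.succ_injective⟩ := by
      ext x; simp [s]
      constructor
      · rintro ⟨h1, h2⟩; exact ⟨x-1, by omega, by omega⟩
      · rintro ⟨a, h1, h2⟩; omega
    rw [this, Finset.prod_map]
    exact Finset.prod_congr rfl fun i _ => by simp [hv]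
  have hsum : ∑ i ∈ s, Lagrange.nodalWeight s v i * eval (v i) p = 1 := by
    have h1 := Lagrange.leadingCoeff_eq_sum hvs (P := p) (by
      rw [hp, Lagrange.degree_nodal]; simp [s])
    rw [show p.leadingCoeff = 1 from Lagrange.nodal_monic] at h1
    rw [h1]
    refine Finset.sum_congr rfl fun i _ => ?_
    rw [Lagrange.nodalWeight, Finset.prod_inv_distrib, div_eq_inv_mul]
  set κ := A * (-(1/2) - m) / B with hκ
  refine ⟨fun b => -(Real.pi:ℂ) * κ * (Lagrange.nodalWeight s v b * eval (v b) p), ?_, ?_, ?_⟩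
  · intro a ha
    have e1 : ∑ b ∈ s, (-(Real.pi:ℂ) * κ * (Lagrange.nodalWeight s v b * eval (v b) p)) /
        ((Real.pi:ℂ) * ((b:ℂ) - a + 1/2)) = κ * ∑ i ∈ s, Lagrange.nodalWeight s v i *
        (((a:ℂ)-1/2) - v i)⁻¹ * eval (v i) p := by
      rw [Finset.mul_sum]
      refine Finset.sum_congr rfl fun b _ => ?_
      have h1 : (a:ℂ) - 1/2 - b ≠ 0 := sub_ne_zero.mpr (half a b)
      rw [show (b:ℂ) - a + 1/2 = -((a:ℂ) - 1/2 - b) by ring]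
      simp only [hv]
      field_simp
    rw [e1]
    have h2 := hev a
    split_ifs with h
    · subst h
      rw [p0] at h2
      have h3 := hnod 0
      rw [n0] at h2 h3
      rw [hκ]
      generalize ∑ i ∈ s, Lagrange.nodalWeight s v i * ((((0:ℕ):ℂ)-1/2) - v i)⁻¹ * eval (v i) p = T at h2 ⊢
      rw [div_mul_eq_mul_div, ← h2, div_self hB0]
    · have : eval ((a:ℂ) - 1/2) p = 0 := by
        rw [hp, Lagrange.eval_nodal]
        refine Finset.prod_eq_zero (i := a-1) (by simp; omega) ?_
        rw [Nat.cast_sub (by omega)]; push_cast; ring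
      rw [this] at h2
      rcases mul_eq_zero.mp h2.symm with h | h
      · exact absurd h (hnod a)
      · rw [h, mul_zero]
  · have := wallis_AB m
    rw [← hA, ← hB] at this
    simp only [hv, Nat.cast_zero]
    rw [p1, w0, hκ]
    rw [show (Real.pi:ℂ)/2/(Real.Wallis.W m : ℂ) = Real.pi * (1/2 / (Real.Wallis.W m:ℂ)) by ring, ← this]
    field_simp
    ring
  · rw [← Finset.mul_sum, hsum]
    simp only [hv, Nat.cast_zero]
    rw [p1, w0, hκ]
    field_simp
    ring
end Fermi
end

noncomputable section
namespace Fermi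
open Matrix Filter Topology Set

def sqr (k : Fin 4) : ℝ := ((k:ℕ):ℝ) * Real.pi / 2 - 3 * Real.pi / 4

lemma zz_sq (k : Fin 4) : zz sqr k = Complex.I ^ (k:ℕ) * zz sqr 0 := by
  have : Complex.exp (Real.pi / 2 * Complex.I) = Complex.I := Complex.exp_pi_div_two_mul_I
  rw [← this, zz, zz, ← Complex.exp_nat_mul, ← Complex.exp_add]
  congr 1; simp [sqr]; ring

lemma zz_sq0 : zz sqr 0 ^ 2 = Complex.I := by
  rw [zz, ← Complex.exp_nat_mul]
  have h1 : Complex.exp (Real.pi / 2 * Complex.I) = Complex.I := Complex.exp_pi_div_two_mul_I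
  refine Eq.trans ?_ h1
  refine Eq.trans ?_ (Complex.exp_periodic.sub_eq _)
  congr 1; simp [sqr]; ring

lemma zz_sq2 (k : Fin 4) : zz sqr k ^ 2 = sg k * Complex.I := by
  rw [zz_sq, mul_pow, zz_sq0, sg, ← pow_mul, mul_comm _ 2, pow_mul, Complex.I_sq]

lemma sg_sq (k) : sg k ^ 2 = 1 := by rw [sg, ← pow_mul, mul_comm, pow_mul]; norm_num

lemma zz_sq4 (k : Fin 4) : zz sqr k ^ 4 = -1 := by
  rw [show zz sqr k ^ 4 = (zz sqr k ^ 2)^2 by ring, zz_sq2, mul_pow, sg_sq]; simp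

lemma lam_sq (k) : lam sqr k = Complex.I / Real.pi := by
  rw [lam, zz_sq2, ← mul_assoc, ← sq, sg_sq, one_mul]

lemma I_zpow_ne (n : ℤ) (h : ¬ (4:ℤ) ∣ n) : Complex.I ^ n ≠ 1 := by
  have e : n = 4 * (n / 4) + n % 4 := (Int.mul_ediv_add_emod n 4).symm
  have h4 : Complex.I ^ (4:ℤ) = 1 := by
    have := Complex.I_pow_four; exact_mod_cast this
  rw [e, zpow_add₀ Complex.I_ne_zero, _root_.zpow_mul, h4, _root_.one_zpow, one_mul]
  have h0 := Int.emod_nonneg n (show (4:ℤ) ≠ 0 by norm_num)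
  have h1 := Int.emod_lt_of_pos n (show (0:ℤ) < 4 by norm_num)
  have h2 : n % 4 ≠ 0 := fun h' => h (Int.dvd_of_emod_eq_zero h')
  generalize n % 4 = r at *
  interval_cases r
  · simp at h2
  · intro h; have := congrArg Complex.re h; simp at this
  · intro h
    have h' : Complex.I ^ 2 = 1 := by exact_mod_cast h
    rw [Complex.I_sq] at h'; norm_num at h'
  · intro h
    have h' : Complex.I ^ 3 = 1 := by exact_mod_cast h
    rw [Complex.I_pow_three] at h'
    have := congrArg Complex.re h'; simp at this

lemma sum_zz_not (n : ℤ) (h : ¬ (4:ℤ) ∣ n) : ∑ k, zz sqr k ^ (-n) = 0 := by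
  have e : ∀ k, zz sqr k ^ (-n) = (Complex.I ^ (-n)) ^ (k:ℕ) * zz sqr 0 ^ (-n) := by
    intro k
    rw [zz_sq, mul_zpow, ← zpow_natCast, ← zpow_natCast, zpow_comm]
  rw [Finset.sum_congr rfl fun k _ => e k]
  rw [← Finset.sum_mul]
  have h1 : Complex.I ^ (-n) ≠ 1 := I_zpow_ne _ (by rwa [dvd_neg])
  have h2 : (Complex.I ^ (-n)) ^ 4 = 1 := by
    rw [← zpow_natCast, zpow_comm]; norm_cast; simp
  simp only [Fin.sum_univ_four]
  generalize Complex.I ^ (-n) = w at *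
  have h3 : (w - 1) * (w ^ 0 + w ^ 1 + w ^ 2 + w ^ 3) = 0 := by linear_combination h2
  have h4 := (mul_eq_zero.mp h3).resolve_left (sub_ne_zero.mpr h1)
  simp only [Fin.val_zero, Fin.val_one, Fin.val_two] 
  rw [show ((3 : Fin 4) : ℕ) = 3 from rfl, h4, zero_mul]

lemma sy_sq_not (n : ℤ) (h : ¬ (4:ℤ) ∣ n) : sy sqr n = 0 := by
  by_cases h2 : n = 2
  · subst h2
    have := pi_ne
    simp [sy, cof, Fin.sum_univ_four, sg, sqr]
    field_simp
    norm_num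
  · have := sy_comm sqr n
    simp_rw [lam_sq] at this
    rw [← Finset.mul_sum, sum_zz_not n h, mul_zero, mul_zero] at this
    refine (mul_eq_zero.mp this).resolve_left ?_
    exact sub_ne_zero.mpr (by exact_mod_cast h2)

lemma zz_sq_zpow4 (k) (l : ℤ) : zz sqr k ^ (4 * l) = (-1) ^ l := by
  rw [_root_.zpow_mul, show zz sqr k ^ (4:ℤ) = -1 by exact_mod_cast zz_sq4 k]

lemma sy_sq (l : ℤ) : sy sqr (4 * l) = (-1) ^ l / (Real.pi * (1/2 - l)) := by
  have := sy_comm sqr (4 * l)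
  have hp := pi_ne
  have e : ∀ k, zz sqr k ^ (-(4 * l)) = (-1) ^ l := by
    intro k; rw [show -(4*l) = 4 * (-l) by ring, zz_sq_zpow4, _root_.zpow_neg, ← _root_.inv_zpow]; norm_num
  simp_rw [lam_sq, e] at this
  have h1 : (1/2 - l : ℂ) ≠ 0 := by
    intro h
    have h2 : (1 : ℂ) = 2 * l := by linear_combination 2 * h
    have h3 : (1:ℤ) = 2 * l := by exact_mod_cast h2
    omega
  rw [eq_div_iff (mul_ne_zero hp h1)]
  simp at this
  field_simp at this ⊢
  rw [Complex.I_sq] at this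
  linear_combination (-1/2) * this

lemma sum_four (N : ℕ) (f : ℕ → ℂ) :
    ∑ k : Fin (N+1), (if 4 ∣ (k:ℕ) then f (k/4) else 0) = ∑ b ∈ Finset.range (N/4+1), f b := by
  rw [Fin.sum_univ_eq_sum_range (fun k => if 4 ∣ k then f (k/4) else 0) (N+1), ← Finset.sum_filter]
  symm
  refine Finset.sum_bij (fun b _ => 4 * b) ?_ ?_ ?_ ?_
  · intro a ha; simp at ha ⊢; omega
  · intro a _ b _ h; omega
  · intro b hb; simp at hb; exact ⟨b/4, by simp; omega, by omega⟩
  · intro a _; simp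

def xz (m : ℕ) : ℂ := (Real.pi/2 : ℂ) / (Real.Wallis.W m : ℂ)

lemma xz_ne (m) : xz m ≠ 0 := by
  refine div_ne_zero (div_ne_zero pi_ne (by norm_num)) ?_
  exact_mod_cast (Real.Wallis.W_pos m).ne'

lemma sq_sol (N : ℕ) : ∃ x : Fin (N+1) → ℂ, AA sqr (N+1) *ᵥ x = ee 0 ∧ x 0 = xz (N/4) ∧
    ∀ k, (ww (N+1) (zz sqr k) ⬝ᵥ x)^2 = Real.pi * ((N/4 : ℕ) + 1/2) * xz (N/4) := by
  obtain ⟨X, h1, h2, h3⟩ := cauchy_sol (N/4)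
  refine ⟨fun j => if 4 ∣ (j:ℕ) then (-1)^((j:ℕ)/4) * X (j/4) else 0, ?_, ?_, ?_⟩
  · ext j
    simp only [mulVec, dotProduct, AA, toep, Matrix.of_apply]
    by_cases hj : 4 ∣ (j:ℕ)
    · obtain ⟨a, ha⟩ := hj
      have e : ∀ k : Fin (N+1), sy sqr ((j:ℤ) - (k:ℤ)) * (if 4 ∣ (k:ℕ) then (-1)^((k:ℕ)/4) * X (k/4) else 0)
         = if 4 ∣ (k:ℕ) then (-1)^a * (X (k/4) / ((Real.pi:ℂ) * (((k/4 : ℕ):ℂ) - a + 1/2))) else 0 := by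
        intro k
        split_ifs with hk
        · obtain ⟨b, hb⟩ := hk
          rw [ha, hb]
          rw [show ((4 * a : ℕ) : ℤ) - ((4 * b : ℕ) : ℤ) = 4 * ((a:ℤ) - b) by push_cast; ring, sy_sq]
          rw [_root_.zpow_sub₀ (by norm_num), Nat.mul_div_cancel_left b (by norm_num)]
          simp only [zpow_natCast, Int.cast_sub, Int.cast_natCast]
          have : ((-1:ℂ))^b ≠ 0 := pow_ne_zero _ (by norm_num)
          rw [show (1/2 - ((a:ℂ) - b)) = (b:ℂ) - a + 1/2 by ring]
          field_simp
        · simp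
      simp_rw [e]
      rw [sum_four N (fun b => (-1)^a * (X b / ((Real.pi:ℂ) * ((b:ℂ) - a + 1/2)))), ← Finset.mul_sum,
        h1 a (by have := j.2; omega)]
      by_cases h : a = 0
      · subst h
        have : j = 0 := Fin.ext (by simpa using ha)
        simp [this, ee]
      · have : j ≠ 0 := fun h' => h (by rw [h'] at ha; simp at ha; omega)
        simp [h, ee, this]
    · have : j ≠ 0 := fun h' => hj (by rw [h']; simp)
      simp only [ee, Pi.single_apply, this, if_false]
      refine Finset.sum_eq_zero fun k _ => ?_
      split_ifs with hk
      · rw [sy_sq_not, zero_mul]; omega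
      · simp
  · simp [h2, xz]
  · intro k
    have : ww (N+1) (zz sqr k) ⬝ᵥ (fun j : Fin (N+1) => if 4 ∣ (j:ℕ) then (-1)^((j:ℕ)/4) * X (j/4) else 0) =
        ∑ b ∈ Finset.range (N/4+1), X b := by
      rw [← sum_four N X]
      refine Finset.sum_congr rfl fun j _ => ?_
      simp only [ww, mul_ite, mul_zero]
      split_ifs with h
      · obtain ⟨b, hb⟩ := h
        rw [hb, Nat.mul_div_cancel_left b (by norm_num), pow_mul, zz_sq4, ← mul_assoc, ← mul_pow]
        norm_num
      · rfl
    rw [this, h3, h2, xz]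

lemma det_sq_rec (N : ℕ) : (AA sqr N).det = (AA sqr (N+1)).det * xz (N/4) := by
  obtain ⟨x, h1, h2, -⟩ := sq_sol N
  have h3 : (AA sqr (N+1)).adjugate *ᵥ ee 0 = (AA sqr (N+1)).det • x := by
    rw [← h1, Matrix.mulVec_mulVec, Matrix.adjugate_mul, Matrix.smul_mulVec, Matrix.one_mulVec]
  have h4 := congrFun h3 0
  rw [Pi.smul_apply, h2, smul_eq_mul] at h4
  rw [← h4, ee, Matrix.mulVec_single_one, Matrix.col_apply, Matrix.adjugate_fin_succ_eq_det_submatrix]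
  have : (AA sqr (N+1)).submatrix (Fin.succAbove 0) (Fin.succAbove 0) = AA sqr N := by
    ext i j
    simp [AA, toep]
  rw [this]; simp

lemma det_sq_ne (N : ℕ) : (AA sqr N).det ≠ 0 := by
  induction N with
  | zero => simp
  | succ N ih => rw [det_sq_rec] at ih; exact left_ne_zero_of_mul ih

lemma inv_ee_sq (N : ℕ) (x : Fin (N+1) → ℂ) (h : AA sqr (N+1) *ᵥ x = ee 0) :
    (AA sqr (N+1))⁻¹ *ᵥ ee 0 = x := by
  rw [← h, Matrix.mulVec_mulVec, Matrix.nonsing_inv_mul _ (det_sq_ne _).isUnit, Matrix.one_mulVec]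

lemma bb_sq (N : ℕ) : bb N sqr = xz (N/4) := by
  have h1 := bb_eq N sqr (det_sq_ne _)
  rw [det_sq_rec N, mul_comm] at h1
  exact (mul_right_cancel₀ (det_sq_ne _) h1).symm

lemma FF_sq (N : ℕ) (k) : FF N sqr k ^ 2 = Real.pi * ((N/4 : ℕ) + 1/2) * xz (N/4) := by
  obtain ⟨x, h1, -, h3⟩ := sq_sol N
  rw [FF, bil, inv_ee_sq N x h1, h3]

end Fermi
end

noncomputable section
namespace Fermi
open Matrix Filter Topology Set

lemma Ainv_sq (N : ℕ) (j l : Fin (N+1)) (h : ¬ (4:ℤ) ∣ (j:ℤ) - l) : (AA sqr (N+1))⁻¹ j l = 0 := by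
  set A := AA sqr (N+1) with hA
  set U : Matrix (Fin (N+1)) (Fin (N+1)) ℂ := Matrix.diagonal fun j => Complex.I ^ (j:ℕ) with hU
  have hu : IsUnit A.det := (det_sq_ne _).isUnit
  have key : ∀ j l : Fin (N+1), (4:ℤ) ∣ (j:ℤ) - l → Complex.I ^ (j:ℕ) = Complex.I ^ (l:ℕ) := by
    intro j l hd
    rw [Complex.I_pow_eq_pow_mod, Complex.I_pow_eq_pow_mod (l:ℕ)]
    congr 1; omega
  have hc : A * U = U * A := by
    ext j l
    rw [hU, Matrix.mul_diagonal, Matrix.diagonal_mul]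
    by_cases hd : (4:ℤ) ∣ (j:ℤ) - l
    · rw [key j l hd, mul_comm]
    · rw [hA, AA, toep, Matrix.of_apply, sy_sq_not _ hd]; simp
  have hi : A⁻¹ * U = U * A⁻¹ := by
    calc A⁻¹ * U = A⁻¹ * (U * (A * A⁻¹)) := by rw [Matrix.mul_nonsing_inv A hu, Matrix.mul_one]
      _ = A⁻¹ * (A * U) * A⁻¹ := by rw [hc]; simp only [Matrix.mul_assoc]
      _ = U * A⁻¹ := by rw [← Matrix.mul_assoc A⁻¹ A, Matrix.nonsing_inv_mul A hu, Matrix.one_mul]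
  have := congrFun (congrFun hi j) l
  rw [hU, Matrix.mul_diagonal, Matrix.diagonal_mul] at this
  have h2 : Complex.I ^ (l:ℕ) - Complex.I ^ (j:ℕ) ≠ 0 := by
    intro h0
    refine I_zpow_ne _ h ?_
    rw [zpow_sub₀ Complex.I_ne_zero, zpow_natCast, zpow_natCast, ← sub_eq_zero.mp h0, div_self]
    exact pow_ne_zero _ Complex.I_ne_zero
  have h3 : A⁻¹ j l * (Complex.I ^ (l:ℕ) - Complex.I ^ (j:ℕ)) = 0 := by linear_combination this
  exact (mul_eq_zero.mp h3).resolve_right h2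

lemma phase_sq (N : ℕ) (j l : Fin (N+1)) (k : Fin 4) :
    zz sqr k ^ (j:ℕ) * (AA sqr (N+1))⁻¹ j l * (zz sqr k)⁻¹ ^ (l:ℕ) =
    zz sqr 0 ^ (j:ℕ) * (AA sqr (N+1))⁻¹ j l * (zz sqr 0)⁻¹ ^ (l:ℕ) := by
  by_cases hd : (4:ℤ) ∣ (j:ℤ) - l
  · have e : ∀ k, zz sqr k ^ (j:ℕ) * (AA sqr (N+1))⁻¹ j l * (zz sqr k)⁻¹ ^ (l:ℕ) =
      (AA sqr (N+1))⁻¹ j l * (-1) ^ (((j:ℤ) - l)/4) := by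
      intro k
      rw [← zz_sq_zpow4 k, Int.mul_ediv_cancel' hd, zpow_sub₀ (zz_ne _ _), zpow_natCast, zpow_natCast]
      rw [inv_pow]; ring
    rw [e, e]
  · rw [Ainv_sq N j l hd]; simp

lemma KK_sq (N : ℕ) (k) : KK N sqr k k = KK N sqr 0 0 := by
  rw [KK, KK, bil_eq_sum, bil_eq_sum]
  refine Finset.sum_congr rfl fun j _ => Finset.sum_congr rfl fun l _ => ?_
  exact phase_sq N j l k

lemma GG_sq (N : ℕ) (k) : GG N sqr k = GG N sqr 0 := by
  rw [GG, GG, bil_eq_sum, bil_eq_sum]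
  refine Finset.sum_congr rfl fun j _ => Finset.sum_congr rfl fun l _ => ?_
  by_cases hj : j = 0
  · subst hj
    have := phase_sq N 0 l k
    simpa [ee, vv] using this
  · simp [ee, hj]

lemma FF_sq' (N : ℕ) (k) : FF N sqr k = FF N sqr 0 := by
  rw [FF, FF, bil_eq_sum, bil_eq_sum]
  refine Finset.sum_congr rfl fun j _ => Finset.sum_congr rfl fun l _ => ?_
  by_cases hj : l = 0
  · subst hj
    have := phase_sq N j 0 k
    simpa [ee, ww] using this
  · simp [ee, hj]

lemma sum_KK (N : ℕ) (θ : Fin 4 → ℝ) (hA : (AA θ (N+1)).det ≠ 0) :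
    ∑ k, lam θ k * KK N θ k k = 2 * Complex.I * (N+1) := by
  set A := AA θ (N+1) with hAd
  have hu : IsUnit A.det := hA.isUnit
  have e1 : ∑ k, lam θ k * KK N θ k k = ∑ j : Fin (N+1), ∑ l : Fin (N+1), 
      (-Complex.I) * (((l:ℂ) - j - 2) * (A⁻¹ j l * A l j)) := by
    simp_rw [KK, bil_eq_sum, Finset.mul_sum]
    rw [Finset.sum_comm]
    refine Finset.sum_congr rfl fun j _ => ?_
    rw [Finset.sum_comm]
    refine Finset.sum_congr rfl fun l _ => ?_
    have h := sy_comm θ ((l:ℤ) - j)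
    have h2 : A l j = sy θ ((l:ℤ) - j) := rfl
    rw [h2]
    push_cast at h
    have h3 : -Complex.I * (((l:ℂ) - j - 2) * (A⁻¹ j l * sy θ ((l:ℤ) - j))) =
      -Complex.I * A⁻¹ j l * (Complex.I * ∑ k, lam θ k * (zz θ k)^(-((l:ℤ) - j))) := by
      rw [← h]; ring
    rw [h3, ← mul_assoc, Finset.mul_sum]
    refine Finset.sum_congr rfl fun k _ => ?_
    have h4 : zz θ k ^ (-((l:ℤ) - j)) = zz θ k ^ (j:ℕ) * (zz θ k)⁻¹ ^ (l:ℕ) := by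
      rw [neg_sub, zpow_sub₀ (zz_ne _ _), zpow_natCast, zpow_natCast, inv_pow]; rfl
    rw [h4]
    simp only [ww, vv]
    linear_combination (A⁻¹ j l * lam θ k * zz θ k ^ (j:ℕ) * (zz θ k)⁻¹ ^ (l:ℕ)) * Complex.I_sq
  rw [e1]
  have e2 : ∀ j : Fin (N+1), ∑ l : Fin (N+1), A⁻¹ j l * A l j = 1 := by
    intro j
    have := congrFun (congrFun (Matrix.nonsing_inv_mul A hu) j) j
    rw [Matrix.mul_apply, Matrix.one_apply_eq] at this
    exact this
  have e3 : ∀ l : Fin (N+1), ∑ j : Fin (N+1), A⁻¹ j l * A l j = 1 := by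
    intro l
    have := congrFun (congrFun (Matrix.mul_nonsing_inv A hu) l) l
    rw [Matrix.mul_apply, Matrix.one_apply_eq] at this
    rw [← this]
    exact Finset.sum_congr rfl fun _ _ => mul_comm _ _
  have e4 : ∑ j : Fin (N+1), ∑ l : Fin (N+1), (-Complex.I) * (((l:ℂ) - j - 2) * (A⁻¹ j l * A l j))
     = -Complex.I * (∑ l : Fin (N+1), ∑ j : Fin (N+1), (l:ℂ) * (A⁻¹ j l * A l j)
       - ∑ j : Fin (N+1), ∑ l : Fin (N+1), (j:ℂ) * (A⁻¹ j l * A l j)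
       - ∑ j : Fin (N+1), ∑ l : Fin (N+1), 2 * (A⁻¹ j l * A l j)) := by
    rw [Finset.sum_comm (f := fun (l j : Fin (N+1)) => (l:ℂ) * (A⁻¹ j l * A l j)), ← Finset.sum_sub_distrib,
      ← Finset.sum_sub_distrib, Finset.mul_sum]
    refine Finset.sum_congr rfl fun j _ => ?_
    rw [← Finset.sum_sub_distrib, ← Finset.sum_sub_distrib, Finset.mul_sum]
    exact Finset.sum_congr rfl fun l _ => by ring
  rw [e4]
  simp_rw [← Finset.mul_sum, e2, e3]
  simp
  ring

lemma qq_sq (N : ℕ) (k) : qq N sqr k = 0 := by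
  have := sum_KK N sqr (det_sq_ne _)
  simp_rw [KK_sq N, lam_sq] at this
  rw [qq, KK_sq, lam_sq]
  simp at this
  linear_combination (1/4) * this

lemma hh_sq (N : ℕ) (k) : hh N sqr k = Complex.I / 2 := by
  have := sum_lamGF N sqr (det_sq_ne _)
  simp_rw [GG_sq N, FF_sq' N, lam_sq] at this
  rw [hh, gg, GG_sq, FF_sq', lam_sq]
  have hb : bb N sqr ≠ 0 := by rw [bb_sq]; exact xz_ne _
  simp at this
  rw [mul_div_assoc', div_eq_iff hb]
  linear_combination (1/4) * this

lemma EE_sq (N : ℕ) (k) : EE N sqr k = Complex.I * (((N/4 : ℕ) + 1/2) / ((N:ℂ) + 1)) * xz (N/4) := by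
  rw [EE, FF_sq, lam_sq]
  have := pi_ne
  have := nat_ne N
  field_simp

lemma EE_sq_ne (N : ℕ) (k) : EE N sqr k ≠ 0 := by
  rw [EE_sq]
  have := nat_ne N
  refine mul_ne_zero (mul_ne_zero Complex.I_ne_zero (div_ne_zero ?_ this)) (xz_ne _)
  intro h
  have := congrArg Complex.re h
  simp at this
  have h2 : (0:ℝ) ≤ ((N/4 : ℕ) : ℝ) := Nat.cast_nonneg _
  linarith

lemma JJ_sq (N : ℕ) (k) : JJ N sqr k = (-4 * EE N sqr k)⁻¹ := by
  have h1 : JJ N sqr k * EE N sqr k = hh N sqr k ^ 2 := by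
    have := nat_ne N
    rw [JJ, EE, hh]; field_simp
  rw [hh_sq] at h1
  have := EE_sq_ne N k
  apply eq_inv_of_mul_eq_one_left
  have h2 := Complex.I_sq
  linear_combination (-4) * h1 - h2

lemma tendsto_xz : Tendsto (fun m => xz m) atTop (𝓝 1) := by
  have h := Real.Wallis.tendsto_W_nhds_pi_div_two
  have h2 : Tendsto (fun m => ((Real.Wallis.W m : ℝ) : ℂ)) atTop (𝓝 ((Real.pi/2 : ℝ) : ℂ)) :=
    (Complex.continuous_ofReal.tendsto _).comp h
  have hp := pi_ne
  have h3 := (tendsto_const_nhds (x := (Real.pi/2 : ℂ))).div h2 (by push_cast; exact div_ne_zero hp (by norm_num))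
  have e : (Real.pi/2 : ℂ) / ((Real.pi/2 : ℝ) : ℂ) = 1 := by
    push_cast; exact div_self (div_ne_zero hp (by norm_num))
  rw [e] at h3
  exact h3

lemma tendsto_div4 : Tendsto (fun N : ℕ => N/4) atTop atTop :=
  Nat.tendsto_div_const_atTop (by norm_num)

lemma tendsto_ratio : Tendsto (fun N : ℕ => (((N/4 : ℕ):ℝ) + 1/2) / ((N:ℝ) + 1)) atTop (𝓝 (1/4)) := by
  have h : Tendsto (fun N : ℕ => 1/((N:ℝ)+1)) atTop (𝓝 0) := tendsto_one_div_add_atTop_nhds_zero_nat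
  rw [tendsto_iff_norm_sub_tendsto_zero]
  refine squeeze_zero (fun _ => norm_nonneg _) (fun N => ?_) h
  have hm : (N:ℝ) = 4 * ((N/4 : ℕ):ℝ) + ((N%4 : ℕ):ℝ) := by exact_mod_cast (Nat.div_add_mod N 4).symm
  have h0 : (0:ℝ) ≤ ((N%4 : ℕ):ℝ) := Nat.cast_nonneg _
  have h4 : ((N%4 : ℕ):ℝ) ≤ 3 := by exact_mod_cast Nat.le_of_lt_succ (Nat.mod_lt N (by norm_num))
  have h1 : (0:ℝ) ≤ (N:ℝ) := Nat.cast_nonneg _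
  rw [Real.norm_eq_abs, div_sub' (by linarith : (N:ℝ)+1 ≠ 0), abs_div, abs_of_pos (by linarith : (0:ℝ) < N + 1)]
  refine div_le_div_of_nonneg_right ?_ (by linarith)
  rw [abs_le]; constructor <;> linarith

lemma tendsto_EE_sq (k) : Tendsto (fun N => EE N sqr k) atTop (𝓝 (Complex.I / 4)) := by
  simp_rw [EE_sq]
  have h2 := (Complex.continuous_ofReal.tendsto _).comp tendsto_ratio
  have h3 := (h2.const_mul Complex.I).mul (tendsto_xz.comp tendsto_div4)
  convert h3 using 2
  · simp
  · simp; ring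

lemma sqr_ordered : ordered sqr := by
  have := Real.pi_pos
  refine ⟨?_, ?_, ?_, ?_⟩ <;> simp [sqr] <;> linarith

lemma zz_sqv : zz sqr 1 = Complex.I * zz sqr 0 ∧ zz sqr 2 = - zz sqr 0 ∧ zz sqr 3 = -Complex.I * zz sqr 0 := by
  refine ⟨?_, ?_, ?_⟩
  · rw [zz_sq 1]; simp
  · rw [zz_sq 2]; simp
  · rw [zz_sq 3, show ((3:Fin 4):ℕ) = 3 from rfl, Complex.I_pow_three]

lemma Eb_sq (k) : Eb sqr k = Complex.I / 4 := by
  obtain ⟨h1, h2, h3⟩ := zz_sqv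
  have hs := zz_sq0
  have hII := Complex.I_sq
  have hne : ∀ j, j ≠ k → zz sqr k - zz sqr j ≠ 0 := fun j hj =>
    sub_ne_zero.mpr (ordered_ne sqr sqr_ordered _ _ (Ne.symm hj))
  have key : ∀ a b c w s : ℂ, a ≠ 0 → b ≠ 0 → c ≠ 0 → w ≠ 0 → a*b*c = 4*w^3 → w^2 = s*Complex.I →
      s^2 = 1 → -s*w*(a⁻¹*b⁻¹*c⁻¹) = Complex.I/4 := by
    intro a b c w s ha hb hc hw h h4 h5
    rw [← mul_inv, ← mul_inv, h]
    field_simp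
    linear_combination (-Complex.I) * h4 - s*Complex.I_sq
  rw [Eb, Fin.prod_univ_four]
  fin_cases k
  · have := key _ _ _ (zz sqr 0) 1 (hne 1 (by simp)) (hne 2 (by simp)) (hne 3 (by simp)) (zz_ne _ _)
      (by simp only [Fin.zero_eta, h1, h2, h3]; linear_combination (-2*zz sqr 0^3)*hII) (by rw [hs]; ring) (by norm_num)
    simpa [sg] using this
  · have := key _ _ _ (zz sqr 1) (-1) (hne 0 (by simp)) (hne 2 (by simp)) (hne 3 (by simp)) (zz_ne _ _)
      (by simp only [Fin.mk_one, h1, h2, h3]; linear_combination (-2*Complex.I*zz sqr 0^3)*hII) (by rw [h1, mul_pow, hs, hII]) (by norm_num)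
    simpa [sg] using this
  · have := key _ _ _ (zz sqr 2) 1 (hne 0 (by simp)) (hne 1 (by simp)) (hne 3 (by simp)) (zz_ne _ _)
      (by change (zz sqr 2 - zz sqr 0) * (zz sqr 2 - zz sqr 1) * (zz sqr 2 - zz sqr 3) = _
          simp only [h1, h2, h3]; linear_combination (2*zz sqr 0^3)*hII) (by rw [h2, neg_pow, hs]; ring) (by norm_num)
    simpa [sg] using this
  · have := key _ _ _ (zz sqr 3) (-1) (hne 0 (by simp)) (hne 1 (by simp)) (hne 2 (by simp)) (zz_ne _ _)
      (by change (zz sqr 3 - zz sqr 0) * (zz sqr 3 - zz sqr 1) * (zz sqr 3 - zz sqr 2) = _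
          simp only [h1, h2, h3]; linear_combination (2*Complex.I*zz sqr 0^3)*hII) (by rw [h3, mul_pow, neg_pow, hs, hII]; ring) (by norm_num)
    simpa [sg, pow_succ] using this

lemma YY_add (k j i : Fin 4) (h : zz sqr k * zz sqr k = zz sqr j * zz sqr i) : YY sqr k j + YY sqr k i = 0 := by
  by_cases hkj : k = j
  · subst hkj
    have := mul_left_cancel₀ (zz_ne _ _) h
    simp [YY, this]
  by_cases hki : k = i
  · subst hki
    have := mul_right_cancel₀ (zz_ne _ _) h
    simp [YY, this]
  have e1 : zz sqr k - zz sqr j ≠ 0 := sub_ne_zero.mpr (ordered_ne sqr sqr_ordered _ _ hkj)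
  have e2 : zz sqr k - zz sqr i ≠ 0 := sub_ne_zero.mpr (ordered_ne sqr sqr_ordered _ _ hki)
  rw [YY, YY]
  field_simp
  linear_combination 2*h

lemma YY_self (k : Fin 4) : YY sqr k k = 0 := by simp [YY]

lemma YY_opp (k j : Fin 4) (h : zz sqr k = - zz sqr j) : YY sqr k j = 0 := by simp [YY, h]

lemma qb_sq (k) : qb sqr k = 0 := by
  obtain ⟨h1, h2, h3⟩ := zz_sqv
  have hII := Complex.I_sq
  rw [qb, ← Finset.mul_sum, Fin.sum_univ_four]
  have : YY sqr k 0 + YY sqr k 1 + YY sqr k 2 + YY sqr k 3 = 0 := by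
    fin_cases k
    · have a := YY_add 0 1 3 (by rw [h1, h3]; linear_combination (zz sqr 0^2)*hII)
      have b := YY_opp 0 2 (by rw [h2]; ring)
      have c := YY_self 0
      simp only [Fin.zero_eta]
      linear_combination a + b + c
    · have a := YY_add 1 0 2 (by rw [h1, h2]; linear_combination (zz sqr 0^2)*hII)
      have b := YY_opp 1 3 (by rw [h1, h3]; ring)
      have c := YY_self 1
      simp only [Fin.mk_one]
      linear_combination a + b + c
    · have a := YY_add 2 1 3 (by rw [h1, h2, h3]; linear_combination (zz sqr 0^2)*hII)
      have b := YY_opp 2 0 (by rw [h2])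
      have c := YY_self 2
      change YY sqr 2 0 + YY sqr 2 1 + YY sqr 2 2 + YY sqr 2 3 = 0
      linear_combination a + b + c
    · have a := YY_add 3 0 2 (by rw [h2, h3]; linear_combination (zz sqr 0^2)*hII)
      have b := YY_opp 3 1 (by rw [h1, h3]; ring)
      have c := YY_self 3
      change YY sqr 3 0 + YY sqr 3 1 + YY sqr 3 2 + YY sqr 3 3 = 0
      linear_combination a + b + c
  rw [this, mul_zero]

lemma db_sq : db sqr = 4 := by
  have e : pairs = {(0,1),(0,2),(0,3),(1,2),(1,3),(2,3)} := by decide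
  have c1 : 2 * Real.sin (Real.pi/4) = √2 := by rw [Real.sin_pi_div_four]; ring
  have s01 : SS sqr (0,1) = √2 := by
    rw [← c1, SS]; congr 2; simp [sqr]; ring
  have s12 : SS sqr (1,2) = √2 := by
    rw [← c1, SS]; congr 2; simp [sqr]; ring
  have s23 : SS sqr (2,3) = √2 := by
    rw [← c1, SS]; congr 2; simp [sqr]; ring
  have s02 : SS sqr (0,2) = 2 := by
    rw [SS, show (sqr (0,2).2 - sqr (0,2).1)/2 = Real.pi/2 by simp [sqr]]; simp
  have s13 : SS sqr (1,3) = 2 := by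
    rw [SS, show (sqr (1,3).2 - sqr (1,3).1)/2 = Real.pi/2 by simp [sqr]; ring]; simp
  have s03 : SS sqr (0,3) = √2 := by
    rw [← c1, SS, ← Real.sin_pi_sub]; congr 2; simp [sqr]; ring
  rw [db, e, ← Complex.ofReal_prod]
  have : ∏ i ∈ ({(0,1),(0,2),(0,3),(1,2),(1,3),(2,3)} : Finset (Fin 4 × Fin 4)), √(SS sqr i) = 4 := by
    rw [Finset.prod_insert (by decide), Finset.prod_insert (by decide), Finset.prod_insert (by decide),
      Finset.prod_insert (by decide), Finset.prod_insert (by decide), Finset.prod_singleton,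
      s01, s02, s03, s12, s13, s23]
    have h1 := Real.mul_self_sqrt (Real.sqrt_nonneg 2)
    have h2 : √2 * √2 = (2:ℝ) := Real.mul_self_sqrt (by norm_num)
    calc _ = (√√2 * √√2) * (√√2 * √√2) * (√2 * √2) := by ring
      _ = 4 := by rw [h1, h2]; norm_num
  rw [this]; norm_num

lemma sum_sqr : ∑ k, ((sqr k : ℝ) : ℂ) = 0 := by
  simp [Fin.sum_univ_four, sqr]; ring

lemma initial (c4 : ℂ) (h : Tendsto (fun N : ℕ => ((N:ℂ)+1) * (AA sqr (N+1)).det) atTop (𝓝 (4 * c4))) :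
    Tendsto (fun N => uu N sqr) atTop (𝓝 (uba c4 sqr)) := by
  unfold uu uba
  refine Tendsto.prodMk_nhds ?_ (Tendsto.prodMk_nhds ?_ (Tendsto.prodMk_nhds ?_ (Tendsto.prodMk_nhds ?_
    (Tendsto.prodMk_nhds ?_ ?_))))
  · rw [tendsto_pi_nhds]; intro k; rw [Eb_sq]; exact tendsto_EE_sq k
  · rw [tendsto_pi_nhds]; intro k; rw [Eb_sq]; simp_rw [JJ_sq]
    exact ((tendsto_EE_sq k).const_mul (-4)).inv₀ (by simp)
  · rw [tendsto_pi_nhds]; intro k; simp_rw [hh_sq]; exact tendsto_const_nhds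
  · rw [tendsto_pi_nhds]; intro k; simp_rw [qq_sq, qb_sq]; exact tendsto_const_nhds
  · unfold dd; rw [sum_sqr, db_sq, mul_comm c4]; simpa using h
  · unfold bbar; rw [sum_sqr]; simp_rw [bb_sq]; 
    have := tendsto_xz.comp tendsto_div4
    simpa [Function.comp_def] using this

end Fermi
end

noncomputable section
namespace Fermi
open Filter Topology Set

/-- accelerated alternating term -/
def TT (q : ℕ → ℂ) (m : ℕ) : ℂ := (-1)^m / 8 * (q m - 3 * q (m+1) + 3 * q (m+2) - q (m+3))
def HH (q : ℕ → ℂ) (n : ℕ) : ℂ := (-1)^n * (7/8 * q n - 1/2 * q (n+1) + 1/8 * q (n+2))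

lemma TT_sum (q : ℕ → ℂ) (n : ℕ) :
    HH q 0 + ∑ m ∈ Finset.range n, TT q m = ∑ m ∈ Finset.range n, (-1)^m * q m + HH q n := by
  induction n with
  | zero => simp
  | succ n ih =>
    rw [Finset.sum_range_succ, Finset.sum_range_succ, ← add_assoc, ih]
    simp only [TT, HH, pow_succ]
    ring

def qz (s : ℂ) (n : ℕ) : ℂ := ((n:ℂ)+1)^(-s)

/-- mean value step -/
lemma mv_step (f f' : ℝ → ℂ) (a B : ℝ) (hf : ∀ x, a ≤ x → HasDerivAt f (f' x) x)
    (hB : ∀ x, a ≤ x → ‖f' x‖ ≤ B) (x : ℝ) (hx : a ≤ x) : ‖f (x+1) - f x‖ ≤ B := by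
  have := norm_image_sub_le_of_norm_deriv_le_segment' (f := f) (f' := f') (a := x) (b := x+1) (C := B)
    (fun y hy => (hf y (hx.trans hy.1)).hasDerivWithinAt) (fun y hy => hB y (hx.trans hy.1)) (x+1)
    ⟨by linarith, le_refl _⟩
  simpa using this

lemma d_cpow (s : ℂ) (x : ℝ) (hx : 0 < x) :
    HasDerivAt (fun y : ℝ => (y:ℂ)^(-s)) (-s * (x:ℂ)^(-(s+1))) x := by
  have h := (hasDerivAt_id (x:ℂ)).cpow_const (c := -s) (Or.inl (by simpa using hx))
  have := h.comp_ofReal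
  simp only [id, mul_one] at this
  convert this using 2
  ring_nf

lemma shiftD (f f' : ℝ → ℂ) (a : ℝ) (hf : ∀ x, a ≤ x → HasDerivAt f (f' x) x) (x : ℝ) (hx : a ≤ x) :
    HasDerivAt (fun y => f (y+1) - f y) (f' (x+1) - f' x) x :=
  ((hf (x+1) (by linarith)).comp_add_const x 1).sub (hf x hx)

lemma TT_bound (s : ℂ) (hs : -(3/2) ≤ s.re) (hs2 : ‖s‖ ≤ 10) (m : ℕ) :
    ‖TT (qz s) m‖ ≤ 165 * ((m:ℝ)+1)^(-(3/2:ℝ)) := by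
  set a : ℝ := (m:ℝ)+1 with ha
  have ha1 : 1 ≤ a := by rw [ha]; have : (0:ℝ) ≤ m := Nat.cast_nonneg m; linarith
  set f0 : ℝ → ℂ := fun y => (y:ℂ)^(-s)
  set f1 : ℝ → ℂ := fun y => -s * (y:ℂ)^(-(s+1))
  set f2 : ℝ → ℂ := fun y => -s * (-(s+1) * (y:ℂ)^(-(s+1+1)))
  set f3 : ℝ → ℂ := fun y => -s * (-(s+1) * (-(s+1+1) * (y:ℂ)^(-(s+1+1+1))))
  have h0 : ∀ x, a ≤ x → HasDerivAt f0 (f1 x) x := fun x hx => d_cpow s x (by linarith)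
  have h1 : ∀ x, a ≤ x → HasDerivAt f1 (f2 x) x := fun x hx => (d_cpow (s+1) x (by linarith)).const_mul _
  have h2 : ∀ x, a ≤ x → HasDerivAt f2 (f3 x) x := fun x hx =>
    ((d_cpow (s+1+1) x (by linarith)).const_mul _).const_mul _
  set B : ℝ := 1320 * a^(-(3/2:ℝ)) with hB
  have h3 : ∀ x, a ≤ x → ‖f3 x‖ ≤ B := by
    intro x hx
    have n1 : ‖s+1‖ ≤ 11 := (norm_add_le _ _).trans (by simp; linarith)
    have n2 : ‖s+1+1‖ ≤ 12 := (norm_add_le _ _).trans (by simp; linarith)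
    have hx0 : 0 < x := by linarith
    have n3 : ‖(x:ℂ)^(-(s+1+1+1))‖ ≤ a^(-(3/2:ℝ)) := by
      rw [Complex.norm_cpow_eq_rpow_re_of_pos hx0]
      calc x ^ (-(s+1+1+1)).re ≤ x ^ (-(3/2:ℝ)) := by
            apply Real.rpow_le_rpow_of_exponent_le (by linarith)
            simp; linarith
        _ ≤ a ^ (-(3/2:ℝ)) := Real.rpow_le_rpow_of_nonpos (by linarith) hx (by norm_num)
    simp only [f3, norm_mul, norm_neg]
    calc ‖s‖ * (‖s+1‖ * (‖s+1+1‖ * ‖(x:ℂ)^(-(s+1+1+1))‖)) ≤ 10 * (11 * (12 * a^(-(3/2:ℝ)))) := by gcongr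
      _ = B := by rw [hB]; ring
  have k1 := mv_step f2 f3 a B h2 h3
  have k2 := mv_step _ _ a B (shiftD f1 f2 a h1) k1
  have k3 := mv_step _ _ a B (shiftD _ _ a (shiftD f0 f1 a h0)) k2 a le_rfl
  have e : TT (qz s) m = -((-1)^m / 8) * (f0 (a+1+1+1) - f0 (a+1+1) - (f0 (a+1+1) - f0 (a+1)) - (f0 (a+1+1) - f0 (a+1) - (f0 (a+1) - f0 a))) := by
    simp only [TT, qz, f0, ha]
    push_cast
    rw [show (m:ℂ)+1+1+1+1 = m+3+1 by ring, show (m:ℂ)+1+1+1 = m+2+1 by ring]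
    ring
  rw [e, norm_mul]
  have : ‖-((-1:ℂ)^m / 8)‖ = 1/8 := by simp
  rw [this]
  linarith

lemma summable_u : Summable (fun m : ℕ => 165 * ((m:ℝ)+1)^(-(3/2:ℝ))) := by
  have h := (Real.summable_nat_rpow (p := -(3/2:ℝ))).mpr (by norm_num)
  have h2 := (summable_nat_add_iff 1).mpr h
  exact (h2.congr fun m => by push_cast; rfl).mul_left 165

def UU : Set ℂ := {s | -(3/2) < s.re} ∩ {s | s.re - s.im < 1/2} ∩ Metric.ball 0 10

lemma UU_open : IsOpen UU :=
  ((isOpen_lt continuous_const Complex.continuous_re).inter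
    (isOpen_lt (Complex.continuous_re.sub Complex.continuous_im) continuous_const)).inter Metric.isOpen_ball

lemma UU_convex : Convex ℝ UU := by
  refine (Convex.inter ?_ ?_).inter (convex_ball _ _)
  · exact convex_halfSpace_re_gt _
  · exact convex_halfSpace_lt (f := fun s : ℂ => s.re - s.im) (IsLinearMap.mk (by intros; simp; ring) (by intros; simp; ring)) _

lemma UU_neg_one : (-1:ℂ) ∈ UU := by
  refine ⟨⟨?_, ?_⟩, ?_⟩ <;> simp <;> norm_num

lemma UU_ne_one (s : ℂ) (h : s ∈ UU) : s ≠ 1 := by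
  rintro rfl
  have := h.1.2
  simp at this; norm_num at this

def z0 : ℂ := ⟨2, 3⟩
lemma UU_z0 : z0 ∈ UU := by
  refine ⟨⟨?_, ?_⟩, ?_⟩
  · simp [z0]; norm_num
  · simp [z0]; norm_num
  · rw [mem_ball_zero_iff]
    refine (Complex.norm_le_abs_re_add_abs_im _).trans_lt ?_
    simp [z0]; norm_num

lemma qz_diff (n : ℕ) (s : ℂ) : HasDerivAt (fun s => qz s n) (-(Complex.log ((n:ℂ)+1)) * qz s n) s := by
  have hn : (n:ℂ)+1 ≠ 0 := by exact_mod_cast Nat.succ_ne_zero n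
  have := (hasDerivAt_neg s).const_cpow (c := (n:ℂ)+1) (Or.inl hn)
  unfold qz
  convert this using 1
  ring

def qd (s : ℂ) (n : ℕ) : ℂ := -(Complex.log ((n:ℂ)+1)) * qz s n

lemma TT_diff (n : ℕ) (s : ℂ) : HasDerivAt (fun s => TT (qz s) n) (TT (qd s) n) s := by
  unfold TT
  exact ((((qz_diff n s).sub ((qz_diff (n+1) s).const_mul 3)).add ((qz_diff (n+2) s).const_mul 3)).sub
    (qz_diff (n+3) s)).const_mul _

lemma HH_diff (n : ℕ) (s : ℂ) : HasDerivAt (fun s => HH (qz s) n) (HH (qd s) n) s := by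
  unfold HH
  exact ((((qz_diff n s).const_mul (7/8)).sub ((qz_diff (n+1) s).const_mul (1/2))).add
    ((qz_diff (n+2) s).const_mul (1/8))).const_mul _

def eta (s : ℂ) : ℂ := HH (qz s) 0 + ∑' m, TT (qz s) m

lemma UU_bound (m : ℕ) (s : ℂ) (h : s ∈ UU) : ‖TT (qz s) m‖ ≤ 165 * ((m:ℝ)+1)^(-(3/2:ℝ)) :=
  TT_bound s h.1.1.le (by have := h.2; rw [mem_ball_zero_iff] at this; exact this.le) m

lemma eta_diff : DifferentiableOn ℂ eta UU := by
  unfold eta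
  refine DifferentiableOn.add (fun s _ => (HH_diff 0 s).differentiableAt.differentiableWithinAt) ?_
  exact Complex.differentiableOn_tsum_of_summable_norm summable_u
    (fun i s _ => (TT_diff i s).differentiableAt.differentiableWithinAt) UU_open UU_bound

lemma eta_deriv : Tendsto (fun n => ∑ m ∈ Finset.range n, (-1)^m * qd (-1) m + HH (qd (-1)) n) atTop
    (𝓝 (deriv eta (-1))) := by
  have h := Complex.hasSum_deriv_of_summable_norm summable_u
    (fun i s _ => (TT_diff i s).differentiableAt.differentiableWithinAt) UU_open UU_bound UU_neg_one
  have hd : DifferentiableAt ℂ (fun s => ∑' m, TT (qz s) m) (-1) :=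
    (Complex.differentiableOn_tsum_of_summable_norm summable_u
    (fun i s _ => (TT_diff i s).differentiableAt.differentiableWithinAt) UU_open UU_bound).differentiableAt
      (UU_open.mem_nhds UU_neg_one)
  have e : deriv eta (-1) = HH (qd (-1)) 0 + deriv (fun s => ∑' m, TT (qz s) m) (-1) :=
    ((HH_diff 0 (-1)).add hd.hasDerivAt).deriv
  rw [e]
  have h2 := (h.tendsto_sum_nat).const_add (HH (qd (-1)) 0)
  refine h2.congr fun n => ?_
  rw [← TT_sum]
  congr 1
  exact Finset.sum_congr rfl fun i _ => (TT_diff i (-1)).deriv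

lemma alt_sum (s : ℂ) (M : ℕ) : ∑ m ∈ Finset.range (2*M), (-1)^m * qz s m =
    ∑ m ∈ Finset.range (2*M), qz s m - 2 * 2^(-s) * ∑ m ∈ Finset.range M, qz s m := by
  induction M with
  | zero => simp
  | succ M ih =>
    rw [show 2*(M+1) = 2*M+1+1 by ring, Finset.sum_range_succ, Finset.sum_range_succ, ih,
      Finset.sum_range_succ _ (2*M+1), Finset.sum_range_succ _ (2*M), Finset.sum_range_succ _ M]
    have e : qz s (2*M+1) = 2^(-s) * qz s M := by
      unfold qz
      have := Complex.natCast_mul_natCast_cpow 2 (M+1) (-s)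
      push_cast at this ⊢
      rw [← this]; congr 1; ring
    rw [e]
    simp only [pow_succ, pow_mul]; norm_num; ring

lemma eta_eq (s : ℂ) (h : s ∈ UU) (hs : 1 < s.re) : eta s = (1 - 2 * 2^(-s)) * riemannZeta s := by
  have hsum : HasSum (fun m => qz s m) (riemannZeta s) := by
    have h1 := zeta_eq_tsum_one_div_nat_add_one_cpow hs
    have h2 : Summable (fun n : ℕ => qz s n) := by
      have := (summable_nat_add_iff 1).mpr (Complex.summable_one_div_nat_cpow.mpr hs)
      refine this.congr fun n => ?_
      simp [qz, Complex.cpow_neg]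
    rw [h1]
    convert h2.hasSum using 3 with n
    simp [qz, Complex.cpow_neg]
  have h0 := hsum.tendsto_sum_nat
  have hq : Tendsto (qz s) atTop (𝓝 0) := hsum.summable.tendsto_atTop_zero
  have hsT : Summable (fun m => TT (qz s) m) := Summable.of_norm_bounded summable_u (fun m => UU_bound m s h)
  have hT := (hsT.hasSum.tendsto_sum_nat).const_add (HH (qz s) 0)
  have h2M : Tendsto (fun M : ℕ => 2 * M) atTop atTop := tendsto_id.const_mul_atTop' (by norm_num)
  have hT2 := hT.comp h2M
  refine tendsto_nhds_unique hT2 ?_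
  have hb : Tendsto (fun n => HH (qz s) n) atTop (𝓝 0) := by
    have t1 := ((hq.const_mul (7/8)).sub ((hq.comp (tendsto_add_atTop_nat 1)).const_mul (1/2))).add
      ((hq.comp (tendsto_add_atTop_nat 2)).const_mul (1/8))
    simp only [mul_zero, sub_zero, add_zero] at t1
    rw [tendsto_zero_iff_norm_tendsto_zero] at t1 ⊢
    refine t1.congr fun n => ?_
    simp [HH]
  have := ((h0.comp h2M).sub (h0.const_mul (2 * 2^(-s)))).add (hb.comp h2M)
  convert this using 1
  · ext M
    simp only [Function.comp]
    rw [TT_sum, alt_sum]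
  · congr 1; ring

lemma eta_deriv_val : deriv eta (-1) = -(1/3) * Complex.log 2 - 3 * deriv riemannZeta (-1) := by
  have hg : ∀ s, s ≠ 1 → HasDerivAt (fun s => (1 - 2 * 2^(-s)) * riemannZeta s)
      (2 * (2^(-s) * Complex.log 2) * riemannZeta s + (1 - 2 * 2^(-s)) * deriv riemannZeta s) s := by
    intro s hs
    have h1 := (hasDerivAt_neg s).const_cpow (c := (2:ℂ)) (Or.inl two_ne_zero)
    have h2 := ((h1.const_mul 2).const_sub 1).mul (differentiableAt_riemannZeta hs).hasDerivAt
    exact h2.congr_deriv (by ring)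
  have hga : AnalyticOnNhd ℂ (fun s => (1 - 2 * 2^(-s)) * riemannZeta s) UU :=
    DifferentiableOn.analyticOnNhd (fun s hs => (hg s (UU_ne_one s hs)).differentiableAt.differentiableWithinAt) UU_open
  have hea : AnalyticOnNhd ℂ eta UU := eta_diff.analyticOnNhd UU_open
  have hev : eta =ᶠ[𝓝 z0] (fun s => (1 - 2 * 2^(-s)) * riemannZeta s) := by
    have o : IsOpen (UU ∩ {s | 1 < s.re}) := UU_open.inter (isOpen_lt continuous_const Complex.continuous_re)
    filter_upwards [o.mem_nhds ⟨UU_z0, by simp [z0]⟩] with s hs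
    exact eta_eq s hs.1 hs.2
  have heq := hea.eqOn_of_preconnected_of_eventuallyEq hga UU_convex.isPreconnected UU_z0 hev
  have hev2 : eta =ᶠ[𝓝 (-1)] (fun s => (1 - 2 * 2^(-s)) * riemannZeta s) := by
    filter_upwards [UU_open.mem_nhds UU_neg_one] with s hs using heq hs
  rw [hev2.deriv_eq, (hg (-1) (by norm_num)).deriv]
  have hz : riemannZeta (-1) = -1/12 := by
    have := riemannZeta_neg_nat_eq_bernoulli' 1
    simp [bernoulli'_two] at this
    rw [this]; norm_num
  rw [hz]
  simp
  ring

end Fermi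
end

noncomputable section
namespace Fermi
open Filter Topology Set

def wz (m : ℕ) : ℝ := 2/Real.pi * Real.Wallis.W m

lemma wz_pos (m) : 0 < wz m := mul_pos (div_pos two_pos Real.pi_pos) (Real.Wallis.W_pos m)

lemma wz_succ (m : ℕ) : wz (m+1) = wz m * (((2*m+2)/(2*m+1)) * ((2*m+2)/(2*m+3))) := by
  rw [wz, Real.Wallis.W_succ, wz]; ring

lemma wz_tendsto : Tendsto wz atTop (𝓝 1) := by
  have := Real.Wallis.tendsto_W_nhds_pi_div_two.const_mul (2/Real.pi)
  rwa [show 2/Real.pi * (Real.pi/2) = 1 by field_simp] at this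

lemma wz_xz (m) : (xz m)⁻¹ = (wz m : ℂ) := by
  rw [xz, wz]; push_cast
  rw [inv_div, div_div_eq_mul_div]; ring

lemma tendsto_frac (a b : ℝ) : Tendsto (fun m : ℕ => (4*(m:ℝ)+a)/(4*(m:ℝ)+b)) atTop (𝓝 1) := by
  have h4 : Tendsto (fun m : ℕ => 4*(m:ℝ)+b) atTop atTop :=
    tendsto_atTop_add_const_right _ _ (tendsto_natCast_atTop_atTop.const_mul_atTop (by norm_num))
  have : Tendsto (fun m : ℕ => 1 + (a-b)/(4*(m:ℝ)+b)) atTop (𝓝 (1+0)) :=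
    (h4.const_div_atTop _).const_add 1
  rw [add_zero] at this
  refine this.congr' ?_
  filter_upwards [h4.eventually_ne_atTop 0] with m hm
  field_simp; ring

lemma wz_upper (m : ℕ) : wz m ≤ (4*m+2)/(4*m+3) := by
  have hmono : Monotone (fun m : ℕ => wz m * ((4*(m:ℝ)+3)/(4*(m:ℝ)+2))) := by
    refine monotone_nat_of_le_succ fun m => ?_
    rw [wz_succ, mul_assoc]
    refine mul_le_mul_of_nonneg_left ?_ (wz_pos m).le
    push_cast
    have h0 : (0:ℝ) ≤ m := Nat.cast_nonneg m
    rw [div_mul_div_comm, div_mul_div_comm, div_le_div_iff₀ (by positivity) (by positivity)]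
    nlinarith [mul_nonneg h0 h0, mul_nonneg h0 (mul_nonneg h0 h0)]
  have hl := wz_tendsto.mul (tendsto_frac 3 2)
  have := hmono.ge_of_tendsto hl m
  rw [mul_one] at this
  have h0 : (0:ℝ) ≤ m := Nat.cast_nonneg m
  rw [mul_div_assoc', div_le_one (by positivity)] at this
  rw [le_div_iff₀ (by positivity)]
  exact this

lemma wz_lower (m : ℕ) : (4*m+1)/(4*m+2) ≤ wz m := by
  have hmono : Antitone (fun m : ℕ => wz m * ((4*(m:ℝ)+2)/(4*(m:ℝ)+1))) := by
    refine antitone_nat_of_succ_le fun m => ?_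
    rw [wz_succ, mul_assoc]
    refine mul_le_mul_of_nonneg_left ?_ (wz_pos m).le
    push_cast
    have h0 : (0:ℝ) ≤ m := Nat.cast_nonneg m
    rw [div_mul_div_comm, div_mul_div_comm, div_le_div_iff₀ (by positivity) (by positivity)]
    nlinarith [mul_nonneg h0 h0, mul_nonneg h0 (mul_nonneg h0 h0)]
  have hl := wz_tendsto.mul (tendsto_frac 2 1)
  have := hmono.le_of_tendsto hl m
  rw [mul_one] at this
  have h0 : (0:ℝ) ≤ m := Nat.cast_nonneg m
  rw [mul_div_assoc', one_le_div (by positivity)] at this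
  rw [div_le_iff₀ (by positivity)]
  exact this

lemma tendsto_m_div (a : ℝ) : Tendsto (fun m : ℕ => -((m:ℝ)/(4*m+a))) atTop (𝓝 (-(1/4))) := by
  have := ((tendsto_frac 0 a).const_mul (1/4)).neg
  rw [mul_one] at this
  exact this.congr fun m => by ring

lemma wz_log : Tendsto (fun m : ℕ => m * Real.log (wz m)) atTop (𝓝 (-(1/4))) := by
  refine tendsto_of_tendsto_of_tendsto_of_le_of_le (tendsto_m_div 1) (tendsto_m_div 3) (fun m => ?_) (fun m => ?_)
  · have h0 : (0:ℝ) ≤ m := Nat.cast_nonneg m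
    have h1 := Real.one_sub_inv_le_log_of_pos (wz_pos m)
    have h2 : (wz m)⁻¹ ≤ (4*m+2)/(4*m+1) := by
      rw [← inv_div]; exact inv_anti₀ (by positivity) (wz_lower m)
    have h3 : -(1/(4*(m:ℝ)+1)) ≤ Real.log (wz m) := by
      have : (1:ℝ) - (4*m+2)/(4*m+1) = -(1/(4*(m:ℝ)+1)) := by field_simp; ring
      linarith
    have := mul_le_mul_of_nonneg_left h3 h0
    simp only
    calc _ = (m:ℝ) * -(1/(4*(m:ℝ)+1)) := by ring
      _ ≤ _ := this
  · have h0 : (0:ℝ) ≤ m := Nat.cast_nonneg m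
    have h1 := Real.log_le_sub_one_of_pos (wz_pos m)
    have h2 := wz_upper m
    have h3 : Real.log (wz m) ≤ -(1/(4*(m:ℝ)+3)) := by
      have : (4*(m:ℝ)+2)/(4*m+3) - 1 = -(1/(4*(m:ℝ)+3)) := by field_simp; ring
      linarith
    have := mul_le_mul_of_nonneg_left h3 h0
    simp only
    calc _ ≤ (m:ℝ) * -(1/(4*(m:ℝ)+3)) := this
      _ = _ := by ring

/-- `∑_{m<n} (-1)^(m+1) (m+1) log(m+1)` -/
def Sl (n : ℕ) : ℝ := ∑ m ∈ Finset.range n, (-1)^m * (-(((m:ℝ)+1) * Real.log ((m:ℝ)+1)))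
def Ld (M : ℕ) : ℝ := ∑ m ∈ Finset.range M, Real.log (wz m)

lemma Ld_eq (M : ℕ) : Ld M = M * Real.log (wz M) + M * Real.log (2*M+1) - Sl (2*M) := by
  induction M with
  | zero => simp [Ld, Sl]
  | succ M ih =>
    rw [Ld, Finset.sum_range_succ, ← Ld, ih, wz_succ, Sl, Sl, show 2*(M+1) = 2*M+1+1 by ring,
      Finset.sum_range_succ, Finset.sum_range_succ]
    have h0 : (0:ℝ) ≤ M := Nat.cast_nonneg M
    rw [Real.log_mul (wz_pos M).ne' (by positivity), Real.log_mul (by positivity) (by positivity),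
      Real.log_div (by positivity) (by positivity), Real.log_div (by positivity) (by positivity)]
    simp only [pow_succ, pow_mul]
    push_cast
    norm_num
    rw [show 2*((M:ℝ)+1)+1 = 2*M+3 by ring, show 2*(M:ℝ)+1+1 = 2*M+2 by ring]
    ring

lemma qd_neg_one (m : ℕ) : qd (-1) m = ((-(((m:ℝ)+1) * Real.log ((m:ℝ)+1)) : ℝ) : ℂ) := by
  rw [qd, qz]
  have h0 : (0:ℝ) ≤ (m:ℝ)+1 := by positivity
  push_cast
  rw [Complex.ofReal_log h0]
  push_cast
  simp; ring

def bd (M : ℕ) : ℝ := -(7/8)*((2*M+1)*Real.log (2*M+1)) + (M+1)*Real.log (2*M+2) - 1/8*((2*M+3)*Real.log (2*M+3))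

lemma Sl_tendsto : Tendsto (fun M => Sl (2*M) + bd M) atTop (𝓝 (deriv eta (-1)).re) := by
  have h2M : Tendsto (fun M : ℕ => 2 * M) atTop atTop := tendsto_id.const_mul_atTop' (by norm_num)
  have h := (Complex.continuous_re.tendsto _).comp (eta_deriv.comp h2M)
  refine h.congr fun M => ?_
  have e : ∑ m ∈ Finset.range (2*M), (-1)^m * qd (-1) m + HH (qd (-1)) (2*M) = ((Sl (2*M) + bd M : ℝ) : ℂ) := by
    push_cast
    congr 1
    · rw [Sl]; push_cast
      refine Finset.sum_congr rfl fun m _ => ?_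
      rw [qd_neg_one]; push_cast; rfl
    · rw [HH, qd_neg_one, qd_neg_one, qd_neg_one, bd, pow_mul]
      push_cast
      norm_num
      rw [show 2*(M:ℝ)+1+1 = 2*M+2 by ring, show 2*(M:ℝ)+2+1 = 2*M+3 by ring]
      ring
  simp only [Function.comp, e, Complex.ofReal_re]

lemma tlog (a : ℝ) : Tendsto (fun M : ℕ => (2*(M:ℝ)) * Real.log (1 + a/(2*M))) atTop (𝓝 a) :=
  (Real.tendsto_mul_log_one_add_div_atTop a).comp
    (tendsto_natCast_atTop_atTop.const_mul_atTop (by norm_num : (0:ℝ) < 2))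

lemma tlog0 (a : ℝ) : Tendsto (fun M : ℕ => Real.log (1 + a/(2*(M:ℝ)))) atTop (𝓝 0) := by
  have h : Tendsto (fun M : ℕ => 1 + a/(2*(M:ℝ))) atTop (𝓝 (1+0)) :=
    ((tendsto_natCast_atTop_atTop.const_mul_atTop (by norm_num : (0:ℝ) < 2)).const_div_atTop a).const_add 1
  rw [add_zero] at h
  have := (Real.continuousAt_log one_ne_zero).tendsto.comp h
  rwa [Real.log_one] at this

lemma bd_tendsto : Tendsto (fun M : ℕ => M * Real.log (2*M+1) + 1/4 * Real.log M + bd M) atTop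
    (𝓝 (1/4 - 1/4 * Real.log 2)) := by
  have t := ((((tlog 1).const_mul (-(3/8))).add ((tlog 2).const_mul (1/2))).add ((tlog 3).const_mul (-(1/8)))).add
    ((((tlog0 1).const_mul (-(7/8))).add (tlog0 2)).add ((tlog0 3).const_mul (-(3/8))))
  have t2 := t.sub_const (1/4 * Real.log 2)
  refine (t2.congr' ?_).trans_eq ?_
  · filter_upwards [eventually_gt_atTop 0] with M hM
    have hM : (0:ℝ) < M := by exact_mod_cast hM
    have e : ∀ a : ℝ, 0 < a → Real.log (2*M+a) = Real.log 2 + Real.log M + Real.log (1 + a/(2*M)) := by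
      intro a ha
      rw [← Real.log_mul (by norm_num) hM.ne', ← Real.log_mul (by positivity) (by positivity)]
      congr 1; field_simp
    rw [bd, e 1 one_pos, e 2 two_pos, e 3 three_pos]
    ring
  · congr 1; ring

lemma Ld_tendsto : Tendsto (fun M : ℕ => Ld M + 1/4 * Real.log M) atTop
    (𝓝 (-(1/4) * Real.log 2 - (deriv eta (-1)).re)) := by
  have := (wz_log.add bd_tendsto).sub Sl_tendsto
  refine (this.congr fun M => ?_).trans_eq ?_
  · rw [Ld_eq]; ring
  · congr 1; ring

lemma eta_real : (((deriv eta (-1)).re : ℝ) : ℂ) = deriv eta (-1) := by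
  have h2M : Tendsto (fun M : ℕ => 2 * M) atTop atTop := tendsto_id.const_mul_atTop' (by norm_num)
  have h := (Complex.continuous_im.tendsto _).comp (eta_deriv)
  have h2 : (deriv eta (-1)).im = 0 := by
    refine tendsto_nhds_unique h ?_
    refine tendsto_const_nhds.congr fun n => ?_
    have e : ∑ m ∈ Finset.range n, (-1)^m * qd (-1) m + HH (qd (-1)) n = 
      ((∑ m ∈ Finset.range n, (-1)^m * (-(((m:ℝ)+1) * Real.log ((m:ℝ)+1))) + 
        (-1)^n * (7/8 * (-(((n:ℝ)+1) * Real.log ((n:ℝ)+1))) - 1/2 * (-((((n+1:ℕ):ℝ)+1) * Real.log (((n+1:ℕ):ℝ)+1))) + 1/8 * (-((((n+2:ℕ):ℝ)+1) * Real.log (((n+2:ℕ):ℝ)+1)))) : ℝ) : ℂ) := by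
      simp only [HH, qd_neg_one]; push_cast; rfl
    simp only [Function.comp, e, Complex.ofReal_im]
  apply Complex.ext <;> simp [h2]

def cc : ℂ := (2 : ℂ) ^ ((1 : ℂ) / 3) * Complex.exp (12 * deriv riemannZeta (-1))

lemma cc_eq : cc = ((Real.exp (4 * (-(1/4) * Real.log 2 - (deriv eta (-1)).re)) : ℝ) : ℂ) := by
  have h2 : ((Real.log 2 : ℝ) : ℂ) = Complex.log 2 := by
    rw [Complex.ofReal_log (by norm_num)]; norm_num
  rw [Complex.ofReal_exp]
  push_cast
  rw [eta_real, eta_deriv_val, h2, cc, Complex.cpow_def_of_ne_zero two_ne_zero, ← Complex.exp_add]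
  congr 1; ring

lemma det_sq_prod (N : ℕ) : (AA sqr N).det = ((∏ n ∈ Finset.range N, wz (n/4) : ℝ) : ℂ) := by
  induction N with
  | zero => simp
  | succ N ih =>
    rw [Finset.prod_range_succ, Complex.ofReal_mul, ← ih, det_sq_rec N, ← wz_xz, mul_assoc,
      mul_inv_cancel₀ (xz_ne _), mul_one]

def Dm (M : ℕ) : ℝ := ∏ m ∈ Finset.range M, wz m

lemma Dm_four (M : ℕ) : ∏ n ∈ Finset.range (4*M), wz (n/4) = Dm M ^ 4 := by
  induction M with
  | zero => simp [Dm]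
  | succ M ih =>
    rw [show 4*(M+1) = 4*M+1+1+1+1 by ring, Finset.prod_range_succ, Finset.prod_range_succ, Finset.prod_range_succ,
      Finset.prod_range_succ, ih, Dm, Dm, Finset.prod_range_succ]
    rw [show (4*M)/4 = M by omega, show (4*M+1)/4 = M by omega, show (4*M+1+1)/4 = M by omega, show (4*M+1+1+1)/4 = M by omega]
    ring

lemma prod_eq (N : ℕ) : ∏ n ∈ Finset.range N, wz (n/4) = Dm (N/4) ^ 4 * wz (N/4) ^ (N%4) := by
  conv_lhs => rw [← Nat.div_add_mod N 4]
  rw [Finset.prod_range_add, Dm_four]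
  congr 1
  rw [Finset.prod_congr rfl (g := fun _ => wz (N/4))]
  · simp
  · intro i hi
    have := Finset.mem_range.mp hi
    congr 1; omega

lemma Dm_tendsto : Tendsto (fun M : ℕ => (M:ℝ) * Dm M ^ 4) atTop
    (𝓝 (Real.exp (4 * (-(1/4) * Real.log 2 - (deriv eta (-1)).re)))) := by
  have := (Real.continuous_exp.tendsto _).comp (Ld_tendsto.const_mul 4)
  refine this.congr' ?_
  filter_upwards [eventually_gt_atTop 0] with M hM
  have hM : (0:ℝ) < M := by exact_mod_cast hM
  have e : Real.exp (Ld M) = Dm M := by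
    rw [Ld, Real.exp_sum, Dm]
    exact Finset.prod_congr rfl fun m _ => Real.exp_log (wz_pos m)
  simp only [Function.comp]
  rw [show 4 * (Ld M + 1/4 * Real.log M) = (4:ℕ) * Ld M + Real.log M by push_cast; ring, Real.exp_add, Real.exp_log hM,
    Real.exp_nat_mul, e]
  ring

lemma wz_pow_tendsto : Tendsto (fun N : ℕ => wz (N/4) ^ (N%4)) atTop (𝓝 1) := by
  have h := wz_tendsto.comp tendsto_div4
  refine tendsto_of_tendsto_of_tendsto_of_le_of_le (by simpa using h.pow 4) tendsto_const_nhds (fun N => ?_) (fun N => ?_)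
  all_goals
    have h1 : wz (N/4) ≤ 1 := (wz_upper _).trans (by
      have h0 : (0:ℝ) ≤ (N/4:ℕ) := Nat.cast_nonneg _
      rw [div_le_one (by positivity)]; linarith)
    have h0 := (wz_pos (N/4)).le
  · exact pow_le_pow_of_le_one h0 h1 (Nat.mod_lt N (by norm_num)).le
  · exact pow_le_one₀ h0 h1

lemma ratio_tendsto : Tendsto (fun N : ℕ => (N:ℝ) / ((N/4:ℕ):ℝ)) atTop (𝓝 4) := by
  have hm : Tendsto (fun N : ℕ => ((N/4:ℕ):ℝ)) atTop atTop := tendsto_natCast_atTop_atTop.comp tendsto_div4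
  have hu : Tendsto (fun N : ℕ => 4 + 3/((N/4:ℕ):ℝ)) atTop (𝓝 (4+0)) := (hm.const_div_atTop 3).const_add 4
  rw [add_zero] at hu
  refine tendsto_of_tendsto_of_tendsto_of_le_of_le' tendsto_const_nhds hu ?_ ?_
  all_goals
    filter_upwards [hm.eventually_gt_atTop 0] with N hN
    have hmm : (N:ℝ) = 4 * ((N/4 : ℕ):ℝ) + ((N%4 : ℕ):ℝ) := by exact_mod_cast (Nat.div_add_mod N 4).symm
    have h0 : (0:ℝ) ≤ ((N%4 : ℕ):ℝ) := Nat.cast_nonneg _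
    have h4 : ((N%4 : ℕ):ℝ) ≤ 3 := by exact_mod_cast Nat.le_of_lt_succ (Nat.mod_lt N (by norm_num))
  · rw [le_div_iff₀ hN]; linarith
  · rw [div_le_iff₀ hN, add_mul, div_mul_cancel₀ _ hN.ne']; linarith

lemma det_sq_tendsto : Tendsto (fun N : ℕ => ((N:ℂ)+1) * (AA sqr (N+1)).det) atTop (𝓝 (4 * cc)) := by
  have h1 := (ratio_tendsto.mul (Dm_tendsto.comp tendsto_div4)).mul wz_pow_tendsto
  have h2 : Tendsto (fun N : ℕ => (N:ℂ) * (AA sqr N).det) atTop (𝓝 (4 * cc)) := by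
    rw [cc_eq]
    have h3 := (Complex.continuous_ofReal.tendsto _).comp h1
    rw [mul_one] at h3
    push_cast at h3 ⊢
    refine h3.congr' ?_
    filter_upwards [tendsto_div4.eventually_gt_atTop 0] with N hN
    have hN : (0:ℝ) < ((N/4:ℕ):ℝ) := by exact_mod_cast hN
    rw [det_sq_prod, prod_eq]
    simp only [Function.comp]
    rw [← Complex.ofReal_natCast N, ← Complex.ofReal_mul]
    congr 1
    field_simp
  have h3 := h2.comp (tendsto_add_atTop_nat 1)
  refine h3.congr fun N => ?_
  simp

end Fermi
end

noncomputable section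
namespace Fermi
open Matrix Filter Topology Set

def tgt (a b : ℝ) : Fin 4 → ℝ := ![-b, -a, a, b]

lemma tgt_ordered (a b : ℝ) (h1 : 0 < a) (h12 : a < b) (h2 : b < Real.pi) : ordered (tgt a b) := by
  refine ⟨?_, ?_, ?_, ?_⟩ <;> simp [tgt] <;> linarith

def phi (s : ℝ) : ℝ := (1 - Real.cos (Real.pi * s)) / 2
def dphi (s : ℝ) : ℝ := Real.pi * Real.sin (Real.pi * s) / 2

lemma phi_deriv (s : ℝ) : HasDerivAt phi (dphi s) s := by
  have h := ((((hasDerivAt_id s).const_mul Real.pi).cos).const_sub 1).div_const 2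
  refine h.congr_deriv ?_
  simp [dphi]; ring

def pth (τ : Fin 4 → ℝ) (s : ℝ) (k : Fin 4) : ℝ := sqr k + phi s * (τ k - sqr k)

lemma pth_ordered (τ : Fin 4 → ℝ) (h : ordered τ) (s : ℝ) : ordered (pth τ s) := by
  have h0 : 0 ≤ phi s := by have := Real.cos_le_one (Real.pi * s); unfold phi; linarith
  have h1 : phi s ≤ 1 := by have := Real.neg_one_le_cos (Real.pi * s); unfold phi; linarith
  have key : ∀ x y x' y' : ℝ, x < y → x' < y' → x + phi s * (x' - x) < y + phi s * (y' - y) := by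
    intro x y x' y' hx hx'
    rcases eq_or_lt_of_le h0 with h | h
    · rw [← h]; linarith
    · nlinarith [mul_pos h (sub_pos.mpr hx'), mul_nonneg (sub_nonneg.mpr h1) (sub_pos.mpr hx).le]
  obtain ⟨a1, a2, a3, a4⟩ := h
  obtain ⟨b1, b2, b3, b4⟩ := sqr_ordered
  refine ⟨key _ _ _ _ b1 a1, key _ _ _ _ b2 a2, key _ _ _ _ b3 a3, ?_⟩
  have := key _ _ _ _ b4 a4
  simp only [pth]
  linarith

lemma pth_zero (τ) : pth τ 0 = sqr := by ext k; simp [pth, phi]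
lemma pth_one (τ) : pth τ 1 = τ := by ext k; simp [pth, phi]

lemma db_ne (θ : Fin 4 → ℝ) (h : ordered θ) : db θ ≠ 0 := by
  rw [db, Finset.prod_ne_zero_iff]
  rintro ⟨i, j⟩ hp
  have hij : i < j := by simpa [pairs] using hp
  have := Real.sqrt_pos.mpr (SS_pos θ h i j hij)
  exact_mod_cast this.ne'

lemma cc_ne : cc ≠ 0 := by
  rw [cc_eq]; exact_mod_cast (Real.exp_pos _).ne'

lemma tgt_limit (τ : Fin 4 → ℝ) (h : ordered τ) :
    Tendsto (fun N => uu N τ) atTop (𝓝 (uba cc τ)) ∧ ∀ᶠ N in atTop, (AA τ (N+1)).det ≠ 0 := by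
  have ho := pth_ordered τ h
  have hθ : ∀ s k, HasDerivAt (fun t => pth τ t k) (dphi s * (τ k - sqr k)) s := fun s k =>
    ((phi_deriv s).mul_const _).const_add _
  have := path_limit (pth τ) (fun s k => dphi s * (τ k - sqr k)) hθ
    (fun k => by unfold dphi; fun_prop)
    (fun s k i hki => ordered_ne _ (ho s) k i hki) (fun s => uba cc (pth τ s))
    (fun s => d_uba _ _ hθ ho s cc)
    (fun s => mul_ne_zero cc_ne (db_ne _ (ho s))) (fun s => Complex.exp_ne_zero _)
    (by simp only [pth_zero]; exact initial cc det_sq_tendsto)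
    (by simp only [pth_zero]; exact det_sq_ne)
  simpa only [pth_one] using this

/-- main finite-N identity -/
lemma corr_eq (N : ℕ) (τ : Fin 4 → ℝ) (hs : ∑ k, ((τ k : ℝ) : ℂ) = 0) (hA : (AA τ (N+1)).det ≠ 0) :
    ((N:ℂ)+2) * ((-1)^N * Matrix.det (Matrix.of fun j k : Fin N => cof τ ((j : ℤ) - (k : ℤ) - 1))) =
    -Complex.I * dd N τ * ∑ k, EE N τ k * (zz τ k ^ N)⁻¹ := by
  have h1 : (AA τ (N+1))⁻¹ (Fin.last N) 0 * (AA τ (N+1)).det =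
      (-1)^N * Matrix.det (Matrix.of fun j k : Fin N => cof τ ((j : ℤ) - (k : ℤ) - 1)) := by
    rw [Matrix.inv_def, Matrix.smul_apply, Ring.inverse_eq_inv', smul_eq_mul, mul_comm, ← mul_assoc,
      mul_inv_cancel₀ hA, one_mul, Matrix.adjugate_fin_succ_eq_det_submatrix]
    congr 1
    · simp
    · congr 1
      ext j k
      simp only [Matrix.submatrix_apply, AA, toep, Matrix.of_apply, sy, Fin.succAbove_zero, Fin.succAbove_last]
      congr 1
      simp; ring
  rw [← h1, ← mul_assoc, corner N τ hA, dd, hs]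
  simp only [mul_zero, zero_div, Complex.exp_zero, mul_one, EE]
  have hn := nat_ne N
  rw [mul_assoc, mul_assoc (-Complex.I)]
  congr 1
  rw [Finset.sum_mul, Finset.mul_sum]
  refine Finset.sum_congr rfl fun k _ => ?_
  field_simp

lemma tgt_sum (a b : ℝ) : ∑ k, ((tgt a b k : ℝ) : ℂ) = 0 := by
  simp [tgt, Fin.sum_univ_four]

lemma pow_inv_zz (N : ℕ) (τ) (k) : (zz τ k ^ N)⁻¹ = Complex.exp (-(((N:ℝ) * τ k : ℝ) : ℂ) * Complex.I) := by
  rw [zz, ← Complex.exp_nat_mul, ← Complex.exp_neg]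
  congr 1; push_cast; ring

lemma SS_tgt (a b : ℝ) :
    SS (tgt a b) (0,1) = 2 * Real.sin ((b-a)/2) ∧ SS (tgt a b) (2,3) = 2 * Real.sin ((b-a)/2) ∧
    SS (tgt a b) (0,2) = 2 * Real.sin ((a+b)/2) ∧ SS (tgt a b) (1,3) = 2 * Real.sin ((a+b)/2) ∧
    SS (tgt a b) (0,3) = 2 * Real.sin b ∧ SS (tgt a b) (1,2) = 2 * Real.sin a := by
  refine ⟨?_, ?_, ?_, ?_, ?_, ?_⟩ <;> simp only [SS, tgt] <;> congr 2 <;> simp <;> ring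

lemma db_tgt (a b : ℝ) (h1 : 0 < a) (h12 : a < b) (h2 : b < Real.pi) :
    db (tgt a b) = ((8 * Real.sin ((b-a)/2) * Real.sin ((a+b)/2) * Real.sqrt (Real.sin a * Real.sin b) : ℝ) : ℂ) := by
  have ho := tgt_ordered a b h1 h12 h2
  obtain ⟨e1, e2, e3, e4, e5, e6⟩ := SS_tgt a b
  have e : pairs = {(0,1),(0,2),(0,3),(1,2),(1,3),(2,3)} := by decide
  have p1 := SS_pos _ ho 0 1 (by decide)
  have p2 := SS_pos _ ho 0 2 (by decide)
  have p3 := SS_pos _ ho 0 3 (by decide)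
  rw [e1] at p1; rw [e3] at p2; rw [e5] at p3
  rw [db, e, ← Complex.ofReal_prod]
  congr 1
  rw [Finset.prod_insert (by decide), Finset.prod_insert (by decide), Finset.prod_insert (by decide),
      Finset.prod_insert (by decide), Finset.prod_insert (by decide), Finset.prod_singleton,
      e1, e2, e3, e4, e5, e6]
  have q1 := Real.mul_self_sqrt p1.le
  have q2 := Real.mul_self_sqrt p2.le
  have q3 : √(2 * Real.sin b) * √(2 * Real.sin a) = 2 * √(Real.sin a * Real.sin b) := by
    rw [← Real.sqrt_mul p3.le, show 2 * Real.sin b * (2 * Real.sin a) = 2^2 * (Real.sin a * Real.sin b) by ring,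
      Real.sqrt_mul (by norm_num), Real.sqrt_sq (by norm_num)]
  calc _ = (√(2 * Real.sin ((b-a)/2)) * √(2 * Real.sin ((b-a)/2))) * (√(2 * Real.sin ((a+b)/2)) * √(2 * Real.sin ((a+b)/2)))
        * (√(2 * Real.sin b) * √(2 * Real.sin a)) := by ring
    _ = _ := by rw [q1, q2, q3]; ring

lemma exp_helper (x y w : ℂ) (h : x + y = w) : Complex.exp x * Complex.exp y = Complex.exp w := by
  rw [← Complex.exp_add, h]

lemma Eb_tgt (a b : ℝ) (h1 : 0 < a) (h12 : a < b) (h2 : b < Real.pi) :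
    let K : ℂ := 8 * Real.sin ((b-a)/2) * Real.sin ((a+b)/2)
    Eb (tgt a b) 0 = Complex.I / (K * Real.sin b) ∧ Eb (tgt a b) 1 = Complex.I / (K * Real.sin a) ∧
    Eb (tgt a b) 2 = Complex.I / (K * Real.sin a) ∧ Eb (tgt a b) 3 = Complex.I / (K * Real.sin b) := by
  intro K
  have ho := tgt_ordered a b h1 h12 h2
  obtain ⟨e1, e2, e3, e4, e5, e6⟩ := SS_tgt a b
  have hI := Complex.I_sq
  have hne : ∀ k j, j ≠ k → zz (tgt a b) k - zz (tgt a b) j ≠ 0 := fun k j hj =>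
    sub_ne_zero.mpr (ordered_ne _ ho _ _ (Ne.symm hj))
  have p1 := SS_pos _ ho 0 1 (by decide)
  have p2 := SS_pos _ ho 0 2 (by decide)
  have p3 := SS_pos _ ho 0 3 (by decide)
  have p4 := SS_pos _ ho 1 2 (by decide)
  rw [e1] at p1; rw [e3] at p2; rw [e5] at p3; rw [e6] at p4
  have hsa : (Real.sin a : ℂ) ≠ 0 := by exact_mod_cast (by linarith : Real.sin a > 0).ne'
  have hsb : (Real.sin b : ℂ) ≠ 0 := by exact_mod_cast (by linarith : Real.sin b > 0).ne'
  have hK : K ≠ 0 := by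
    refine mul_ne_zero (mul_ne_zero (by norm_num) ?_) ?_
    · exact_mod_cast (by linarith : Real.sin ((b-a)/2) > 0).ne'
    · exact_mod_cast (by linarith : Real.sin ((a+b)/2) > 0).ne'
  have z01 := zz_sub (tgt a b) 0 1
  have z02 := zz_sub (tgt a b) 0 2
  have z03 := zz_sub (tgt a b) 0 3
  have z12 := zz_sub (tgt a b) 1 2
  have z13 := zz_sub (tgt a b) 1 3
  have z23 := zz_sub (tgt a b) 2 3
  rw [e1] at z01; rw [e2] at z23; rw [e3] at z02; rw [e4] at z13; rw [e5] at z03; rw [e6] at z12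
  have t0 : tgt a b 0 = -b := rfl
  have t1 : tgt a b 1 = -a := rfl
  have t2 : tgt a b 2 = a := rfl
  have t3 : tgt a b 3 = b := rfl
  rw [t0, t1] at z01; rw [t0, t2] at z02; rw [t0, t3] at z03; rw [t1, t2] at z12; rw [t1, t3] at z13; rw [t2, t3] at z23
  have key : ∀ x y w z s σ : ℂ, x ≠ 0 → y ≠ 0 → w ≠ 0 → s ≠ 0 → x*y*w = σ * Complex.I * (K*s) * z → σ * σ = 1 →
      -σ * z * (x⁻¹ * y⁻¹ * w⁻¹) = Complex.I / (K * s) := by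
    intro x y w z s σ hx hy hw hs h hσ
    rw [← mul_inv, ← mul_inv, ← div_eq_mul_inv, div_eq_div_iff (mul_ne_zero (mul_ne_zero hx hy) hw) (mul_ne_zero hK hs), h]
    linear_combination (-σ * K * s * z) * hI
  have a03 : Complex.exp (Complex.I * ((-b + b : ℝ):ℂ) / 2) = 1 := by simp
  have a12 : Complex.exp (Complex.I * ((-a + a : ℝ):ℂ) / 2) = 1 := by simp
  rw [a03] at z03; rw [a12] at z12
  have c0 : Complex.exp (Complex.I * ((-b + -a : ℝ):ℂ) / 2) * Complex.exp (Complex.I * ((-b + a : ℝ):ℂ) / 2) = zz (tgt a b) 0 :=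
    exp_helper _ _ _ (by rw [t0]; push_cast; ring)
  have c1 : Complex.exp (Complex.I * ((-b + -a : ℝ):ℂ) / 2) * Complex.exp (Complex.I * ((-a + b : ℝ):ℂ) / 2) = zz (tgt a b) 1 :=
    exp_helper _ _ _ (by rw [t1]; push_cast; ring)
  have c2 : Complex.exp (Complex.I * ((-b + a : ℝ):ℂ) / 2) * Complex.exp (Complex.I * ((a + b : ℝ):ℂ) / 2) = zz (tgt a b) 2 :=
    exp_helper _ _ _ (by rw [t2]; push_cast; ring)
  have c3 : Complex.exp (Complex.I * ((-a + b : ℝ):ℂ) / 2) * Complex.exp (Complex.I * ((a + b : ℝ):ℂ) / 2) = zz (tgt a b) 3 :=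
    exp_helper _ _ _ (by rw [t3]; push_cast; ring)
  have hI3 := Complex.I_pow_three
  refine ⟨?_, ?_, ?_, ?_⟩
  · have := key _ _ _ (zz (tgt a b) 0) (Real.sin b) 1 (hne 0 1 (by decide)) (hne 0 2 (by decide)) (hne 0 3 (by decide)) hsb
      (by rw [← neg_sub, z01, ← neg_sub (zz (tgt a b) 2), z02, ← neg_sub (zz (tgt a b) 3), z03, ← c0]
          simp only [K]; push_cast; ring_nf; rw [hI3]; ring) (by norm_num)
    rw [Eb, Fin.prod_univ_four]
    simpa [sg] using this
  · have := key _ _ _ (zz (tgt a b) 1) (Real.sin a) (-1) (hne 1 0 (by decide)) (hne 1 2 (by decide)) (hne 1 3 (by decide)) hsa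
      (by rw [z01, ← neg_sub (zz (tgt a b) 2), z12, ← neg_sub (zz (tgt a b) 3), z13, ← c1]
          simp only [K]; push_cast; ring_nf; rw [hI3]; ring) (by norm_num)
    rw [Eb, Fin.prod_univ_four]
    simpa [sg] using this
  · have := key _ _ _ (zz (tgt a b) 2) (Real.sin a) 1 (hne 2 0 (by decide)) (hne 2 1 (by decide)) (hne 2 3 (by decide)) hsa
      (by rw [z02, z12, ← neg_sub (zz (tgt a b) 3), z23, ← c2]
          simp only [K]; push_cast; ring_nf; rw [hI3]; ring) (by norm_num)
    rw [Eb, Fin.prod_univ_four]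
    simpa [sg] using this
  · have := key _ _ _ (zz (tgt a b) 3) (Real.sin b) (-1) (hne 3 0 (by decide)) (hne 3 1 (by decide)) (hne 3 2 (by decide)) hsb
      (by rw [z03, z13, z23, ← c3]
          simp only [K]; push_cast; ring_nf; rw [hI3]; ring) (by norm_num)
    rw [Eb, Fin.prod_univ_four]
    simpa [sg, pow_succ] using this

def amp (a b : ℝ) (N : ℕ) : ℝ := Real.sqrt (Real.sin b / Real.sin a) * (2 * Real.cos ((N : ℝ) * a))
              + Real.sqrt (Real.sin a / Real.sin b) * (2 * Real.cos ((N : ℝ) * b))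

lemma amp_eq (a b : ℝ) (h1 : 0 < a) (h12 : a < b) (h2 : b < Real.pi) (N : ℕ) :
    -Complex.I * (cc * db (tgt a b)) * ∑ k, Eb (tgt a b) k * (zz (tgt a b) k ^ N)⁻¹ = cc * (amp a b N : ℝ) := by
  obtain ⟨q0, q1, q2, q3⟩ := Eb_tgt a b h1 h12 h2
  have hsa : 0 < Real.sin a := Real.sin_pos_of_pos_of_lt_pi h1 (h12.trans h2)
  have hsb : 0 < Real.sin b := Real.sin_pos_of_pos_of_lt_pi (h1.trans h12) h2
  have hA : 0 < Real.sin ((b-a)/2) := Real.sin_pos_of_pos_of_lt_pi (by linarith) (by linarith)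
  have hB : 0 < Real.sin ((a+b)/2) := Real.sin_pos_of_pos_of_lt_pi (by linarith) (by linarith)
  rw [Fin.sum_univ_four, q0, q1, q2, q3, db_tgt a b h1 h12 h2, pow_inv_zz, pow_inv_zz, pow_inv_zz, pow_inv_zz]
  have t0 : tgt a b 0 = -b := rfl
  have t1 : tgt a b 1 = -a := rfl
  have t2 : tgt a b 2 = a := rfl
  have t3 : tgt a b 3 = b := rfl
  rw [t0, t1, t2, t3]
  have r1 : √(Real.sin b / Real.sin a) = √(Real.sin a * Real.sin b) / Real.sin a := by
    rw [show Real.sin b / Real.sin a = (Real.sin a * Real.sin b) / (Real.sin a)^2 by field_simp,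
      Real.sqrt_div (by positivity), Real.sqrt_sq hsa.le]
  have r2 : √(Real.sin a / Real.sin b) = √(Real.sin a * Real.sin b) / Real.sin b := by
    rw [show Real.sin a / Real.sin b = (Real.sin a * Real.sin b) / (Real.sin b)^2 by field_simp,
      Real.sqrt_div (by positivity), Real.sqrt_sq hsb.le]
  have cs : ∀ x : ℝ, ((2 * Real.cos (N * x) : ℝ) : ℂ) = Complex.exp (-(((N:ℝ) * x : ℝ) : ℂ) * Complex.I) + Complex.exp (-(((N:ℝ) * (-x) : ℝ) : ℂ) * Complex.I) := by
    intro x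
    push_cast
    rw [Complex.two_cos]
    rw [add_comm]
    congr 2 <;> ring
  rw [amp, r1, r2, Complex.ofReal_add, Complex.ofReal_mul (√(Real.sin a * Real.sin b) / Real.sin a),
    Complex.ofReal_mul (√(Real.sin a * Real.sin b) / Real.sin b), cs, cs]
  have : (Real.sin a : ℂ) ≠ 0 := by exact_mod_cast hsa.ne'
  have : (Real.sin b : ℂ) ≠ 0 := by exact_mod_cast hsb.ne'
  have : (Real.sin ((b-a)/2) : ℂ) ≠ 0 := by exact_mod_cast hA.ne'
  have : (Real.sin ((a+b)/2) : ℂ) ≠ 0 := by exact_mod_cast hB.ne'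
  simp only [Complex.ofReal_mul, Complex.ofReal_div, Complex.ofReal_ofNat]
  generalize (Real.sin a : ℂ) = A at *
  generalize (Real.sin b : ℂ) = B at *
  generalize (Real.sin ((b-a)/2) : ℂ) = A' at *
  generalize (Real.sin ((a+b)/2) : ℂ) = B' at *
  field_simp
  rw [Complex.I_sq]
  ring

end Fermi
end

noncomputable section
namespace Fermi
open Matrix Filter Topology Set MeasureTheory

lemma piece (f : ℝ → ℝ) (g : ℝ → ℂ) (hg : Continuous g) (a b c : ℝ) (hab : a ≤ b)
    (h : ∀ t, a < t → t < b → f t = c) :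
    IntervalIntegrable (fun t => (f t : ℂ) * g t) volume a b ∧
      ∫ t in a..b, (f t : ℂ) * g t = c * ∫ t in a..b, g t := by
  have hae : ∀ᵐ x ∂volume, x ∈ Set.uIoc a b → (f x : ℂ) * g x = c * g x := by
    filter_upwards [(Set.countable_singleton b).ae_notMem volume] with x hx hxm
    rw [Set.uIoc_of_le hab] at hxm
    rw [h x hxm.1 (lt_of_le_of_ne hxm.2 hx)]
  have hi : IntervalIntegrable (fun t => (c:ℂ) * g t) volume a b := (hg.const_mul _).intervalIntegrable _ _
  refine ⟨?_, ?_⟩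
  · rw [intervalIntegrable_iff] at hi ⊢
    refine hi.congr_fun_ae ?_
    rw [Filter.EventuallyEq, ae_restrict_iff' measurableSet_uIoc]
    filter_upwards [hae] with x hx hxm using (hx hxm).symm
  · rw [intervalIntegral.integral_congr_ae hae, intervalIntegral.integral_const_mul]

lemma fourier_eq (a b : ℝ) (h1 : 0 < a) (h12 : a < b) (h2 : b < Real.pi)
    (f : ℝ → ℝ) (hper : ∀ t, f (t + 2 * Real.pi) = f t) (heven : ∀ t, f (-t) = f t)
    (hval1 : ∀ t, 0 ≤ t → t < a → f t = 1)
    (hval2 : ∀ t, a < t → t < b → f t = -1)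
    (hval3 : ∀ t, b < t → t ≤ Real.pi → f t = 1) (n : ℤ) : fourierCoef f n = cof (tgt a b) n := by
  have hpi := Real.pi_pos
  set g : ℝ → ℂ := fun t => Complex.exp (-Complex.I * (n : ℂ) * (t : ℂ)) with hgd
  have hg : Continuous g := by rw [hgd]; fun_prop
  have hrefl : ∀ t, f t = f (2*Real.pi - t) := fun t => by
    rw [← heven t, ← hper (-t)]; congr 1; ring
  obtain ⟨i1, e1⟩ := piece f g hg 0 a 1 h1.le (fun t ht ht' => hval1 t ht.le ht')
  obtain ⟨i2, e2⟩ := piece f g hg a b (-1) h12.le (fun t ht ht' => hval2 t ht ht')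
  obtain ⟨i3, e3⟩ := piece f g hg b (2*Real.pi - b) 1 (by linarith) (fun t ht ht' => by
    rcases le_total t Real.pi with h | h
    · exact hval3 t ht h
    · rw [hrefl]; exact hval3 _ (by linarith) (by linarith))
  obtain ⟨i4, e4⟩ := piece f g hg (2*Real.pi - b) (2*Real.pi - a) (-1) (by linarith) (fun t ht ht' => by
    rw [hrefl]; exact hval2 _ (by linarith) (by linarith))
  obtain ⟨i5, e5⟩ := piece f g hg (2*Real.pi - a) (2*Real.pi) 1 (by linarith) (fun t ht ht' => by
    rw [hrefl]; exact hval1 _ (by linarith) (by linarith))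
  have etot : ∫ t in (0:ℝ)..(2*Real.pi), (f t : ℂ) * g t =
      (∫ t in (0:ℝ)..a, g t) - (∫ t in a..b, g t) + (∫ t in b..(2*Real.pi - b), g t)
      - (∫ t in (2*Real.pi - b)..(2*Real.pi - a), g t) + ∫ t in (2*Real.pi - a)..(2*Real.pi), g t := by
    rw [← intervalIntegral.integral_add_adjacent_intervals (i1.trans (i2.trans (i3.trans i4))) i5,
      ← intervalIntegral.integral_add_adjacent_intervals (i1.trans (i2.trans i3)) i4,
      ← intervalIntegral.integral_add_adjacent_intervals (i1.trans i2) i3,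
      ← intervalIntegral.integral_add_adjacent_intervals i1 i2, e1, e2, e3, e4, e5]
    push_cast; ring
  have hp := pi_ne
  rw [fourierCoef]
  change _ * ∫ t in (0:ℝ)..(2*Real.pi), (f t : ℂ) * g t = _
  rw [etot]
  by_cases hn : n = 0
  · subst hn
    have : g = fun _ => 1 := by ext t; simp [hgd]
    rw [this, cof, if_pos rfl]
    simp only [intervalIntegral.integral_const, Fin.sum_univ_four]
    simp [sg, tgt, pow_succ]
    field_simp
    ring
  · have hn' : (n:ℂ) ≠ 0 := by exact_mod_cast hn
    have hc : -Complex.I * (n:ℂ) ≠ 0 := mul_ne_zero (neg_ne_zero.mpr Complex.I_ne_zero) hn'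
    rw [cof, if_neg hn]
    simp only [hgd, integral_exp_mul_complex hc]
    have hper2 : ∀ x : ℝ, Complex.exp (-Complex.I * n * ((2*Real.pi - x : ℝ) : ℂ)) = Complex.exp (-Complex.I * n * ((-x : ℝ):ℂ)) := by
      intro x
      have := Complex.exp_int_mul_two_pi_mul_I (-n)
      rw [show -Complex.I * n * ((2*Real.pi - x : ℝ) : ℂ) = -Complex.I * n * ((-x : ℝ):ℂ) + ((-n : ℤ):ℂ) * (2 * Real.pi * Complex.I) by push_cast; ring,
        Complex.exp_add, this, mul_one]
    have h0 := hper2 0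
    simp only [sub_zero] at h0
    rw [hper2 a, hper2 b, h0]
    have hz : ∀ k, zz (tgt a b) k ^ (-n) = Complex.exp (-Complex.I * n * ((tgt a b k : ℝ):ℂ)) := by
      intro k
      rw [zz, ← Complex.exp_int_mul]; congr 1; push_cast; ring
    rw [Fin.sum_univ_four, hz, hz, hz, hz]
    have t0 : tgt a b 0 = -b := rfl
    have t1 : tgt a b 1 = -a := rfl
    have t2 : tgt a b 2 = a := rfl
    have t3 : tgt a b 3 = b := rfl
    have s0 : sg 0 = 1 := by simp [sg]
    have s1 : sg 1 = -1 := by simp [sg]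
    have s2 : sg 2 = 1 := by simp [sg]
    have s3 : sg 3 = -1 := by simp [sg, pow_succ]
    rw [t0, t1, t2, t3, s0, s1, s2, s3]
    have hI := Complex.I_ne_zero
    simp only [neg_zero]
    generalize Complex.exp (-Complex.I * n * ((a:ℝ):ℂ)) = x1
    generalize Complex.exp (-Complex.I * n * ((b:ℝ):ℂ)) = x2
    generalize Complex.exp (-Complex.I * n * ((-a:ℝ):ℂ)) = x3
    generalize Complex.exp (-Complex.I * n * ((-b:ℝ):ℂ)) = x4
    generalize Complex.exp (-Complex.I * n * ((0:ℝ):ℂ)) = x5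
    field_simp
    rw [Complex.I_sq]
    ring

lemma main_limit (a b : ℝ) (h1 : 0 < a) (h12 : a < b) (h2 : b < Real.pi) :
    Tendsto (fun N : ℕ => ((N:ℂ)+2) * ((-1)^N * Matrix.det (Matrix.of fun j k : Fin N => cof (tgt a b) ((j : ℤ) - (k : ℤ) - 1)))
      - cc * (amp a b N : ℝ)) atTop (𝓝 0) := by
  set τ := tgt a b with hτ
  have ho : ordered τ := tgt_ordered a b h1 h12 h2
  obtain ⟨hl, hd⟩ := tgt_limit τ ho
  have hE : ∀ k, Tendsto (fun N => EE N τ k) atTop (𝓝 (Eb τ k)) := fun k => by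
    have := (continuous_fst.tendsto _).comp hl
    exact tendsto_pi_nhds.mp this k
  have hD : Tendsto (fun N => dd N τ) atTop (𝓝 (cc * db τ)) :=
    (((continuous_fst.comp (continuous_snd.comp (continuous_snd.comp (continuous_snd.comp continuous_snd)))).tendsto _).comp hl : )
  have ht : ∀ k, Tendsto (fun N => (-Complex.I * dd N τ * EE N τ k - -Complex.I * (cc * db τ) * Eb τ k) * (zz τ k ^ N)⁻¹) atTop (𝓝 0) := by
    intro k
    have h := ((hD.const_mul (-Complex.I)).mul (hE k)).sub_const (-Complex.I * (cc * db τ) * Eb τ k)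
    rw [sub_self] at h
    rw [tendsto_zero_iff_norm_tendsto_zero] at h ⊢
    refine h.congr fun N => ?_
    rw [norm_mul, norm_inv, norm_pow, norm_zz]; simp
  have hs := tendsto_finsetSum Finset.univ (fun k _ => ht k)
  simp only [Finset.sum_const_zero] at hs
  refine hs.congr' ?_
  filter_upwards [hd] with N hN
  rw [corr_eq N τ (tgt_sum a b) hN, ← amp_eq a b h1 h12 h2 N, Finset.mul_sum, Finset.mul_sum, ← Finset.sum_sub_distrib]
  refine Finset.sum_congr rfl fun k _ => ?_
  ring

lemma amp_bound (a b : ℝ) : ∃ C, ∀ N, ‖cc * ((amp a b N : ℝ) : ℂ)‖ ≤ C := by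
  refine ⟨‖cc‖ * (√(Real.sin b / Real.sin a) * 2 + √(Real.sin a / Real.sin b) * 2), fun N => ?_⟩
  rw [norm_mul, Complex.norm_real]
  refine mul_le_mul_of_nonneg_left ?_ (norm_nonneg _)
  rw [amp]
  have hc : ∀ x : ℝ, ‖2 * Real.cos x‖ ≤ 2 := fun x => by
    rw [norm_mul, Real.norm_eq_abs, Real.norm_eq_abs, abs_of_pos two_pos]
    linarith [Real.abs_cos_le_one x]
  refine (norm_add_le _ _).trans (add_le_add ?_ ?_)
  all_goals
    rw [norm_mul, Real.norm_eq_abs (√_), abs_of_nonneg (Real.sqrt_nonneg _)]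
    exact mul_le_mul_of_nonneg_left (hc _) (Real.sqrt_nonneg _)

end Fermi
end

/-- Let `0 < θ_1 < θ_2 < π` and let `f` be the even, 2π-periodic function equal to `+1`
on `[0, θ_1)`, `−1` on `(θ_1, θ_2)`, and `+1` on `(θ_2, π]`.  Then, as `N → ∞`,
`det(f_{j−k−1})_{j,k=0}^{N−1}
  = (−1)^N N^{−1} 2^{1/3} e^{12ζ′(−1)}
    (√(sinθ_2/sinθ_1)·2cos(Nθ_1) + √(sinθ_1/sinθ_2)·2cos(Nθ_2)) + o(N^{−1})`. -/
theorem sigmaX_correlator_two_fermi_points (θ1 θ2 : ℝ)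
    (h1 : 0 < θ1) (h12 : θ1 < θ2) (h2 : θ2 < Real.pi)
    (f : ℝ → ℝ) (hper : ∀ t, f (t + 2 * Real.pi) = f t) (heven : ∀ t, f (-t) = f t)
    (hval1 : ∀ t, 0 ≤ t → t < θ1 → f t = 1)
    (hval2 : ∀ t, θ1 < t → t < θ2 → f t = -1)
    (hval3 : ∀ t, θ2 < t → t ≤ Real.pi → f t = 1) :
    (fun N : ℕ =>
        Matrix.det (Matrix.of fun j k : Fin N => fourierCoef f ((j : ℤ) - (k : ℤ) - 1))
      - (-1 : ℂ) ^ N * (((N : ℝ) ^ (-(1 : ℝ)) : ℝ) : ℂ)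
          * ((2 : ℂ) ^ ((1 : ℂ) / 3) * Complex.exp (12 * deriv riemannZeta (-1)))
          * ((Real.sqrt (Real.sin θ2 / Real.sin θ1) * (2 * Real.cos ((N : ℝ) * θ1))
              + Real.sqrt (Real.sin θ1 / Real.sin θ2) * (2 * Real.cos ((N : ℝ) * θ2)) : ℝ) : ℂ))
      =o[Filter.atTop] (fun N : ℕ => ((N : ℝ) ^ (-(1 : ℝ)) : ℝ)) := by
  open Filter Topology Fermi in
  simp only [fourier_eq θ1 θ2 h1 h12 h2 f hper heven hval1 hval2 hval3]
  have hm := main_limit θ1 θ2 h1 h12 h2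
  obtain ⟨C, hC⟩ := amp_bound θ1 θ2
  set X : ℕ → ℂ := fun N => ((N:ℂ)+2) * ((-1)^N * Matrix.det (Matrix.of fun j k : Fin N => cof (tgt θ1 θ2) ((j : ℤ) - (k : ℤ) - 1))) with hX
  -- N/(N+2) * (X - amp) - 2/(N+2) * amp -> 0
  have hr : Tendsto (fun N : ℕ => (2:ℝ)/((N:ℝ)+2)) atTop (𝓝 0) :=
    (tendsto_atTop_add_const_right _ _ tendsto_natCast_atTop_atTop).const_div_atTop 2
  rw [Asymptotics.isLittleO_iff]
  intro ε hε
  have hm1 := (tendsto_zero_iff_norm_tendsto_zero.mp hm).eventually_lt_const (show 0 < ε/2 by linarith)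
  have hr1 := (hr.mul_const C)
  rw [zero_mul] at hr1
  have hr2 := hr1.eventually_lt_const (show 0 < ε/2 by linarith)
  filter_upwards [hm1, hr2, eventually_gt_atTop 0] with N h3 h4 hN
  have hN : (0:ℝ) < N := by exact_mod_cast hN
  have hNc : (N:ℂ) ≠ 0 := by exact_mod_cast hN.ne'
  have hN2 : (N:ℂ) + 2 ≠ 0 := by
    have : (N:ℝ) + 2 ≠ 0 := by positivity
    exact_mod_cast this
  have hp : ((-1:ℂ)^N) * (-1)^N = 1 := by rw [← mul_pow]; simp
  rw [Real.rpow_neg_one, norm_inv, Real.norm_eq_abs, abs_of_pos hN]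
  change ‖_ - (-1:ℂ)^N * ((((N:ℝ)⁻¹ : ℝ)) : ℂ) * cc * ((amp θ1 θ2 N : ℝ) : ℂ)‖ ≤ _
  have hC' := hC N
  generalize hdet : Matrix.det (Matrix.of fun j k : Fin N => cof (tgt θ1 θ2) ((j : ℤ) - (k : ℤ) - 1)) = D at *
  have hXN : X N = ((N:ℂ)+2) * ((-1)^N * D) := by rw [hX]; simp only [hdet]
  have e : D - (-1:ℂ)^N * ((((N:ℝ)⁻¹ : ℝ)) : ℂ) * cc * ((amp θ1 θ2 N : ℝ) : ℂ) =
      (-1)^N * ((N:ℂ)⁻¹ * (((N:ℂ)/((N:ℂ)+2)) * (X N - cc * ((amp θ1 θ2 N : ℝ) : ℂ)) - (2/((N:ℂ)+2)) * (cc * ((amp θ1 θ2 N : ℝ) : ℂ)))) := by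
    rw [hXN]
    push_cast
    field_simp
    linear_combination (-((N:ℂ) + 2) * N * D) * hp
  rw [e, norm_mul, norm_mul, norm_inv]
  have n1 : ‖(-1:ℂ)^N‖ = 1 := by simp
  have n2 : ‖(N:ℂ)‖ = N := by simp
  have n3 : ‖(N:ℂ) + 2‖ = N + 2 := by
    have : (N:ℂ) + 2 = ((N+2 : ℕ) : ℂ) := by push_cast; rfl
    rw [this, Complex.norm_natCast]; push_cast; rfl
  rw [n1, n2, one_mul, mul_comm ε]
  refine mul_le_mul_of_nonneg_left ?_ (by positivity)
  refine (norm_sub_le _ _).trans ?_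
  rw [norm_mul, norm_mul, norm_div, norm_div, n2, n3]
  have k1 : (N:ℝ)/(N+2) ≤ 1 := by rw [div_le_one (by positivity)]; linarith
  have k2 : (N:ℝ)/(N+2) * ‖X N - cc * ((amp θ1 θ2 N : ℝ) : ℂ)‖ ≤ ε/2 := by
    rw [← hXN] at h3
    have := mul_le_mul k1 h3.le (norm_nonneg _) zero_le_one
    linarith
  have k3 : ‖(2:ℂ)‖/((N:ℝ)+2) * ‖cc * ((amp θ1 θ2 N : ℝ) : ℂ)‖ ≤ ε/2 := by
    rw [Complex.norm_ofNat]
    refine (mul_le_mul_of_nonneg_left hC' (by positivity)).trans h4.le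
  linarith

end
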